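/- arXiv:2303.09157 — 2 statements merged into one kernel-verified Lean document; each statement's English description precedes it below -/
import Mathlib

section
/- Let v ∈ ℝ² be a unit vector, let a, a′ satisfy 0 < a′ < a ≤ 1, and let B(x,r) ⊂ ℝ² be an open ball. Suppose u ∈ BV(B(x,r)) ∩ L^∞(B(x,r)), and set A := {y ∈ B(x,r) : dDu/d|Du|(y) ∈ C(v,a)}. Then there exists w ∈ BV(B(x,r)) ∩ L^∞(B(x,r)) such that the restricted measure |Du|⌊A is absolutely continuous with respect to |Dw| on B(x,r), and dDw/d|Dw|(y) ∈ C(v,a′) for |Dw|-a.e. y ∈ B(x,r). -/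
/-!
Fix `k > 0` with `(k a')² = 1 - a'²`. The curves `t ↦ t perp v + k g(t) v` with `g` a `1`-Lipschitz
function are called admissible; their normals lie in the cone `C(v,a')`, and the indicator function
of the region above such a curve is a `BV` function whose derivative has direction in `C(v,a')`. The
cone being convex, the same holds for every superposition `w` of such indicator functions with
respect to a finite measure `Q` on the compact space `Curve R` of admissible curves, and `|Dw|` is
mutually absolutely continuous with the superposition `curveMeasure v k Q` of the curves themselves
(`superposition_isBV`). So it suffices to find `Q` with `|Du|⌊A ≪ curveMeasure v k Q`
(`IsBVScalarOn.absolutelyContinuous_curveMeasure`).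

The measure `Q` comes from duality. Let `h` be a continuous density, `0 ≤ h ≤ 1`, of which every
admissible curve picks up at most `ε`. The largest amount of `h` picked up along a curve ending at
`y` is a function of `y` with values in `[0, ε]`, monotone in the two extreme admissible directions
`perp v ± k v`, and growing at rate at least `h` along `perp v`; after regularization it is a smooth
function `f` (`exists_plane_potential`). As `Du` is curl free, testing it against the rotated
gradient of `φ f`, for a cut-off `φ`, gives zero. On `A` the integrand is bounded below by a
multiple of `φ² h`, because `a' < a`; elsewhere it is at least a negative multiple of `φ`, and the
terms containing `∇φ` are `O(ε)`. Hence `∫_A φ² h d|Du|` is bounded by a multiple of `ε` plus a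
multiple of `∫_{Aᶜ} φ d|Du|` (`IsBVScalarOn.cone_inequality`). By the Riesz extension and
representation theorems (`exists_dual_measure`) there is a finite measure `Q` on curves such that
`∫_A φ² h d|Du|` is at most a multiple of `∫ h d(curveMeasure v k Q)` plus the same error, now for
all `h`. Letting `φ` concentrate on compact subsets of `A` makes the error arbitrarily small, and a
countable combination of the resulting measures has the required property.
-/

open MeasureTheory Filter
open scoped ENNReal RealInnerProductSpace

noncomputable section

/-- The closed cone `C(v,a) = {x ∈ ℝ² : x·v ≥ a|x|}`. -/
def cone (v : EuclideanSpace ℝ (Fin 2)) (a : ℝ) : Set (EuclideanSpace ℝ (Fin 2)) :=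
  {x | a * ‖x‖ ≤ ⟪x, v⟫}

/-- `u ∈ BV(Ω)` for an open set `Ω ⊂ ℝ²`, presented through the polar decomposition
`Du = σ |Du|`: `ν` plays the role of the total variation measure `|Du|` (a finite positive
measure concentrated on `Ω`) and `σ = dDu/d|Du|` is the vector-valued Radon–Nikodym density
of unit length `ν`-a.e.; the defining requirement is the integration-by-parts formula
`∫_Ω u ∂φ/∂y_l dL² = −∫_Ω φ σ_l dν` for all `φ ∈ C_c¹(Ω)`. -/
structure IsBVScalarOn (Ω : Set (EuclideanSpace ℝ (Fin 2)))
    (u : EuclideanSpace ℝ (Fin 2) → ℝ)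
    (ν : Measure (EuclideanSpace ℝ (Fin 2)))
    (σ : EuclideanSpace ℝ (Fin 2) → EuclideanSpace ℝ (Fin 2)) : Prop where
  integrable : IntegrableOn u Ω volume
  finite : ν Set.univ < ⊤
  concentrated : ν Ωᶜ = 0
  meas : Measurable σ
  unit : ∀ᵐ x ∂ν, ‖σ x‖ = 1
  parts : ∀ φ : EuclideanSpace ℝ (Fin 2) → ℝ, ContDiff ℝ 1 φ → HasCompactSupport φ →
    tsupport φ ⊆ Ω → ∀ l : Fin 2,
      ∫ x in Ω, u x * fderiv ℝ φ x (EuclideanSpace.single l (1:ℝ)) ∂volume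
        = - ∫ x, φ x * σ x l ∂ν

/-- The precise representative `u*`. -/
def preciseRep (u : EuclideanSpace ℝ (Fin 2) → ℝ) (x : EuclideanSpace ℝ (Fin 2)) : ℝ :=
  sInf {t : ℝ | Tendsto (fun r : ℝ =>
      volume (Metric.ball x r ∩ {y | t < u y}) / volume (Metric.ball x r))
    (nhdsWithin 0 (Set.Ioi 0)) (nhds 0)}

/-! ### Potentials in null coordinates -/

/-- The largest function below `F` with slopes at most `1` in both coordinate directions keeps the
growth of `F` along diagonals: since `h ≤ 1`, a diagonal step of length `δ` costs at most `δ` in each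
coordinate, which pays for the part of the integral of `h` that `F` does not see. -/
theorem exists_lipschitz_regularization (F h : ℝ × ℝ → ℝ) (ε : ℝ) (hF : Monotone F)
    (hF0 : ∀ y, 0 ≤ F y) (hFε : ∀ y, F y ≤ ε) (hc : Continuous h) (h1 : ∀ y, h y ≤ 1)
    (hgain : ∀ y : ℝ × ℝ, ∀ δ : ℝ, 0 ≤ δ →
      F y + ∫ τ in (0:ℝ)..δ, h (y + (τ, τ)) ≤ F (y + (δ, δ))) :
    ∃ f : ℝ × ℝ → ℝ, Monotone f ∧ (∀ y, 0 ≤ f y) ∧ (∀ y, f y ≤ ε) ∧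
      (∀ y : ℝ × ℝ, ∀ δ : ℝ, 0 ≤ δ → f (y + (δ, 0)) ≤ f y + δ) ∧
      (∀ y : ℝ × ℝ, ∀ δ : ℝ, 0 ≤ δ → f (y + (0, δ)) ≤ f y + δ) ∧
      (∀ y : ℝ × ℝ, ∀ δ : ℝ, 0 ≤ δ →
        f y + ∫ τ in (0:ℝ)..δ, h (y + (τ, τ)) ≤ f (y + (δ, δ))) := by
  -- the infimal convolution of `F` with the `ℓ¹` distance, over the points below `y`
  let c : ℝ × ℝ → ℝ × ℝ → ℝ := fun y z => F z + ((y.1 - z.1) + (y.2 - z.2))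
  let f : ℝ × ℝ → ℝ := fun y => ⨅ z : Set.Iic y, c y z
  have hbdd : ∀ y, BddBelow (Set.range fun z : Set.Iic y => c y z) := by
    intro y
    refine ⟨0, ?_⟩
    rintro _ ⟨⟨z, hz⟩, rfl⟩
    have := hF0 z
    have h2 : z.1 ≤ y.1 := hz.1
    have h3 : z.2 ≤ y.2 := hz.2
    simp only [c]
    linarith
  have hle : ∀ y z, z ≤ y → f y ≤ c y z := fun y z hz => ciInf_le (hbdd y) (⟨z, hz⟩ : Set.Iic y)
  have : ∀ y : ℝ × ℝ, Nonempty (Set.Iic y) := fun y => ⟨⟨y, le_refl y⟩⟩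
  have hge : ∀ y b, (∀ z, z ≤ y → b ≤ c y z) → b ≤ f y := fun y b hb =>
    le_ciInf fun z => hb z.1 z.2
  have hmono : Monotone f := by
    intro y y' hy
    refine hge y' _ fun z hz => (hle y (z ⊓ y) inf_le_right).trans ?_
    have h0 : F (z ⊓ y) ≤ F z := hF inf_le_left
    have := hz.1; have := hz.2; have := hy.1; have := hy.2
    simp only [c, Prod.fst_inf, Prod.snd_inf]
    have e1 : y.1 - z.1 ⊓ y.1 ≤ y'.1 - z.1 := by
      rcases le_total z.1 y.1 with h | h <;> simp [h] <;> linarith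
    have e2 : y.2 - z.2 ⊓ y.2 ≤ y'.2 - z.2 := by
      rcases le_total z.2 y.2 with h | h <;> simp [h] <;> linarith
    linarith
  refine ⟨f, hmono, ?_, ?_, ?_, ?_, ?_⟩
  · intro y
    refine hge y 0 fun z hz => ?_
    have := hF0 z
    have h2 : z.1 ≤ y.1 := hz.1
    have h3 : z.2 ≤ y.2 := hz.2
    simp only [c]
    linarith
  · intro y
    refine (hle y y le_rfl).trans ?_
    simpa [c] using hFε y
  · intro y δ hδ
    rw [← sub_le_iff_le_add]
    refine hge y _ fun z hz => ?_
    rw [sub_le_iff_le_add]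
    refine (hle _ z (hz.trans ?_)).trans ?_
    · constructor <;> simp [hδ]
    · simp only [c, Prod.fst_add, Prod.snd_add]; linarith
  · intro y δ hδ
    rw [← sub_le_iff_le_add]
    refine hge y _ fun z hz => ?_
    rw [sub_le_iff_le_add]
    refine (hle _ z (hz.trans ?_)).trans ?_
    · constructor <;> simp [hδ]
    · simp only [c, Prod.fst_add, Prod.snd_add]; linarith
  · intro y δ hδ
    have hintg : ∀ p q : ℝ, IntervalIntegrable (fun τ => h (y + (τ, τ))) volume p q := fun p q =>
      Continuous.intervalIntegrable (by fun_prop) _ _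
    have hup : ∀ p q : ℝ, p ≤ q → ∫ τ in p..q, h (y + (τ, τ)) ≤ q - p := by
      intro p q hpq
      have := intervalIntegral.integral_mono_on hpq (hintg p q)
        (intervalIntegrable_const (c := (1:ℝ))) (fun τ _ => h1 _)
      simpa using this
    refine hge _ _ fun z hz => ?_
    have hz1 : z.1 ≤ y.1 + δ := hz.1
    have hz2 : z.2 ≤ y.2 + δ := hz.2
    by_cases hyz : y ≤ z
    · -- the last point of the segment lying below `z`
      obtain ⟨θ, hθ0, hθ1, hθ2, hθ3⟩ : ∃ θ : ℝ, 0 ≤ θ ∧ y.1 + θ ≤ z.1 ∧ y.2 + θ ≤ z.2 ∧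
          (y.1 + θ = z.1 ∨ y.2 + θ = z.2) := by
        have a1 : y.1 ≤ z.1 := hyz.1
        have a2 : y.2 ≤ z.2 := hyz.2
        rcases le_total (z.1 - y.1) (z.2 - y.2) with h | h
        · exact ⟨z.1 - y.1, by linarith, by linarith, by linarith, Or.inl (by ring)⟩
        · exact ⟨z.2 - y.2, by linarith, by linarith, by linarith, Or.inr (by ring)⟩
      have b1 : F y + ∫ τ in (0:ℝ)..θ, h (y + (τ, τ)) ≤ F z :=
        (hgain y θ hθ0).trans (hF ⟨hθ1, hθ2⟩)
      have hθδ : θ ≤ δ := by linarith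
      have b2 := hup θ δ hθδ
      have b3 := intervalIntegral.integral_add_adjacent_intervals (hintg 0 θ) (hintg θ δ)
      have b4 : f y ≤ F y := by simpa [c] using hle y y le_rfl
      simp only [c, Prod.fst_add, Prod.snd_add]
      rcases hθ3 with h | h <;> linarith
    · have b1 : F (z ⊓ y) ≤ F z := hF inf_le_left
      have b2 := hle y (z ⊓ y) inf_le_right
      have b3 := hup 0 δ hδ
      simp only [c, Prod.fst_inf, Prod.snd_inf] at b2
      simp only [c, Prod.fst_add, Prod.snd_add]
      have hlt : z.1 < y.1 ∨ z.2 < y.2 := by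
        by_contra hcon
        push Not at hcon
        exact hyz ⟨hcon.1, hcon.2⟩
      rcases le_total z.1 y.1 with h | h <;> rcases le_total z.2 y.2 with h' | h' <;>
        simp only [h, h', inf_of_le_left, inf_of_le_right] at b2 <;>
        rcases hlt with hl | hl <;> linarith

/-- Following `g` up to time `t` and a line of slope `l` afterwards gives a `1`-Lipschitz function. -/
theorem lipschitz_concat {g : ℝ → ℝ} (hg : LipschitzWith 1 g) (t l : ℝ) (hl : |l| ≤ 1) :
    LipschitzWith 1 (fun τ => g (min τ t) + l * max (τ - t) 0) := by
  refine LipschitzWith.of_dist_le_mul fun τ τ' => ?_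
  have key : ∀ τ τ' : ℝ, τ ≤ τ' →
      |g (min τ t) + l * max (τ - t) 0 - (g (min τ' t) + l * max (τ' - t) 0)| ≤ |τ - τ'| := by
    intro τ τ' hτ
    have h1 := hg.dist_le_mul (min τ t) (min τ' t)
    simp only [Real.dist_eq, NNReal.coe_one, one_mul] at h1
    have h2 : |l * (max (τ - t) 0 - max (τ' - t) 0)| ≤ |max (τ - t) 0 - max (τ' - t) 0| := by
      rw [abs_mul]; exact mul_le_of_le_one_left (abs_nonneg _) hl
    have h3 : |min τ t - min τ' t| + |max (τ - t) 0 - max (τ' - t) 0| ≤ |τ - τ'| := by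
      rw [abs_of_nonpos (a := τ - τ') (by linarith),
        abs_of_nonpos (a := min τ t - min τ' t) (by linarith [min_le_min_right t hτ]),
        abs_of_nonpos (by linarith [max_le_max_right 0 (sub_le_sub_right hτ t)])]
      rcases le_total τ t with h | h <;> rcases le_total τ' t with h' | h' <;>
        simp [h, h']
    calc _ = |(g (min τ t) - g (min τ' t)) + l * (max (τ - t) 0 - max (τ' - t) 0)| := by ring_nf
      _ ≤ _ := (abs_add_le _ _).trans (by linarith)
  simp only [Real.dist_eq, NNReal.coe_one, one_mul]
  rcases le_total τ τ' with h | h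
  · exact key _ _ h
  · rw [abs_sub_comm, abs_sub_comm τ]; exact key _ _ h

/-- A potential for a density `h` in null coordinates, where the graph of a `1`-Lipschitz function `g`
is the curve `τ ↦ ((τ + g τ) / 2, (τ - g τ) / 2)`. It is the regularization of the value function
that assigns to `y` the largest amount of `h` picked up along such a curve ending at `y`. -/
theorem exists_lipschitz_potential (h : ℝ × ℝ → ℝ) (ε : ℝ) (hc : Continuous h)
    (hsupp : HasCompactSupport h) (h0 : ∀ y, 0 ≤ h y) (h1 : ∀ y, h y ≤ 1)
    (hε : ∀ g : ℝ → ℝ, LipschitzWith 1 g → ∫ τ, h ((τ + g τ) / 2, (τ - g τ) / 2) ≤ ε) :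
    ∃ f : ℝ × ℝ → ℝ, Monotone f ∧ (∀ y, 0 ≤ f y) ∧ (∀ y, f y ≤ ε) ∧
      (∀ y : ℝ × ℝ, ∀ δ : ℝ, 0 ≤ δ → f (y + (δ, 0)) ≤ f y + δ) ∧
      (∀ y : ℝ × ℝ, ∀ δ : ℝ, 0 ≤ δ → f (y + (0, δ)) ≤ f y + δ) ∧
      (∀ y : ℝ × ℝ, ∀ δ : ℝ, 0 ≤ δ →
        f y + ∫ τ in (0:ℝ)..δ, h (y + (τ, τ)) ≤ f (y + (δ, δ))) := by
  let H : (ℝ → ℝ) → ℝ → ℝ := fun g τ => h ((τ + g τ) / 2, (τ - g τ) / 2)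
  have hHc : ∀ g, LipschitzWith 1 g → Continuous (H g) := by
    intro g hg
    have := hg.continuous
    simp only [H]
    fun_prop
  have hHi : ∀ g, LipschitzWith 1 g → Integrable (H g) := by
    intro g hg
    refine (hHc g hg).integrable_of_hasCompactSupport ?_
    obtain ⟨R, hR⟩ := hsupp.isBounded.subset_closedBall 0
    refine HasCompactSupport.of_support_subset_isCompact
      (isCompact_closedBall (0:ℝ) (2 * R)) fun τ hτ => ?_
    have := hR (subset_tsupport h hτ)
    simp only [mem_closedBall_zero_iff, Prod.norm_def, sup_le_iff, Real.norm_eq_abs] at this ⊢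
    have e : τ = (τ + g τ) / 2 + (τ - g τ) / 2 := by ring
    rw [e]
    exact (abs_add_le _ _).trans (by linarith)
  let I : ℝ × ℝ → Type := fun y => {g : ℝ → ℝ // LipschitzWith 1 g ∧ g (y.1 + y.2) = y.1 - y.2}
  -- the amount of `h` picked up along the curve `g` before it reaches `y`
  let V : (y : ℝ × ℝ) → I y → ℝ := fun y g => ∫ τ in Set.Iic (y.1 + y.2), H g.1 τ
  have hbdd : ∀ y (g : I y), V y g ≤ ε := fun y g =>
    (setIntegral_le_integral (hHi _ g.2.1) (Eventually.of_forall fun _ => h0 _)).trans (hε _ g.2.1)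
  have hne : ∀ y, Nonempty (I y) := fun y =>
    ⟨⟨fun _ => y.1 - y.2, LipschitzWith.const' _, rfl⟩⟩
  let F : ℝ × ℝ → ℝ := fun y => ⨆ g : I y, V y g
  have hVF : ∀ y (g : I y), V y g ≤ F y := fun y g =>
    le_ciSup (f := V y) ⟨ε, by rintro _ ⟨g, rfl⟩; exact hbdd y g⟩ g
  -- continuing a curve beyond its end point by a segment of slope `l`
  have hmove : ∀ (y y' : ℝ × ℝ) (l : ℝ), |l| ≤ 1 → y.1 + y.2 ≤ y'.1 + y'.2 →
      y'.1 - y'.2 = (y.1 - y.2) + l * ((y'.1 + y'.2) - (y.1 + y.2)) → 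
      F y + ∫ τ in (y.1 + y.2)..(y'.1 + y'.2),
        H (fun τ => (y.1 - y.2) + l * (τ - (y.1 + y.2))) τ ≤ F y' := by
    intro y y' l hl hyy' hs
    rw [← le_sub_iff_add_le]
    refine ciSup_le fun g => ?_
    rw [le_sub_iff_add_le]
    set t := y.1 + y.2 with ht
    let g' : ℝ → ℝ := fun τ => g.1 (min τ t) + l * max (τ - t) 0
    have hg' : LipschitzWith 1 g' := lipschitz_concat g.2.1 t l hl
    have hg'2 : g' (y'.1 + y'.2) = y'.1 - y'.2 := by
      simp only [g']
      rw [min_eq_right hyy', max_eq_left (by linarith), g.2.2, hs]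
    refine le_trans (le_of_eq ?_) (hVF y' ⟨g', hg', hg'2⟩)
    simp only [V]
    have hdis : Disjoint (Set.Iic t) (Set.Ioc t (y'.1 + y'.2)) :=
      Set.disjoint_left.2 fun τ h1 h2 => absurd h2.1 (not_lt.2 h1)
    rw [← Set.Iic_union_Ioc_eq_Iic hyy', setIntegral_union hdis measurableSet_Ioc
      (hHi _ hg').integrableOn (hHi _ hg').integrableOn, intervalIntegral.integral_of_le hyy']
    congr 1
    · refine setIntegral_congr_fun measurableSet_Iic fun τ hτ => ?_
      have hτ' : τ ≤ t := hτ
      simp [H, g', hτ']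
    · refine setIntegral_congr_fun measurableSet_Ioc fun τ hτ => ?_
      have hτ' : t ≤ τ := hτ.1.le
      have e : g' τ = (y.1 - y.2) + l * (τ - t) := by
        simp only [g']
        rw [min_eq_right hτ', max_eq_left (by linarith), g.2.2]
      simp only [H]
      rw [e]
  have hnn : ∀ (g : ℝ → ℝ) (p q : ℝ), p ≤ q → 0 ≤ ∫ τ in p..q, H g τ := fun g p q hpq =>
    intervalIntegral.integral_nonneg hpq fun _ _ => h0 _
  have hFmono : Monotone F := by
    intro y y' hy
    have m1 : y.1 ≤ y'.1 := hy.1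
    have m2 : y.2 ≤ y'.2 := hy.2
    have s1 := hmove y (y'.1, y.2) 1 (by simp) (by simpa using m1) (by simp)
    have s2 := hmove (y'.1, y.2) y' (-1) (by simp) (by simpa using m2) (by simp)
    have n1 := hnn (fun τ => (y.1 - y.2) + 1 * (τ - (y.1 + y.2))) (y.1 + y.2) (y'.1 + y.2)
      (by linarith)
    have n2 := hnn (fun τ => (y'.1 - y.2) + -1 * (τ - (y'.1 + y.2))) (y'.1 + y.2) (y'.1 + y'.2)
      (by linarith)
    simp only at s1 s2
    linarith
  refine exists_lipschitz_regularization F h ε hFmono (fun y => ?_) (fun y => ?_) hc h1 ?_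
  · obtain ⟨g⟩ := hne y
    exact le_trans (integral_nonneg fun _ => h0 _) (hVF y g)
  · exact ciSup_le (hbdd y)
  · intro y δ hδ
    have s := hmove y (y + (δ, δ)) 0 (by simp) (by simp; linarith) (by simp)
    refine le_trans ?_ s
    have e : ∫ τ in (y.1 + y.2)..((y + (δ, δ)).1 + (y + (δ, δ)).2),
        H (fun τ => (y.1 - y.2) + 0 * (τ - (y.1 + y.2))) τ
        = 2 * ∫ τ in (0:ℝ)..δ, h (y + (τ, τ)) := by
      have := intervalIntegral.mul_integral_comp_mul_add (a := 0) (b := δ)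
        (f := fun τ => H (fun τ => (y.1 - y.2) + 0 * (τ - (y.1 + y.2))) τ) 2 (y.1 + y.2)
      rw [show (y + (δ, δ)).1 + (y + (δ, δ)).2 = 2 * δ + (y.1 + y.2) by simp; ring]
      rw [mul_zero, zero_add] at this
      rw [← this]
      congr 1
      refine intervalIntegral.integral_congr fun τ _ => ?_
      simp only [H]
      congr 1
      ext <;> simp <;> ring
    rw [e]
    have : 0 ≤ ∫ τ in (0:ℝ)..δ, h (y + (τ, τ)) :=
      intervalIntegral.integral_nonneg hδ fun _ _ => h0 _
    linarith

/-! ### Smoothing of the potential -/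

theorem le_fderiv_of_increment {f : ℝ × ℝ → ℝ} {y d : ℝ × ℝ} {c δ₀ : ℝ} (hδ₀ : 0 < δ₀)
    (hf : DifferentiableAt ℝ f y)
    (h : ∀ δ, 0 < δ → δ < δ₀ → f y + δ * c ≤ f (y + δ • d)) : c ≤ fderiv ℝ f y d := by
  have h1 : HasDerivAt (fun δ : ℝ => f (y + δ • d)) (fderiv ℝ f y d) 0 := by
    have h2 : HasDerivAt (fun δ : ℝ => y + δ • d) d 0 := by
      simpa using ((hasDerivAt_id (0:ℝ)).smul_const d).const_add y
    have h3 : HasFDerivAt f (fderiv ℝ f y) (y + (0:ℝ) • d) := by simpa using hf.hasFDerivAt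
    exact h3.comp_hasDerivAt 0 h2
  have h4 := h1.tendsto_slope_zero_right
  refine ge_of_tendsto h4 ?_
  filter_upwards [Ioo_mem_nhdsGT hδ₀] with δ hδ
  have := h δ hδ.1 hδ.2
  simp only [zero_add, zero_smul, add_zero, smul_eq_mul]
  rw [inv_mul_eq_div, le_div_iff₀ hδ.1]
  linarith

/-- Mollification at a scale at which `h` varies by at most `θ / 2` makes the potential smooth and
turns its growth along diagonals into a lower bound for the diagonal derivative. -/
theorem exists_smooth_potential (f h : ℝ × ℝ → ℝ) (ε θ : ℝ) (hθ : 0 < θ) (hc : Continuous h)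
    (hsupp : HasCompactSupport h) (hmono : Monotone f) (hf0 : ∀ y, 0 ≤ f y) (hfε : ∀ y, f y ≤ ε)
    (hf1 : ∀ y : ℝ × ℝ, ∀ δ : ℝ, 0 ≤ δ → f (y + (δ, 0)) ≤ f y + δ)
    (hf2 : ∀ y : ℝ × ℝ, ∀ δ : ℝ, 0 ≤ δ → f (y + (0, δ)) ≤ f y + δ)
    (hgain : ∀ y : ℝ × ℝ, ∀ δ : ℝ, 0 ≤ δ →
      f y + ∫ τ in (0:ℝ)..δ, h (y + (τ, τ)) ≤ f (y + (δ, δ))) :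
    ∃ F : ℝ × ℝ → ℝ, ContDiff ℝ 2 F ∧ (∀ y, 0 ≤ F y) ∧ (∀ y, F y ≤ ε) ∧
      (∀ y, 0 ≤ fderiv ℝ F y (1, 0)) ∧ (∀ y, fderiv ℝ F y (1, 0) ≤ 1) ∧
      (∀ y, 0 ≤ fderiv ℝ F y (0, 1)) ∧ (∀ y, fderiv ℝ F y (0, 1) ≤ 1) ∧
      (∀ y, h y - θ ≤ fderiv ℝ F y (1, 1)) := by
  have hfc : Continuous f := by
    have key : ∀ y z : ℝ × ℝ, f y ≤ f z + 2 * dist y z := by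
      intro y z
      have e1 : y.1 - z.1 ≤ dist y z := by
        refine (le_abs_self _).trans ?_
        rw [Prod.dist_eq, ← Real.dist_eq]; exact le_max_left _ _
      have e2 : y.2 - z.2 ≤ dist y z := by
        refine (le_abs_self _).trans ?_
        rw [Prod.dist_eq, ← Real.dist_eq]; exact le_max_right _ _
      have d0 : 0 ≤ dist y z := dist_nonneg
      calc f y ≤ f (z + (dist y z, 0) + (0, dist y z)) := hmono ⟨by simp; linarith, by simp; linarith⟩
        _ ≤ f (z + (dist y z, 0)) + dist y z := hf2 _ _ d0
        _ ≤ f z + dist y z + dist y z := by linarith [hf1 z _ d0]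
        _ = _ := by ring
    have : LipschitzWith 2 f := LipschitzWith.of_le_add_mul 2 (by simpa using key)
    exact this.continuous
  obtain ⟨δ₀, hδ₀, hunif⟩ := Metric.uniformContinuous_iff.1
    (hsupp.uniformContinuous_of_continuous hc) (θ / 2) (by positivity)
  let b : ContDiffBump (0 : ℝ × ℝ) := ⟨δ₀ / 2, δ₀, by positivity, by linarith⟩
  let ρ : ℝ × ℝ → ℝ := b.normed volume
  have hρ0 : ∀ z, 0 ≤ ρ z := fun z => b.nonneg_normed z
  have hρi : ∫ z, ρ z = 1 := b.integral_normed
  have hρc : Continuous ρ := b.continuous_normed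
  have hρs : HasCompactSupport ρ := b.hasCompactSupport_normed
  have hρsupp : ∀ z, ρ z ≠ 0 → ‖z‖ < δ₀ := by
    intro z hz
    have : z ∈ Function.support (b.normed volume) := hz
    rw [b.support_normed_eq] at this
    simpa [b] using this
  let F : ℝ × ℝ → ℝ := convolution ρ f (ContinuousLinearMap.lsmul ℝ ℝ) volume
  have hF : ∀ y, F y = ∫ z, ρ z * f (y - z) := fun y => by simp [F, convolution]
  have hintg : ∀ k : ℝ × ℝ → ℝ, Continuous k → Integrable (fun z => ρ z * k z) := fun k hk =>
    (hρc.mul hk).integrable_of_hasCompactSupport hρs.mul_right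
  have hFs : ContDiff ℝ 2 F :=
    hρs.contDiff_convolution_left (n := 2) _ b.contDiff_normed hfc.locallyIntegrable
  -- pointwise bounds that hold on the support of `ρ` integrate to bounds for averages
  have hcmp : ∀ k l : ℝ × ℝ → ℝ, Continuous k → Continuous l →
      (∀ z, ‖z‖ < δ₀ → k z ≤ l z) → ∫ z, ρ z * k z ≤ ∫ z, ρ z * l z := by
    intro k l hk hl hkl
    refine integral_mono (hintg k hk) (hintg l hl) fun z => ?_
    by_cases hz : ρ z = 0
    · simp [hz]
    · exact mul_le_mul_of_nonneg_left (hkl z (hρsupp z hz)) (hρ0 z)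
  have hconst : ∀ c : ℝ, ∫ z, ρ z * c = c := fun c => by
    rw [integral_mul_const, hρi, one_mul]
  have hfy : ∀ y, Continuous fun z => f (y - z) := fun y => by fun_prop
  have hadd : ∀ y c, F y + c = ∫ z, ρ z * (f (y - z) + c) := by
    intro y c
    simp_rw [mul_add]
    rw [integral_add (hintg _ (hfy y)) (hintg _ continuous_const), hconst, hF]
  have hlow : ∀ (y d : ℝ × ℝ) (c : ℝ),
      (∀ z, ‖z‖ < δ₀ → ∀ δ, 0 < δ → δ < δ₀ → f (y - z) + δ * c ≤ f (y - z + δ • d)) →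
      c ≤ fderiv ℝ F y d := by
    intro y d c hh
    refine le_fderiv_of_increment hδ₀ (hFs.differentiable (by norm_num)).differentiableAt
      fun δ hδ hδ' => ?_
    rw [hadd, hF]
    refine hcmp _ _ (by fun_prop) (by fun_prop) fun z hz => ?_
    refine (hh z hz δ hδ hδ').trans (le_of_eq ?_)
    congr 1; abel
  have hupp : ∀ (y d : ℝ × ℝ) (c : ℝ),
      (∀ z, ∀ δ, 0 < δ → f (y - z + δ • d) ≤ f (y - z) + δ * c) →
      fderiv ℝ F y d ≤ c := by
    intro y d c hh
    have hD := (hFs.differentiable (by norm_num)).differentiableAt (x := y)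
    have : -c ≤ fderiv ℝ (fun y => - F y) y d := by
      refine le_fderiv_of_increment hδ₀ hD.neg fun δ hδ hδ' => ?_
      have : F (y + δ • d) ≤ F y + δ * c := by
        rw [hadd, hF]
        refine hcmp _ _ (by fun_prop) (by fun_prop) fun z hz => ?_
        refine (le_of_eq ?_).trans (hh z δ hδ)
        congr 1; abel
      linarith
    rw [fderiv_fun_neg] at this
    simpa using this
  refine ⟨F, hFs, ?_, ?_, ?_, ?_, ?_, ?_, ?_⟩
  · intro y
    rw [hF]
    exact integral_nonneg fun z => mul_nonneg (hρ0 z) (hf0 _)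
  · intro y
    rw [hF, ← hconst ε]
    exact hcmp _ _ (hfy y) continuous_const fun z _ => hfε _
  · refine fun y => hlow y _ _ fun z _ δ hδ _ => ?_
    rw [mul_zero, add_zero]
    exact hmono ⟨by simp [hδ.le], by simp⟩
  · refine fun y => hupp y _ _ fun z δ hδ => ?_
    simpa using hf1 (y - z) δ hδ.le
  · refine fun y => hlow y _ _ fun z _ δ hδ _ => ?_
    rw [mul_zero, add_zero]
    exact hmono ⟨by simp, by simp [hδ.le]⟩
  · refine fun y => hupp y _ _ fun z δ hδ => ?_
    simpa using hf2 (y - z) δ hδ.le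
  · refine fun y => hlow y _ _ fun z hz δ hδ hδ' => ?_
    have g := hgain (y - z) δ hδ.le
    have e : (δ • ((1:ℝ), (1:ℝ))) = (δ, δ) := by simp
    rw [e]
    refine le_trans ?_ g
    have hz' : |h (y - z) - h y| < θ / 2 := by
      rw [← Real.dist_eq]
      exact hunif (by simpa [dist_eq_norm] using hz)
    have low : ∀ τ ∈ Set.Icc 0 δ, h y - θ ≤ h (y - z + (τ, τ)) := by
      intro τ hτ
      have : |h (y - z + (τ, τ)) - h (y - z)| < θ / 2 := by
        rw [← Real.dist_eq]
        refine hunif ?_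
        simp only [dist_eq_norm, add_sub_cancel_left, Prod.norm_def, Real.norm_eq_abs, max_self]
        rw [abs_of_nonneg hτ.1]
        exact hτ.2.trans_lt hδ'
      rw [abs_lt] at this hz'
      linarith [this.1, hz'.1]
    have := intervalIntegral.integral_mono_on hδ.le
      (intervalIntegrable_const (c := h y - θ) (μ := volume))
      (Continuous.intervalIntegrable (by fun_prop) _ _) low
    simp only [intervalIntegral.integral_const, smul_eq_mul, sub_zero] at this
    linarith

/-! ### Geometry of the plane and the curl-free identity -/

/-- The plane `ℝ²` with its Euclidean norm. -/
abbrev Plane : Type := EuclideanSpace ℝ (Fin 2)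

/-- The rotation of `v` by a right angle. -/
def perp (v : Plane) : Plane := !₂[-v 1, v 0]

theorem inner_plane (y z : Plane) : ⟪y, z⟫ = y 0 * z 0 + y 1 * z 1 := by
  simp [PiLp.inner_apply, Fin.sum_univ_two, mul_comm]

theorem sq_add_sq_of_unit {v : Plane} (hv : ‖v‖ = 1) : v 0 ^ 2 + v 1 ^ 2 = 1 := by
  have := EuclideanSpace.real_norm_sq_eq v
  rw [hv, Fin.sum_univ_two] at this
  linarith

theorem norm_perp {v : Plane} (hv : ‖v‖ = 1) : ‖perp v‖ = 1 := by
  have h := EuclideanSpace.real_norm_sq_eq (perp v)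
  rw [Fin.sum_univ_two] at h
  have e := sq_add_sq_of_unit hv
  have : ‖perp v‖ ^ 2 = 1 := by rw [h]; simp [perp]; linarith
  exact (pow_eq_one_iff_of_nonneg (norm_nonneg _) two_ne_zero).1 this

theorem inner_perp_sq_add {v : Plane} (hv : ‖v‖ = 1) (y : Plane) :
    ⟪y, perp v⟫ ^ 2 + ⟪y, v⟫ ^ 2 = ‖y‖ ^ 2 := by
  have e := sq_add_sq_of_unit hv
  rw [EuclideanSpace.real_norm_sq_eq, Fin.sum_univ_two, inner_plane, inner_plane]
  simp only [perp, PiLp.toLp_apply, Matrix.cons_val_zero, Matrix.cons_val_one]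
  linear_combination (y 0 ^ 2 + y 1 ^ 2) * e

/-- The point with coordinates `t` along `perp v` and `s`, measured in units of `k`, along `v`. -/
def pt (v : Plane) (k t s : ℝ) : Plane := t • perp v + (s * k) • v

/-- The linear coordinates `(ξ, η)` with respect to the basis `perp v + k v`, `perp v - k v`, so
that `t = ξ + η` and `s = ξ - η`. The level sets of `ξ` and `η` are the steepest admissible
curves. -/
def nullChart (v : Plane) (hv : ‖v‖ = 1) (k : ℝ) (hk : 0 < k) : (ℝ × ℝ) ≃L[ℝ] Plane :=
  ContinuousLinearEquiv.equivOfInverse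
    ((ContinuousLinearMap.fst ℝ ℝ ℝ).smulRight (perp v + k • v) +
      (ContinuousLinearMap.snd ℝ ℝ ℝ).smulRight (perp v - k • v))
    (((1 / 2 : ℝ) • (innerSL ℝ (perp v) + k⁻¹ • innerSL ℝ v)).prod
      ((1 / 2 : ℝ) • (innerSL ℝ (perp v) - k⁻¹ • innerSL ℝ v)))
    (by
      have e := sq_add_sq_of_unit hv
      rintro ⟨a, b⟩
      ext
      · simp [inner_plane, perp]
        field_simp
        linear_combination (2 * a * k) * e
      · simp [inner_plane, perp]
        field_simp
        linear_combination (2 * b * k) * e)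
    (by
      have e := sq_add_sq_of_unit hv
      intro y
      ext i
      fin_cases i
      · simp [inner_plane, perp]
        field_simp
        linear_combination (2 * k * y 0) * e
      · simp [inner_plane, perp]
        field_simp
        linear_combination (2 * k * y 1) * e)

theorem nullChart_apply (v : Plane) (hv : ‖v‖ = 1) (k : ℝ) (hk : 0 < k) (y : ℝ × ℝ) :
    nullChart v hv k hk y = y.1 • (perp v + k • v) + y.2 • (perp v - k • v) := rfl

theorem nullChart_half (v : Plane) (hv : ‖v‖ = 1) (k : ℝ) (hk : 0 < k) (t s : ℝ) :
    nullChart v hv k hk ((t + s) / 2, (t - s) / 2) = pt v k t s := by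
  rw [nullChart_apply, pt]
  module

theorem inner_perp_pt {v : Plane} (hv : ‖v‖ = 1) (k t s : ℝ) : ⟪pt v k t s, perp v⟫ = t := by
  have e := sq_add_sq_of_unit hv
  simp [pt, inner_plane, perp]
  linear_combination t * e

theorem inner_pt {v : Plane} (hv : ‖v‖ = 1) (k t s : ℝ) : ⟪pt v k t s, v⟫ = s * k := by
  have e := sq_add_sq_of_unit hv
  simp [pt, inner_plane, perp]
  linear_combination s * k * e

/-- The distributional derivative of a `BV` function is curl free: testing `Du` against the rotated
gradient of `F` gives zero, by symmetry of the second derivative of `F`. -/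
theorem IsBVScalarOn.curl_free {Ω : Set Plane} {u : Plane → ℝ} {ν : Measure Plane}
    {σ : Plane → Plane} (h : IsBVScalarOn Ω u ν σ) {v : Plane}
    {F : Plane → ℝ} (hF : ContDiff ℝ 2 F) (hFc : HasCompactSupport F) (hFΩ : tsupport F ⊆ Ω) :
    ∫ y, (fderiv ℝ F y (perp v) * ⟪σ y, v⟫ - fderiv ℝ F y v * ⟪σ y, perp v⟫) ∂ν = 0 := by
  let e : Fin 2 → Plane := fun l => EuclideanSpace.single l (1:ℝ)
  have hνf : IsFiniteMeasure ν := ⟨h.finite⟩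
  have hD : ContDiff ℝ 1 (fderiv ℝ F) := hF.fderiv_right (by norm_num)
  have hDi : ∀ l, ContDiff ℝ 1 fun y => fderiv ℝ F y (e l) := fun l => hD.clm_apply contDiff_const
  have hDc : ∀ l, HasCompactSupport fun y => fderiv ℝ F y (e l) := fun l => hFc.fderiv_apply ℝ _
  have hDs : ∀ l, tsupport (fun y => fderiv ℝ F y (e l)) ⊆ Ω := fun l =>
    (tsupport_fderiv_apply_subset ℝ _).trans hFΩ
  have hsymm : ∀ y, fderiv ℝ (fun y => fderiv ℝ F y (e 1)) y (e 0)
      = fderiv ℝ (fun y => fderiv ℝ F y (e 0)) y (e 1) := by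
    intro y
    have hd : DifferentiableAt ℝ (fderiv ℝ F) y :=
      (hD.differentiable (by norm_num)).differentiableAt
    have hs : IsSymmSndFDerivAt ℝ F y := hF.contDiffAt.isSymmSndFDerivAt (by simp)
    rw [fderiv_clm_apply hd (differentiableAt_const _),
      fderiv_clm_apply hd (differentiableAt_const _)]
    simpa using hs (e 0) (e 1)
  have p1 := h.parts _ (hDi 1) (hDc 1) (hDs 1) 0
  have p0 := h.parts _ (hDi 0) (hDc 0) (hDs 0) 1
  have hcomp : ∀ l m, Integrable (fun y => fderiv ℝ F y (e l) * σ y m) ν := by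
    intro l m
    have hcont : Continuous fun y => fderiv ℝ F y (e l) := (hDi l).continuous
    obtain ⟨B, hB⟩ := (hDc l).exists_bound_of_continuous hcont
    refine Integrable.of_bound (C := B) ?_ ?_
    · have : Measurable fun y => σ y m := by
        have := h.meas
        fun_prop
      exact (hcont.measurable.mul this).aestronglyMeasurable
    · filter_upwards [h.unit] with y hy
      rw [norm_mul]
      have h1 : ‖σ y m‖ ≤ 1 := hy ▸ PiLp.norm_apply_le (σ y) m
      calc _ ≤ B * 1 := mul_le_mul (hB y) h1 (norm_nonneg _) ((norm_nonneg _).trans (hB y))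
        _ = B := mul_one B
  have key : ∫ y, fderiv ℝ F y (e 1) * σ y 0 ∂ν = ∫ y, fderiv ℝ F y (e 0) * σ y 1 ∂ν := by
    have : ∀ y, u y * fderiv ℝ (fun y => fderiv ℝ F y (e 1)) y (e 0)
      = u y * fderiv ℝ (fun y => fderiv ℝ F y (e 0)) y (e 1) := fun y => by rw [hsymm]
    have hi := integral_congr_ae (μ := volume.restrict Ω) (Eventually.of_forall this)
    have p0' : _ = _ := p0
    have p1' : _ = _ := p1
    simp only [e] at hi ⊢
    linarith
  have hexp : ∀ z : Plane, z = z 0 • e 0 + z 1 • e 1 := by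
    intro z
    ext i
    fin_cases i <;> simp [e]
  have hpt : ∀ y, fderiv ℝ F y (perp v) * ⟪σ y, v⟫ - fderiv ℝ F y v * ⟪σ y, perp v⟫
      = (v 0 ^ 2 + v 1 ^ 2) * (fderiv ℝ F y (e 1) * σ y 0 - fderiv ℝ F y (e 0) * σ y 1) := by
    intro y
    have e1 : fderiv ℝ F y (perp v) = -v 1 * fderiv ℝ F y (e 0) + v 0 * fderiv ℝ F y (e 1) := by
      conv_lhs => rw [hexp (perp v)]
      simp [perp]
    have e2 : fderiv ℝ F y v = v 0 * fderiv ℝ F y (e 0) + v 1 * fderiv ℝ F y (e 1) := by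
      conv_lhs => rw [hexp v]
      simp
    rw [e1, e2, inner_plane, inner_plane]
    simp only [perp, PiLp.toLp_apply, Matrix.cons_val_zero, Matrix.cons_val_one]
    ring
  simp_rw [hpt]
  rw [integral_const_mul, integral_sub (hcomp 1 0) (hcomp 0 1), key, sub_self, mul_zero]

/-! ### The cone inequality -/

theorem measurableSet_cone_preimage {σ : Plane → Plane} (hσ : Measurable σ) (v : Plane) (a : ℝ) :
    MeasurableSet {y | σ y ∈ cone v a} := by
  apply hσ
  exact (isClosed_le (by fun_prop) (by fun_prop)).measurableSet

theorem nullChart_fst (v : Plane) (hv : ‖v‖ = 1) (k : ℝ) (hk : 0 < k) :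
    nullChart v hv k hk (1, 0) = perp v + k • v := by simp [nullChart_apply]

theorem nullChart_snd (v : Plane) (hv : ‖v‖ = 1) (k : ℝ) (hk : 0 < k) :
    nullChart v hv k hk (0, 1) = perp v - k • v := by simp [nullChart_apply]

/-- A smooth function on the plane which is monotone in both null directions, with slopes at most
`1`, takes values in `[0, ε]`, and whose derivative along `perp v` is at least `(h - θ) / 2`. It
exists as soon as every admissible curve picks up at most `ε` of the compactly supported density
`h`. -/
theorem exists_plane_potential {v : Plane} (hv : ‖v‖ = 1) {k : ℝ} (hk : 0 < k)
    {h : Plane → ℝ} (hc : Continuous h) (hsupp : HasCompactSupport h) (h0 : ∀ y, 0 ≤ h y)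
    (h1 : ∀ y, h y ≤ 1) {ε : ℝ}
    (hε : ∀ g : ℝ → ℝ, LipschitzWith 1 g → ∫ τ, h (pt v k τ (g τ)) ≤ ε) {θ : ℝ} (hθ : 0 < θ) :
    ∃ f : Plane → ℝ, ContDiff ℝ 2 f ∧ (∀ y, 0 ≤ f y) ∧ (∀ y, f y ≤ ε) ∧
      ∀ y, ∃ α β : ℝ, 0 ≤ α ∧ α ≤ 1 ∧ 0 ≤ β ∧ β ≤ 1 ∧ h y - θ ≤ α + β ∧
        fderiv ℝ f y (perp v) = (α + β) / 2 ∧ fderiv ℝ f y v = (α - β) / (2 * k) := by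
  let T := nullChart v hv k hk
  obtain ⟨f, hm, hf0, hfε, hf1, hf2, hg⟩ := exists_lipschitz_potential (fun z => h (T z)) ε
    (hc.comp T.continuous) (hsupp.comp_homeomorph T.toHomeomorph) (fun _ => h0 _) (fun _ => h1 _)
    (by
      intro g hg
      simpa only [T, nullChart_half] using hε g hg)
  obtain ⟨F, hF, hF0, hFε, ha0, ha1, hb0, hb1, hh⟩ := exists_smooth_potential f (fun z => h (T z))
    ε θ hθ (hc.comp T.continuous) (hsupp.comp_homeomorph T.toHomeomorph) hm hf0 hfε hf1 hf2 hg
  refine ⟨fun y => F (T.symm y), hF.comp T.symm.contDiff, fun _ => hF0 _, fun _ => hFε _, ?_⟩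
  intro y
  have hd : ∀ z, fderiv ℝ (fun y => F (T.symm y)) y (T z) = fderiv ℝ F (T.symm y) z := by
    intro z
    have h1 : HasFDerivAt F (fderiv ℝ F (T.symm y)) (T.symm y) :=
      ((hF.differentiable (by norm_num)) _).hasFDerivAt
    have h2 := h1.comp y (T.symm.hasFDerivAt (x := y))
    have h3 : fderiv ℝ (fun y => F (T.symm y)) y = _ := h2.fderiv
    rw [h3]
    simp
  have e1 := hd (1, 0)
  have e2 := hd (0, 1)
  rw [show T (1, 0) = perp v + k • v from nullChart_fst v hv k hk, map_add, map_smul] at e1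
  rw [show T (0, 1) = perp v - k • v from nullChart_snd v hv k hk, map_sub, map_smul] at e2
  simp only [smul_eq_mul] at e1 e2
  have hsum : fderiv ℝ F (T.symm y) (1, 1) =
      fderiv ℝ F (T.symm y) (1, 0) + fderiv ℝ F (T.symm y) (0, 1) := by
    rw [← map_add]; simp
  refine ⟨fderiv ℝ F (T.symm y) (1, 0), fderiv ℝ F (T.symm y) (0, 1), ha0 _, ha1 _, hb0 _, hb1 _,
    ?_, ?_, ?_⟩
  · have := hh (T.symm y)
    rw [hsum] at this
    simpa using this
  · linarith
  · field_simp
    linarith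

set_option maxHeartbeats 1000000 in
/-- If every admissible curve across `Ω` picks up at most `ε` of the density `h`, then the part of
`|Du|` with direction in the cone `C(v,a)`, tested against `φ² h`, is bounded by the part of `|Du|`
with direction outside the cone, tested against `φ`, and by a multiple of `ε`. The curl-free identity
is applied to `φ f` with `f` a potential of `φ h`: inside the cone its integrand is at least
`(a - a') / 2 * φ² h` up to errors, and `0 ≤ f ≤ ε` makes the terms with `∇φ` small. -/
theorem IsBVScalarOn.cone_inequality {Ω : Set Plane} {u : Plane → ℝ} {ν : Measure Plane}
    {σ : Plane → Plane} (hu : IsBVScalarOn Ω u ν σ) {v : Plane} (hv : ‖v‖ = 1)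
    {a a' k : ℝ} (ha' : 0 < a') (haa : a' < a) (hk : 0 < k)
    (hka : (k * a') ^ 2 = 1 - a' ^ 2)
    {φ : Plane → ℝ} (hφ : ContDiff ℝ 2 φ) (hφc : HasCompactSupport φ) (hφΩ : tsupport φ ⊆ Ω)
    (hφ0 : ∀ y, 0 ≤ φ y) (hφ1 : ∀ y, φ y ≤ 1) {B : ℝ} (hB : ∀ y, ‖fderiv ℝ φ y‖ ≤ B)
    {R : ℝ} (hR : ∀ y ∈ Ω, |⟪y, perp v⟫| ≤ R ∧ |⟪y, v⟫| ≤ R * k)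
    {h : Plane → ℝ} (hc : Continuous h) (h0 : ∀ y, 0 ≤ h y) (h1 : ∀ y, h y ≤ 1) {ε : ℝ}
    (hε0 : 0 ≤ ε)
    (hε : ∀ g : ℝ → ℝ, LipschitzWith 1 g → |g 0| ≤ 2 * R →
      ∫ τ in Set.Icc (-R) R, h (pt v k τ (g τ)) ≤ ε) :
    (a - a') / 2 * ∫ y in {y | σ y ∈ cone v a}, φ y ^ 2 * h y ∂ν ≤
      (1 + 1 / k) * ∫ y in {y | σ y ∈ cone v a}ᶜ, φ y ∂ν + ε * (2 * B) * ν.real Set.univ := by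
  have hνf : IsFiniteMeasure ν := ⟨hu.finite⟩
  have hB0 : 0 ≤ B := (norm_nonneg _).trans (hB 0)
  set A : Set Plane := {y | σ y ∈ cone v a} with hA
  have hAm : MeasurableSet A := measurableSet_cone_preimage hu.meas v a
  set H : Plane → ℝ := fun y => φ y * h y with hH
  have hHc : Continuous H := hφ.continuous.mul hc
  have hHs : HasCompactSupport H := hφc.mul_right
  have hH0 : ∀ y, 0 ≤ H y := fun y => mul_nonneg (hφ0 y) (h0 y)
  have hHh : ∀ y, H y ≤ h y := fun y => mul_le_of_le_one_left (h0 y) (hφ1 y)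
  have hHsupp : ∀ y, H y ≠ 0 → y ∈ Ω := by
    intro y hy
    exact hφΩ (subset_tsupport _ (left_ne_zero_of_mul hy))
  have hpc : ∀ g : ℝ → ℝ, Continuous g → Continuous fun τ => pt v k τ (g τ) := by
    intro g hg
    unfold pt
    fun_prop
  have hHε : ∀ g : ℝ → ℝ, LipschitzWith 1 g → ∫ τ, H (pt v k τ (g τ)) ≤ ε := by
    intro g hg
    have hin : ∀ τ, H (pt v k τ (g τ)) ≠ 0 → |τ| ≤ R ∧ |g τ| ≤ R := by
      intro τ hτ
      obtain ⟨h1, h2⟩ := hR _ (hHsupp _ hτ)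
      rw [inner_perp_pt hv] at h1
      rw [inner_pt hv, abs_mul, abs_of_pos hk] at h2
      exact ⟨h1, le_of_mul_le_mul_right h2 hk⟩
    -- a curve with `|g 0| > 2 R` does not meet the support of `φ`
    by_cases hg0 : |g 0| ≤ 2 * R
    · refine le_trans ?_ (hε g hg hg0)
      rw [← setIntegral_eq_integral_of_forall_compl_eq_zero (s := Set.Icc (-R) R)]
      · apply setIntegral_mono
        · exact ((hHc.comp (hpc g hg.continuous)).continuousOn).integrableOn_Icc
        · exact ((hc.comp (hpc g hg.continuous)).continuousOn).integrableOn_Icc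
        · exact fun τ => hHh _
      · intro τ hτ
        by_contra hne
        exact hτ (abs_le.1 (hin τ hne).1)
    · have : ∀ τ, H (pt v k τ (g τ)) = 0 := by
        intro τ
        by_contra hne
        obtain ⟨h1, h2⟩ := hin τ hne
        have h3 := hg.dist_le_mul 0 τ
        simp only [NNReal.coe_one, one_mul, Real.dist_eq, zero_sub, abs_neg] at h3
        have h4 : |g 0| ≤ |g 0 - g τ| + |g τ| := by
          calc |g 0| = |g 0 - g τ + g τ| := by ring_nf
            _ ≤ _ := abs_add_le _ _
        exact hg0 (by linarith)
      simp [this, hε0]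
  set c1 : ℝ := (a - a') / 2 with hc1
  have hc1pos : 0 < c1 := by rw [hc1]; linarith
  set C : ℝ := 1 + 1 / k with hC
  have hCpos : 0 < C := by positivity
  have hi2 : Integrable (fun y => φ y ^ 2 * h y) ν := by
    refine Integrable.of_bound (C := 1) ((hφ.continuous.pow 2).mul hc).aestronglyMeasurable
      (Eventually.of_forall fun y => ?_)
    rw [Real.norm_eq_abs, abs_of_nonneg (mul_nonneg (sq_nonneg _) (h0 y))]
    exact mul_le_one₀ (pow_le_one₀ (hφ0 y) (hφ1 y)) (h0 y) (h1 y)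
  have hi1 : Integrable φ ν := by
    refine Integrable.of_bound (C := 1) hφ.continuous.aestronglyMeasurable
      (Eventually.of_forall fun y => ?_)
    rw [Real.norm_eq_abs, abs_of_nonneg (hφ0 y)]
    exact hφ1 y
  suffices hs : ∀ θ : ℝ, 0 < θ → c1 * ∫ y in A, φ y ^ 2 * h y ∂ν ≤
      C * ∫ y in Aᶜ, φ y ∂ν + ε * (2 * B) * ν.real Set.univ + c1 * θ * ν.real Set.univ by
    refine le_of_forall_pos_le_add fun δ hδ => ?_
    have hm : 0 ≤ ν.real Set.univ := measureReal_nonneg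
    have hpos : 0 < c1 * ν.real Set.univ + 1 := by positivity
    refine (hs (δ / (c1 * ν.real Set.univ + 1)) (by positivity)).trans ?_
    gcongr
    rw [mul_right_comm, mul_div_assoc', div_le_iff₀ hpos]
    nlinarith
  intro θ hθ
  obtain ⟨f, hf, hf0, hfε, hfd⟩ := exists_plane_potential hv hk hHc hHs hH0
    (fun y => (hHh y).trans (h1 y)) hHε hθ
  have hcurl := hu.curl_free (v := v) (F := fun y => φ y * f y) (hφ.mul hf) hφc.mul_right
    ((tsupport_mul_subset_left).trans hφΩ)
  have hprod : ∀ y z, fderiv ℝ (fun y => φ y * f y) y z =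
      φ y * fderiv ℝ f y z + f y * fderiv ℝ φ y z := by
    intro y z
    rw [fderiv_fun_mul (hφ.differentiable (by norm_num) y) (hf.differentiable (by norm_num) y)]
    simp
  let G : Plane → ℝ := fun y => A.indicator (fun y => c1 * (φ y ^ 2 * h y)) y
    - Aᶜ.indicator (fun y => C * φ y) y - (ε * (2 * B) + c1 * θ)
  have hpt : ∀ᵐ y ∂ν, G y ≤ fderiv ℝ (fun y => φ y * f y) y (perp v) * ⟪σ y, v⟫
      - fderiv ℝ (fun y => φ y * f y) y v * ⟪σ y, perp v⟫ := by
    filter_upwards [hu.unit] with y hy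
    obtain ⟨α, β, hα0, hα1, hβ0, hβ1, hαβ, hfn, hfv⟩ := hfd y
    have hsq := inner_perp_sq_add hv (σ y)
    rw [hy] at hsq
    set p := ⟪σ y, v⟫ with hp
    set q := ⟪σ y, perp v⟫ with hq
    have hp1 : |p| ≤ 1 := by
      rw [← sq_le_one_iff_abs_le_one]; nlinarith [sq_nonneg q]
    have hq1 : |q| ≤ 1 := by
      rw [← sq_le_one_iff_abs_le_one]; nlinarith [sq_nonneg p]
    have hdn : |fderiv ℝ φ y (perp v)| ≤ B := by
      have := (fderiv ℝ φ y).le_opNorm (perp v)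
      rw [norm_perp hv, mul_one, Real.norm_eq_abs] at this
      exact this.trans (hB y)
    have hdv : |fderiv ℝ φ y v| ≤ B := by
      have := (fderiv ℝ φ y).le_opNorm v
      rw [hv, mul_one, Real.norm_eq_abs] at this
      exact this.trans (hB y)
    have hrest : -(2 * B) ≤ fderiv ℝ φ y (perp v) * p - fderiv ℝ φ y v * q := by
      have e1 : |fderiv ℝ φ y (perp v) * p| ≤ B * 1 := by
        rw [abs_mul]; exact mul_le_mul hdn hp1 (abs_nonneg _) hB0
      have e2 : |fderiv ℝ φ y v * q| ≤ B * 1 := by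
        rw [abs_mul]; exact mul_le_mul hdv hq1 (abs_nonneg _) hB0
      have := (abs_le.1 e1).1
      have := (abs_le.1 e2).2
      linarith
    have hfrest : -(ε * (2 * B)) ≤ f y * (fderiv ℝ φ y (perp v) * p - fderiv ℝ φ y v * q) := by
      have : f y * (2 * B) ≤ ε * (2 * B) := mul_le_mul_of_nonneg_right (hfε y) (by positivity)
      nlinarith [mul_le_mul_of_nonneg_left hrest (hf0 y)]
    have hexp : fderiv ℝ (fun y => φ y * f y) y (perp v) * p
        - fderiv ℝ (fun y => φ y * f y) y v * q =
        φ y * ((α + β) / 2 * p - (α - β) / (2 * k) * q)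
          + f y * (fderiv ℝ φ y (perp v) * p - fderiv ℝ φ y v * q) := by
      rw [hprod, hprod, hfn, hfv]; ring
    rw [hexp]
    have hφy := hφ0 y
    have hαβabs : |α - β| ≤ α + β := by rw [abs_le]; constructor <;> linarith
    have hqk : (α - β) / (2 * k) * q ≤ (α + β) / 2 * (|q| / k) := by
      have : (α - β) * q ≤ (α + β) * |q| := by
        calc (α - β) * q ≤ |(α - β) * q| := le_abs_self _
          _ = |α - β| * |q| := abs_mul _ _
          _ ≤ _ := mul_le_mul_of_nonneg_right hαβabs (abs_nonneg _)
      calc (α - β) / (2 * k) * q = ((α - β) * q) / (2 * k) := by ring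
        _ ≤ ((α + β) * |q|) / (2 * k) := by gcongr
        _ = _ := by field_simp
    by_cases hyA : y ∈ A
    · -- a unit vector of the cone `C(v,a)` has `|q| / k ≤ a' < a ≤ p`
      have hpa : a ≤ p := by
        have : a * ‖σ y‖ ≤ ⟪σ y, v⟫ := hyA
        rwa [hy, mul_one] at this
      have hqa : |q| / k ≤ a' := by
        rw [div_le_iff₀ hk, mul_comm]
        refine abs_le_of_sq_le_sq' ?_ (by positivity) |> fun h => abs_le.2 h
        rw [hka]
        nlinarith
      have hmain : c1 * (H y - θ) ≤ (α + β) / 2 * p - (α - β) / (2 * k) * q := by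
        have h2 : (α + β) / 2 * (a - a') ≤ (α + β) / 2 * (p - |q| / k) :=
          mul_le_mul_of_nonneg_left (by linarith) (by linarith)
        have h3 : c1 * (H y - θ) ≤ c1 * (α + β) := mul_le_mul_of_nonneg_left hαβ hc1pos.le
        have h4 : c1 * (α + β) = (α + β) / 2 * (a - a') := by rw [hc1]; ring
        linarith
      have h5 := mul_le_mul_of_nonneg_left hmain hφy
      have h6 : φ y * (c1 * θ) ≤ 1 * (c1 * θ) :=
        mul_le_mul_of_nonneg_right (hφ1 y) (by positivity)
      have h7 : φ y * (c1 * (H y - θ)) = c1 * (φ y ^ 2 * h y) - φ y * (c1 * θ) := by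
        rw [hH]; ring
      simp only [G, Set.indicator_of_mem hyA, Set.indicator_of_notMem (Set.notMem_compl_iff.2 hyA)]
      linarith
    · have hmain : -C ≤ (α + β) / 2 * p - (α - β) / (2 * k) * q := by
        have h2 : (α + β) / 2 * (|q| / k) ≤ 1 * (1 / k) :=
          mul_le_mul (by linarith) (by gcongr) (by positivity) (by norm_num)
        have h3 : (α + β) / 2 * |p| ≤ 1 * 1 :=
          mul_le_mul (by linarith) hp1 (abs_nonneg _) (by norm_num)
        have h4 : (α + β) / 2 * (-|p|) ≤ (α + β) / 2 * p :=
          mul_le_mul_of_nonneg_left (neg_abs_le p) (by linarith)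
        rw [hC]
        linarith
      have h5 := mul_le_mul_of_nonneg_left hmain hφy
      have h6 : 0 ≤ c1 * θ := by positivity
      simp only [G, Set.indicator_of_notMem hyA, Set.indicator_of_mem (Set.mem_compl hyA)]
      linarith
  have hGi : Integrable G ν := by
    refine ((Integrable.indicator (hi2.const_mul c1) hAm).sub
      (Integrable.indicator (hi1.const_mul C) hAm.compl)).sub (integrable_const _)
  have hmeas1 : Measurable σ := hu.meas
  have hrhs : Integrable (fun y => fderiv ℝ (fun y => φ y * f y) y (perp v) * ⟪σ y, v⟫
      - fderiv ℝ (fun y => φ y * f y) y v * ⟪σ y, perp v⟫) ν := by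
    have hcd : ContDiff ℝ 2 (fun y => φ y * f y) := hφ.mul hf
    have hcs : HasCompactSupport (fun y => φ y * f y) := hφc.mul_right
    have hbdd : ∀ z z' : Plane, Integrable
        (fun y => fderiv ℝ (fun y => φ y * f y) y z * ⟪σ y, z'⟫) ν := by
      intro z z'
      have hco : Continuous fun y => fderiv ℝ (fun y => φ y * f y) y z :=
        (hcd.continuous_fderiv (by norm_num)).clm_apply continuous_const
      obtain ⟨K, hK⟩ := (hcs.fderiv_apply ℝ z).exists_bound_of_continuous hco
      refine Integrable.of_bound (C := K * ‖z'‖) ?_ ?_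
      · exact (hco.measurable.mul (hmeas1.inner measurable_const)).aestronglyMeasurable
      · filter_upwards [hu.unit] with y hy
        rw [norm_mul]
        refine mul_le_mul (hK y) ?_ (norm_nonneg _) ((norm_nonneg _).trans (hK y))
        simpa [hy] using norm_inner_le_norm (𝕜 := ℝ) (σ y) z'
    exact (hbdd _ _).sub (hbdd _ _)
  have hintg := integral_mono_ae hGi hrhs hpt
  rw [hcurl] at hintg
  have hGval : ∫ y, G y ∂ν = c1 * ∫ y in A, φ y ^ 2 * h y ∂ν - C * ∫ y in Aᶜ, φ y ∂ν
      - (ε * (2 * B) + c1 * θ) * ν.real Set.univ := by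
    simp only [G]
    rw [integral_sub, integral_sub, integral_indicator hAm, integral_indicator hAm.compl,
      integral_const_mul, integral_const_mul, integral_const, smul_eq_mul, mul_comm (ν.real _)]
    · exact Integrable.indicator (hi2.const_mul c1) hAm
    · exact Integrable.indicator (hi1.const_mul C) hAm.compl
    · exact (Integrable.indicator (hi2.const_mul c1) hAm).sub
        (Integrable.indicator (hi1.const_mul C) hAm.compl)
    · exact integrable_const _
  rw [hGval] at hintg
  linarith

/-! ### Minimax duality -/

/-- The cone to which the Riesz extension theorem is applied: pairs `(κ, r)` for which some density
`h` with `0 ≤ h ≤ e` satisfies `κ + L h ≤ b` and `c b + η e - ℓ h ≤ r`. -/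
def dualityCone {X Y : Type*} [TopologicalSpace X] [TopologicalSpace Y]
    (L : BoundedContinuousFunction Y ℝ →ₗ[ℝ] C(X, ℝ)) (ℓ : BoundedContinuousFunction Y ℝ →ₗ[ℝ] ℝ)
    (c η : ℝ) : PointedCone ℝ (C(X, ℝ) × ℝ) where
  carrier := {p | ∃ (h : BoundedContinuousFunction Y ℝ) (b e : ℝ), (∀ y, 0 ≤ h y) ∧
    (∀ y, h y ≤ e) ∧ 0 ≤ b ∧ 0 ≤ e ∧ (∀ x, p.1 x + L h x ≤ b) ∧ c * b + η * e - ℓ h ≤ p.2}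
  add_mem' := by
    rintro p p' ⟨h, b, e, h1, h2, h3, h4, h5, h6⟩ ⟨h', b', e', h1', h2', h3', h4', h5', h6'⟩
    refine ⟨h + h', b + b', e + e', fun y => add_nonneg (h1 y) (h1' y),
      fun y => add_le_add (h2 y) (h2' y), by positivity, by positivity, fun x => ?_, ?_⟩
    · have := h5 x
      have := h5' x
      simp only [map_add, Prod.fst_add, ContinuousMap.add_apply]
      linarith
    · simp only [map_add, Prod.snd_add]
      linarith
  zero_mem' := ⟨0, 0, 0, by simp, by simp, le_rfl, le_rfl, by simp, by simp⟩
  smul_mem' := by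
    rintro ⟨t, ht⟩ p ⟨h, b, e, h1, h2, h3, h4, h5, h6⟩
    refine ⟨t • h, t * b, t * e, fun y => mul_nonneg ht (h1 y),
      fun y => mul_le_mul_of_nonneg_left (h2 y) ht, mul_nonneg ht h3, mul_nonneg ht h4,
      fun x => ?_, ?_⟩
    · have := mul_le_mul_of_nonneg_left (h5 x) ht
      have e1 : ((⟨t, ht⟩ : {t : ℝ // 0 ≤ t}) • p).1 x = t * p.1 x := rfl
      rw [e1, map_smul, ContinuousMap.smul_apply, smul_eq_mul]
      linarith
    · have := mul_le_mul_of_nonneg_left h6 ht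
      have e1 : ((⟨t, ht⟩ : {t : ℝ // 0 ≤ t}) • p).2 = t * p.2 := rfl
      rw [e1, map_smul, smul_eq_mul]
      linarith

/-- A minimax duality: if `ℓ h ≤ c b + η e` whenever `0 ≤ h ≤ e` and `L h ≤ b`, then `ℓ` is
dominated on densities `0 ≤ h ≤ 1` by an average of `L h` up to the error `η`. A positive functional
on `C(X, ℝ) × ℝ` given by Riesz extension restricts to `C(X, ℝ)` as minus a positive functional, and
`Q` is the measure representing it. -/
theorem exists_dual_measure {X Y : Type*} [TopologicalSpace X] [CompactSpace X] [T2Space X]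
    [MeasurableSpace X] [BorelSpace X] [TopologicalSpace Y]
    (L : BoundedContinuousFunction Y ℝ →ₗ[ℝ] C(X, ℝ)) (ℓ : BoundedContinuousFunction Y ℝ →ₗ[ℝ] ℝ)
    (c η : ℝ)
    (H : ∀ (h : BoundedContinuousFunction Y ℝ) (b e : ℝ), (∀ y, 0 ≤ h y) → (∀ y, h y ≤ e) → 0 ≤ b →
      0 ≤ e → (∀ x, L h x ≤ b) → ℓ h ≤ c * b + η * e) :
    ∃ Q : Measure X, IsFiniteMeasure Q ∧ ∀ h : BoundedContinuousFunction Y ℝ, (∀ y, 0 ≤ h y) →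
      (∀ y, h y ≤ 1) → ℓ h ≤ ∫ x, L h x ∂Q + η := by
  let f : (C(X, ℝ) × ℝ) →ₗ.[ℝ] ℝ :=
    ⟨LinearMap.ker (LinearMap.fst ℝ C(X, ℝ) ℝ),
      (LinearMap.snd ℝ C(X, ℝ) ℝ).domRestrict _⟩
  obtain ⟨G, hG1, hG2⟩ := riesz_extension (dualityCone L ℓ c η) f (by
      rintro ⟨⟨κ, r⟩, hx⟩ ⟨h, b, e, h1, h2, h3, h4, h5, h6⟩
      have hκ : κ = 0 := hx
      subst hκ
      have := H h b e h1 h2 h3 h4 (fun x => by simpa using h5 x)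
      show 0 ≤ r
      have h6' : c * b + η * e - ℓ h ≤ r := h6
      linarith) (by
      rintro ⟨κ, r⟩
      refine ⟨⟨(0, c * ‖κ‖ - r), rfl⟩, 0, ‖κ‖, 0, by simp, by simp, norm_nonneg _, le_rfl, ?_, ?_⟩
      · intro x
        simpa using (le_abs_self _).trans (κ.norm_coe_le_norm x)
      · simp)
  have hGsnd : ∀ r : ℝ, G (0, r) = r := fun r => hG1 ⟨(0, r), rfl⟩
  let Λ0 : CompactlySupportedContinuousMap X ℝ →ₗ[ℝ] ℝ :=
    { toFun := fun κ => - G (κ.toContinuousMap, 0)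
      map_add' := by
        intro κ κ'
        have : ((κ + κ').toContinuousMap, (0:ℝ)) =
            (κ.toContinuousMap, (0:ℝ)) + (κ'.toContinuousMap, (0:ℝ)) := by
          ext <;> simp
        rw [this, map_add]; ring
      map_smul' := by
        intro t κ
        have : ((t • κ).toContinuousMap, (0:ℝ)) = t • (κ.toContinuousMap, (0:ℝ)) := by
          ext <;> simp
        rw [this, map_smul]; simp }
  let Λ : CompactlySupportedContinuousMap X ℝ →ₚ[ℝ] ℝ := PositiveLinearMap.mk₀ Λ0 (by
    intro κ hκ
    have : (-κ.toContinuousMap, (0:ℝ)) ∈ dualityCone L ℓ c η := by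
      refine ⟨0, 0, 0, by simp, by simp, le_rfl, le_rfl, ?_, by simp⟩
      intro x
      have : 0 ≤ κ x := hκ x
      simpa using this
    have h1 := hG2 _ this
    have h2 : ((-κ.toContinuousMap, (0:ℝ)) : C(X, ℝ) × ℝ) = -(κ.toContinuousMap, (0:ℝ)) := by
      ext <;> simp
    rw [h2, map_neg] at h1
    exact h1)
  refine ⟨RealRMK.rieszMeasure Λ, inferInstance, ?_⟩
  intro h h0 h1
  have hintg := RealRMK.integral_rieszMeasure Λ
    (CompactlySupportedContinuousMap.continuousMapEquiv (L h))
  have hΛ : Λ (CompactlySupportedContinuousMap.continuousMapEquiv (L h)) = - G (L h, 0) := rfl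
  have hmem : (-(L h), η - ℓ h) ∈ dualityCone L ℓ c η :=
    ⟨h, 0, 1, h0, h1, le_rfl, zero_le_one, by simp, by simp⟩
  have h3 := hG2 _ hmem
  have h4 : ((-(L h), η - ℓ h) : C(X, ℝ) × ℝ) = -(L h, 0) + (0, η - ℓ h) := by
    ext <;> simp
  rw [h4, map_add, map_neg, hGsnd] at h3
  have h5 : ∫ x, (CompactlySupportedContinuousMap.continuousMapEquiv (L h)) x
      ∂ RealRMK.rieszMeasure Λ = ∫ x, L h x ∂ RealRMK.rieszMeasure Λ := rfl
  rw [hΛ, h5] at hintg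
  linarith

/-! ### The compact space of admissible curves -/

/-- The admissible curves, as graphs of `1`-Lipschitz functions `g` with `|g 0| ≤ 2 R`, with the
topology of locally uniform convergence. -/
abbrev Curve (R : ℝ) : Type := {g : C(ℝ, ℝ) // LipschitzWith 1 g ∧ |g 0| ≤ 2 * R}

instance instMeasurableSpaceCurve (R : ℝ) : MeasurableSpace (Curve R) := borel _

instance instBorelSpaceCurve (R : ℝ) : BorelSpace (Curve R) := ⟨rfl⟩

instance instCompactSpaceCurve (R : ℝ) : CompactSpace (Curve R) := by
  suffices h : IsCompact {g : C(ℝ, ℝ) | LipschitzWith 1 g ∧ |g 0| ≤ 2 * R} from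
    isCompact_iff_compactSpace.1 h
  apply ArzelaAscoli.isCompact_of_equicontinuous
  · have himg : ContinuousMap.toFun '' {g : C(ℝ, ℝ) | LipschitzWith 1 g ∧ |g 0| ≤ 2 * R} =
        {g : ℝ → ℝ | (∀ s t, |g s - g t| ≤ |s - t|) ∧ |g 0| ≤ 2 * R} := by
      ext g
      constructor
      · rintro ⟨g, ⟨h1, h2⟩, rfl⟩
        refine ⟨fun s t => ?_, h2⟩
        simpa [Real.dist_eq] using h1.dist_le_mul s t
      · rintro ⟨h1, h2⟩
        have hL : LipschitzWith 1 g := LipschitzWith.of_dist_le_mul fun s t => by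
          simpa [Real.dist_eq] using h1 s t
        exact ⟨⟨g, hL.continuous⟩, ⟨hL, h2⟩, rfl⟩
    rw [himg]
    refine IsCompact.of_isClosed_subset
      (isCompact_pi_infinite (s := fun t : ℝ => Set.Icc (-(2 * R + |t|)) (2 * R + |t|))
        fun t => isCompact_Icc) ?_ ?_
    · have hset : {g : ℝ → ℝ | (∀ s t, |g s - g t| ≤ |s - t|) ∧ |g 0| ≤ 2 * R} =
          (⋂ s, ⋂ t, {g : ℝ → ℝ | |g s - g t| ≤ |s - t|}) ∩ {g : ℝ → ℝ | |g 0| ≤ 2 * R} := by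
        ext g
        simp
      rw [hset]
      refine IsClosed.inter (isClosed_iInter fun s => isClosed_iInter fun t => ?_) ?_
      · exact isClosed_le (by fun_prop) continuous_const
      · exact isClosed_le (by fun_prop) continuous_const
    · rintro g ⟨h1, h2⟩ t
      have h3 := h1 t 0
      rw [sub_zero] at h3
      have h4 : |g t| ≤ |g t - g 0| + |g 0| := by
        calc |g t| = |g t - g 0 + g 0| := by ring_nf
          _ ≤ _ := abs_add_le _ _
      exact abs_le.1 (by linarith)
  · exact (LipschitzWith.uniformEquicontinuous _ 1 fun g => g.2.1).equicontinuous

instance instSecondCountableCurve (R : ℝ) : SecondCountableTopology (Curve R) :=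
  TopologicalSpace.Subtype.secondCountableTopology _

theorem continuous_curve_eval (R : ℝ) : Continuous fun p : Curve R × ℝ => p.1.1 p.2 := by
  have : Continuous fun q : C(ℝ, ℝ) × ℝ => q.1 q.2 := ContinuousEval.continuous_eval
  exact this.comp (by fun_prop : Continuous fun p : Curve R × ℝ => (p.1.1, p.2))

/-- The point of the curve `g` with parameter `t`. -/
def curvePt (v : Plane) (k R : ℝ) (p : Curve R × ℝ) : Plane := pt v k p.2 (p.1.1 p.2)

theorem continuous_curvePt (v : Plane) (k R : ℝ) : Continuous (curvePt v k R) := by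
  have := continuous_curve_eval R
  unfold curvePt pt
  fun_prop

/-- The superposition, weighted by `Q`, of the images of Lebesgue measure on `[-R, R]` under the
parametrizations `t ↦ curvePt v k R (g, t)` of the curves. -/
def curveMeasure (v : Plane) (k : ℝ) {R : ℝ} (Q : Measure (Curve R)) : Measure Plane :=
  (Q.prod (volume.restrict (Set.Icc (-R) R))).map (curvePt v k R)

instance instFiniteCurveMeasure (v : Plane) (k : ℝ) {R : ℝ} (Q : Measure (Curve R))
    [IsFiniteMeasure Q] : IsFiniteMeasure (curveMeasure v k Q) := by
  unfold curveMeasure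
  infer_instance

/-- Integration of densities along the admissible curves. -/
def graphIntegral (v : Plane) (k R : ℝ) : BoundedContinuousFunction Plane ℝ →ₗ[ℝ] C(Curve R, ℝ) where
  toFun h := ⟨fun g => ∫ t in Set.Icc (-R) R, h (curvePt v k R (g, t)),
    continuous_parametric_integral_of_continuous
      (f := fun (g : Curve R) (t : ℝ) => h (curvePt v k R (g, t)))
      (h.continuous.comp (continuous_curvePt v k R)) isCompact_Icc⟩
  map_add' h h' := by
    ext g
    have hi : ∀ h : BoundedContinuousFunction Plane ℝ,
        IntegrableOn (fun t => h (curvePt v k R (g, t))) (Set.Icc (-R) R) := fun h =>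
      (h.continuous.comp ((continuous_curvePt v k R).comp
        (Continuous.prodMk_right g))).continuousOn.integrableOn_Icc
    exact integral_add (hi h) (hi h')
  map_smul' c h := by
    ext g
    exact integral_const_mul c _

theorem integral_graphIntegral (v : Plane) (k : ℝ) {R : ℝ} (Q : Measure (Curve R))
    [IsFiniteMeasure Q] (h : BoundedContinuousFunction Plane ℝ) :
    ∫ g, graphIntegral v k R h g ∂Q = ∫ y, h y ∂(curveMeasure v k Q) := by
  have hc := continuous_curvePt v k R
  unfold curveMeasure
  rw [integral_map hc.aemeasurable h.continuous.aestronglyMeasurable, integral_prod]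
  · rfl
  · refine Integrable.of_bound (C := ‖h‖)
      (h.continuous.comp hc).aestronglyMeasurable (Eventually.of_forall fun p => h.norm_coe_le_norm _)

/-- There is a superposition of admissible curves such that, on the closed sets which it does not
charge, the part of `|Du|` with direction in the cone `C(v,a)`, weighted by `φ²`, is controlled by
the part of `|Du|` with direction outside the cone, weighted by `φ`. -/
theorem IsBVScalarOn.exists_curve_superposition {Ω : Set Plane} {u : Plane → ℝ} {ν : Measure Plane}
    {σ : Plane → Plane} (hu : IsBVScalarOn Ω u ν σ) {v : Plane} (hv : ‖v‖ = 1)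
    {a a' k : ℝ} (ha' : 0 < a') (haa : a' < a) (hk : 0 < k)
    (hka : (k * a') ^ 2 = 1 - a' ^ 2)
    {φ : Plane → ℝ} (hφ : ContDiff ℝ 2 φ) (hφc : HasCompactSupport φ) (hφΩ : tsupport φ ⊆ Ω)
    (hφ0 : ∀ y, 0 ≤ φ y) (hφ1 : ∀ y, φ y ≤ 1)
    {R : ℝ} (hR : ∀ y ∈ Ω, |⟪y, perp v⟫| ≤ R ∧ |⟪y, v⟫| ≤ R * k) :
    ∃ Q : Measure (Curve R), IsFiniteMeasure Q ∧ ∀ F : Set Plane, IsClosed F →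
      curveMeasure v k Q F = 0 →
      (a - a') / 2 * ∫ y in {y | σ y ∈ cone v a} ∩ F, φ y ^ 2 ∂ν ≤
        (1 + 1 / k) * ∫ y in {y | σ y ∈ cone v a}ᶜ, φ y ∂ν := by
  have hνf : IsFiniteMeasure ν := ⟨hu.finite⟩
  obtain ⟨B, hB⟩ := (hφc.fderiv ℝ).exists_bound_of_continuous (hφ.continuous_fderiv (by norm_num))
  set A : Set Plane := {y | σ y ∈ cone v a} with hA
  have hAm : MeasurableSet A := measurableSet_cone_preimage hu.meas v a
  set η : ℝ := (1 + 1 / k) * ∫ y in Aᶜ, φ y ∂ν with hη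
  have hη0 : 0 ≤ η := mul_nonneg (by positivity) (integral_nonneg hφ0)
  have hc1 : 0 < (a - a') / 2 := by linarith
  have hi2 : ∀ h : BoundedContinuousFunction Plane ℝ, Integrable (fun y => φ y ^ 2 * h y) ν := by
    intro h
    refine Integrable.of_bound (C := 1 * ‖h‖)
      ((hφ.continuous.pow 2).mul h.continuous).aestronglyMeasurable
      (Eventually.of_forall fun y => ?_)
    rw [norm_mul]
    refine mul_le_mul ?_ (h.norm_coe_le_norm y) (norm_nonneg _) zero_le_one
    rw [Real.norm_eq_abs, abs_of_nonneg (sq_nonneg _)]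
    exact pow_le_one₀ (hφ0 y) (hφ1 y)
  let ℓ : BoundedContinuousFunction Plane ℝ →ₗ[ℝ] ℝ :=
    { toFun := fun h => (a - a') / 2 * ∫ y in A, φ y ^ 2 * h y ∂ν
      map_add' := by
        intro h h'
        rw [← mul_add, ← integral_add (hi2 h).integrableOn (hi2 h').integrableOn]
        simp only [BoundedContinuousFunction.add_apply, mul_add]
      map_smul' := by
        intro c h
        simp only [BoundedContinuousFunction.smul_apply, smul_eq_mul, RingHom.id_apply,
          mul_left_comm _ c]
        rw [integral_const_mul]
        ring }
  have hℓ : ∀ h, ℓ h = (a - a') / 2 * ∫ y in A, φ y ^ 2 * h y ∂ν := fun h => rfl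
  obtain ⟨Q, hQ, hQℓ⟩ := exists_dual_measure (graphIntegral v k R) ℓ (2 * B * ν.real Set.univ) η (by
    intro h b e h0 he hb0 he0 hb
    rcases he0.eq_or_lt with rfl | hepos
    · have hz : ∀ y, h y = 0 := fun y => le_antisymm (he y) (h0 y)
      rw [hℓ]
      simp only [hz, mul_zero, integral_zero, add_zero]
      have := (norm_nonneg _).trans (hB 0)
      positivity
    · have hkey := hu.cone_inequality hv ha' haa hk hka hφ hφc hφΩ hφ0 hφ1 hB hR
        (h := fun y => e⁻¹ * h y) (continuous_const.mul h.continuous)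
        (fun y => mul_nonneg (by positivity) (h0 y))
        (fun y => by rw [inv_mul_le_iff₀ hepos, mul_one]; exact he y) (ε := e⁻¹ * b)
        (by positivity) (by
          intro g hg hg0
          rw [integral_const_mul]
          exact mul_le_mul_of_nonneg_left (hb ⟨⟨g, hg.continuous⟩, hg, hg0⟩) (by positivity))
      have e1 : ∫ y in A, φ y ^ 2 * (e⁻¹ * h y) ∂ν = e⁻¹ * ∫ y in A, φ y ^ 2 * h y ∂ν := by
        rw [← integral_const_mul]
        congr 1 with y
        ring
      rw [e1] at hkey
      have h3 := mul_le_mul_of_nonneg_left hkey hepos.le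
      rw [hℓ]
      have e2 : e * ((a - a') / 2 * (e⁻¹ * ∫ y in A, φ y ^ 2 * h y ∂ν)) =
          (a - a') / 2 * ∫ y in A, φ y ^ 2 * h y ∂ν := by field_simp
      have e3 : e * (η + e⁻¹ * b * (2 * B) * ν.real Set.univ) =
          2 * B * ν.real Set.univ * b + η * e := by field_simp; ring
      rw [e2, e3] at h3
      exact h3)
  refine ⟨Q, hQ, fun F hF hF0 => ?_⟩
  have hδ0 : ∀ n : ℕ, (0 : ℝ) < 1 / ((n : ℝ) + 1) := fun n => by positivity
  have hlim := tendsto_integral_thickenedIndicator_of_isClosed (curveMeasure v k Q) hF hδ0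
    tendsto_one_div_add_atTop_nhds_zero_nat
  rw [measureReal_def, hF0, ENNReal.toReal_zero] at hlim
  have hlim' := hlim.add_const η
  rw [zero_add] at hlim'
  refine ge_of_tendsto' hlim' fun n => ?_
  let hn : BoundedContinuousFunction Plane ℝ := BoundedContinuousFunction.ofNormedAddCommGroup
    (fun y => (thickenedIndicator (hδ0 n) F y : ℝ))
    (NNReal.continuous_coe.comp (thickenedIndicator (hδ0 n) F).continuous) 1 (by
      intro y
      rw [Real.norm_eq_abs, abs_of_nonneg (NNReal.coe_nonneg _)]
      exact_mod_cast thickenedIndicator_le_one (hδ0 n) F y)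
  have hn1 : ∀ y, hn y ≤ 1 := by
    intro y
    have h : thickenedIndicator (hδ0 n) F y ≤ 1 := thickenedIndicator_le_one (hδ0 n) F y
    exact NNReal.coe_le_one.2 h
  have h1 := hQℓ hn (fun y => NNReal.coe_nonneg _) hn1
  rw [integral_graphIntegral] at h1
  refine le_trans ?_ h1
  rw [hℓ]
  refine mul_le_mul_of_nonneg_left ?_ hc1.le
  rw [← setIntegral_indicator hF.measurableSet]
  refine integral_mono_of_nonneg (Eventually.of_forall fun y =>
    Set.indicator_nonneg (fun _ _ => sq_nonneg _) y) (hi2 hn).integrableOn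
    (Eventually.of_forall fun y => ?_)
  by_cases hy : y ∈ F
  · have : hn y = 1 := by
      show ((thickenedIndicator (hδ0 n) F y : NNReal) : ℝ) = 1
      rw [thickenedIndicator_one (hδ0 n) F hy]; rfl
    simp [hy, this]
  · simp only [Set.indicator_of_notMem hy]
    exact mul_nonneg (sq_nonneg _) (NNReal.coe_nonneg _)

/-! ### Absolute continuity with respect to a superposition of curves -/

theorem exists_plane_cutoff {K U : Set Plane} (hK : IsCompact K) (hU : IsOpen U) (hKU : K ⊆ U) :
    ∃ φ : Plane → ℝ, ContDiff ℝ 2 φ ∧ HasCompactSupport φ ∧ tsupport φ ⊆ U ∧ (∀ y, 0 ≤ φ y) ∧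
      (∀ y, φ y ≤ 1) ∧ ∀ y ∈ K, φ y = 1 := by
  obtain ⟨L, hL, hKL, hLU⟩ := exists_compact_between hK hU hKU
  obtain ⟨f, hf0, hf1, hf⟩ := exists_contMDiffMap_zero_one_of_isClosed
    (modelWithCornersSelf ℝ Plane) (n := 2) (isOpen_interior (s := L)).isClosed_compl hK.isClosed
    (Set.disjoint_left.2 fun y hy hyK => hy (hKL hyK))
  have hsupp : tsupport f ⊆ L := by
    refine closure_minimal (fun y hy => ?_) hL.isClosed
    by_contra hyL
    exact hy (hf0 fun h => hyL (interior_subset h))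
  exact ⟨f, f.contMDiff.contDiff, hL.of_isClosed_subset (isClosed_tsupport _) hsupp,
    hsupp.trans hLU, fun y => (hf y).1, fun y => (hf y).2, fun y hy => hf1 hy⟩

theorem curveMeasure_absolutelyContinuous (v : Plane) (k : ℝ) {R : ℝ} {Q Q' : Measure (Curve R)}
    (h : Q ≪ Q') : curveMeasure v k Q ≪ curveMeasure v k Q' :=
  (h.prod Measure.AbsolutelyContinuous.rfl).map (continuous_curvePt v k R).measurable

/-- The part of `|Du|` with direction in the cone `C(v,a)` is absolutely continuous with respect to
a superposition of admissible curves, whose normals lie in the larger cone `C(v,a')`. The cut-offs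
`φ` concentrate near compact sets exhausting the cone part, so that the error caused by directions
outside the cone tends to zero; the countably many superpositions obtained are added up. -/
theorem IsBVScalarOn.absolutelyContinuous_curveMeasure {Ω : Set Plane} (hΩ : IsOpen Ω)
    {u : Plane → ℝ} {ν : Measure Plane}
    {σ : Plane → Plane} (hu : IsBVScalarOn Ω u ν σ) {v : Plane} (hv : ‖v‖ = 1)
    {a a' k : ℝ} (ha' : 0 < a') (haa : a' < a) (hk : 0 < k)
    (hka : (k * a') ^ 2 = 1 - a' ^ 2)
    {R : ℝ} (hR : ∀ y ∈ Ω, |⟪y, perp v⟫| ≤ R ∧ |⟪y, v⟫| ≤ R * k) :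
    ∃ Q : Measure (Curve R), IsFiniteMeasure Q ∧
      ν.restrict {y ∈ Ω | σ y ∈ cone v a} ≪ curveMeasure v k Q := by
  have hνf : IsFiniteMeasure ν := ⟨hu.finite⟩
  set A : Set Plane := {y | σ y ∈ cone v a} with hA
  have hAm : MeasurableSet A := measurableSet_cone_preimage hu.meas v a
  have hAΩ : {y ∈ Ω | σ y ∈ cone v a} = Ω ∩ A := rfl
  rw [hAΩ]
  have hAΩm : MeasurableSet (Ω ∩ A) := hΩ.measurableSet.inter hAm
  set c1 : ℝ := (a - a') / 2
  have hc1 : 0 < c1 := by simp only [c1]; linarith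
  set C : ℝ := 1 + 1 / k
  have hC : 0 < C := by positivity
  have hstep : ∀ ε : ℝ, 0 < ε → ∃ Q : Measure (Curve R), IsFiniteMeasure Q ∧ ∀ F : Set Plane,
      IsClosed F → curveMeasure v k Q F = 0 → ν.real (Ω ∩ A ∩ F) ≤ (C / c1 + 1) * ε := by
    intro ε hε
    have hε' : ENNReal.ofReal ε ≠ 0 := by simpa using hε
    obtain ⟨K, hKA, hK, hKε⟩ := hAΩm.exists_isCompact_sdiff_lt (measure_ne_top ν _) hε'
    obtain ⟨U, hKU, hU, hUε⟩ := hK.exists_isOpen_lt_add (μ := ν) hε'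
    obtain ⟨φ, hφ, hφc, hφU, hφ0, hφ1, hφK⟩ := exists_plane_cutoff hK (hU.inter hΩ)
      (Set.subset_inter hKU (hKA.trans Set.inter_subset_left))
    obtain ⟨Q, hQ, hQF⟩ := hu.exists_curve_superposition hv ha' haa hk hka hφ hφc
      (hφU.trans Set.inter_subset_right) hφ0 hφ1 hR
    refine ⟨Q, hQ, fun F hF hF0 => ?_⟩
    have h1 : c1 * ∫ y in A ∩ F, φ y ^ 2 ∂ν ≤ C * ∫ y in Aᶜ, φ y ∂ν := hQF F hF hF0
    have hUK : ν.real (U \ K) ≤ ε := by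
      rw [measureReal_sdiff hKU hK.measurableSet]
      have := ENNReal.toReal_mono (by finiteness) hUε.le
      rw [ENNReal.toReal_add (by finiteness) (by finiteness), ENNReal.toReal_ofReal hε.le] at this
      rw [measureReal_def, measureReal_def]
      linarith
    have hAK : ν.real ((Ω ∩ A) \ K) ≤ ε := by
      have := ENNReal.toReal_mono (by finiteness) hKε.le
      rwa [ENNReal.toReal_ofReal hε.le] at this
    have h2 : ∫ y in Aᶜ, φ y ∂ν ≤ ε := by
      refine le_trans ?_ hUK
      rw [← integral_indicator hAm.compl, ← integral_indicator_one
        (hU.measurableSet.diff hK.measurableSet)]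
      refine integral_mono_of_nonneg
        (Eventually.of_forall fun y => Set.indicator_nonneg (fun y _ => hφ0 y) y)
        ((integrable_const (1:ℝ)).indicator (hU.measurableSet.diff hK.measurableSet))
        (Eventually.of_forall fun y => ?_)
      by_cases hyA : y ∈ A
      · simp only [Set.indicator_of_notMem (Set.notMem_compl_iff.2 hyA)]
        exact Set.indicator_nonneg (fun _ _ => zero_le_one) y
      · simp only [Set.indicator_of_mem (Set.mem_compl hyA)]
        by_cases hyU : y ∈ U
        · rw [Set.indicator_of_mem (show y ∈ U \ K from ⟨hyU, fun hyK => hyA (hKA hyK).2⟩)]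
          exact hφ1 y
        · have : φ y = 0 := by
            by_contra hne
            exact hyU (hφU (subset_tsupport _ hne)).1
          rw [this]
          exact Set.indicator_nonneg (fun _ _ => zero_le_one) y
    have h3 : ν.real (K ∩ F) ≤ ∫ y in A ∩ F, φ y ^ 2 ∂ν := by
      rw [← integral_indicator_one (hK.measurableSet.inter hF.measurableSet),
        ← integral_indicator (hAm.inter hF.measurableSet)]
      refine integral_mono_of_nonneg
        (Eventually.of_forall fun y => Set.indicator_nonneg (fun _ _ => zero_le_one) y) ?_
        (Eventually.of_forall fun y => ?_)
      · refine Integrable.indicator ?_ (hAm.inter hF.measurableSet)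
        refine Integrable.of_bound (C := 1) (hφ.continuous.pow 2).aestronglyMeasurable
          (Eventually.of_forall fun y => ?_)
        rw [Real.norm_eq_abs, abs_of_nonneg (sq_nonneg _)]
        exact pow_le_one₀ (hφ0 y) (hφ1 y)
      · by_cases hy : y ∈ K ∩ F
        · have hy' : y ∈ A ∩ F := ⟨(hKA hy.1).2, hy.2⟩
          simp [Set.indicator_of_mem hy, Set.indicator_of_mem hy', hφK y hy.1]
        · simp only [Set.indicator_of_notMem hy]
          exact Set.indicator_nonneg (fun y _ => sq_nonneg (φ y)) y
    have h4 : ν.real (Ω ∩ A ∩ F) ≤ ν.real (K ∩ F) + ν.real ((Ω ∩ A) \ K) := by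
      refine (measureReal_mono ?_ (by finiteness)).trans (measureReal_union_le _ _)
      rintro y ⟨hy, hyF⟩
      by_cases hyK : y ∈ K
      · exact Or.inl ⟨hyK, hyF⟩
      · exact Or.inr ⟨hy, hyK⟩
    have h5 : ∫ y in A ∩ F, φ y ^ 2 ∂ν ≤ C / c1 * ε := by
      rw [div_mul_eq_mul_div, le_div_iff₀ hc1, mul_comm]
      exact h1.trans (mul_le_mul_of_nonneg_left h2 hC.le)
    linarith
  choose Q hQ hQF using fun n : ℕ => hstep (1 / ((n : ℝ) + 1)) (by positivity)
  refine ⟨(Measure.sum Q).toFinite, inferInstance, ?_⟩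
  have hac : ∀ n, curveMeasure v k (Q n) ≪ curveMeasure v k (Measure.sum Q).toFinite := fun n =>
    curveMeasure_absolutelyContinuous v k
      ((Measure.absolutelyContinuous_of_le (Measure.le_sum Q n)).trans
        (absolutelyContinuous_toFinite _))
  have hclosed : ∀ F : Set Plane, IsClosed F →
      curveMeasure v k (Measure.sum Q).toFinite F = 0 → ν (Ω ∩ A ∩ F) = 0 := by
    intro F hF hF0
    have hle : ∀ n : ℕ, ν.real (Ω ∩ A ∩ F) ≤ (C / c1 + 1) * (1 / ((n : ℝ) + 1)) := fun n =>
      hQF n F hF (hac n hF0)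
    have hlim := (tendsto_one_div_add_atTop_nhds_zero_nat (𝕜 := ℝ)).const_mul (C / c1 + 1)
    rw [mul_zero] at hlim
    have := ge_of_tendsto' hlim hle
    exact (measureReal_eq_zero_iff (by finiteness)).1 (le_antisymm this measureReal_nonneg)
  refine Measure.AbsolutelyContinuous.mk fun Z hZ hZ0 => ?_
  rw [hZ.measure_eq_iSup_isCompact_of_ne_top (measure_ne_top _ _)]
  simp only [ENNReal.iSup_eq_zero]
  intro K hKZ hK
  rw [Measure.restrict_apply hK.measurableSet, Set.inter_comm]
  exact hclosed K hK.isClosed (measure_mono_null hKZ hZ0)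

/-! ### Green's formula on epigraphs -/

theorem isometry_graph_shift {g : ℝ → ℝ} (hg : LipschitzWith 1 g) (s : ℝ) :
    Isometry fun t : ℝ => (t, s + g t) := by
  refine Isometry.of_dist_eq fun t t' => ?_
  rw [Prod.dist_eq]
  refine max_eq_left ?_
  have := hg.dist_le_mul t t'
  simpa [Real.dist_eq] using this

theorem isometry_vertical (t c : ℝ) : Isometry fun s : ℝ => (t, s + c) := by
  refine Isometry.of_dist_eq fun s s' => ?_
  rw [Prod.dist_eq]
  simp

/-- The shear `(t, s) ↦ (t, s + g t)`, which maps the upper half plane to the epigraph of `g`. -/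
def shear (g : ℝ → ℝ) (hg : Continuous g) : (ℝ × ℝ) ≃ₜ (ℝ × ℝ) where
  toFun p := (p.1, p.2 + g p.1)
  invFun p := (p.1, p.2 - g p.1)
  left_inv p := by simp
  right_inv p := by simp
  continuous_toFun := by fun_prop
  continuous_invFun := by fun_prop

theorem measurePreserving_shear (g : ℝ → ℝ) (hg : Continuous g) :
    MeasurePreserving (shear g hg) volume volume := by
  have := MeasurePreserving.skew_product (μa := (volume : Measure ℝ)) (μc := (volume : Measure ℝ))
    (μb := (volume : Measure ℝ)) (μd := (volume : Measure ℝ))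
    (MeasurePreserving.id (volume : Measure ℝ))
    (g := fun t s => s + g t) (by fun_prop)
    (Eventually.of_forall fun t => (measurePreserving_add_right (volume : Measure ℝ) (g t)).map_eq)
  exact this

theorem restrict_upper_half_plane :
    (volume : Measure (ℝ × ℝ)).restrict {z | 0 < z.2} =
      (volume : Measure ℝ).prod ((volume : Measure ℝ).restrict (Set.Ioi 0)) := by
  have h1 : {z : ℝ × ℝ | 0 < z.2} = Set.univ ×ˢ Set.Ioi 0 := by ext; simp
  rw [h1, Measure.volume_eq_prod, ← Measure.prod_restrict, Measure.restrict_univ]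

theorem setIntegral_epigraph {g : ℝ → ℝ} (hg : Continuous g) (f : ℝ × ℝ → ℝ) :
    ∫ z in {z : ℝ × ℝ | g z.1 < z.2}, f z =
      ∫ p, f (p.1, p.2 + g p.1)
        ∂((volume : Measure ℝ).prod ((volume : Measure ℝ).restrict (Set.Ioi 0))) := by
  have h := (measurePreserving_shear g hg).setIntegral_preimage_emb
    (shear g hg).measurableEmbedding f {z : ℝ × ℝ | g z.1 < z.2}
  have hpre : shear g hg ⁻¹' {z : ℝ × ℝ | g z.1 < z.2} = {z | 0 < z.2} := by
    ext z
    simp [shear]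
  rw [hpre, restrict_upper_half_plane] at h
  exact h.symm

theorem integrable_shear {g : ℝ → ℝ} (hg : Continuous g) {f : ℝ × ℝ → ℝ} (hf : Continuous f)
    (hfc : HasCompactSupport f) :
    Integrable (fun p : ℝ × ℝ => f (p.1, p.2 + g p.1))
      ((volume : Measure ℝ).prod ((volume : Measure ℝ).restrict (Set.Ioi 0))) := by
  rw [← restrict_upper_half_plane]
  have h1 : Continuous (f ∘ shear g hg) := hf.comp (shear g hg).continuous
  exact (h1.integrable_of_hasCompactSupport (hfc.comp_homeomorph (shear g hg))).integrableOn

theorem integral_Ioi_vertical {Φ : ℝ × ℝ → ℝ} (hΦ : ContDiff ℝ 1 Φ) (hΦc : HasCompactSupport Φ)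
    (t c : ℝ) : ∫ s in Set.Ioi 0, fderiv ℝ Φ (t, s + c) (0, 1) = - Φ (t, c) := by
  have h := HasCompactSupport.integral_Ioi_deriv_eq (f := fun s => Φ (t, s + c))
    (hΦ.comp (by fun_prop)) (hΦc.comp_isClosedEmbedding (isometry_vertical t c).isClosedEmbedding) 0
  rw [zero_add] at h
  rw [← h]
  congr 1 with s
  have h1 : HasFDerivAt Φ (fderiv ℝ Φ (t, s + c)) (t, s + c) :=
    ((hΦ.differentiable (by norm_num)) _).hasFDerivAt
  have h2 : HasDerivAt (fun s : ℝ => (t, s + c)) ((0 : ℝ), (1 : ℝ)) s :=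
    (hasDerivAt_const s t).prodMk ((hasDerivAt_id s).add_const c)
  exact (h1.comp_hasDerivAt s h2).deriv.symm

theorem integral_deriv_of_lipschitz {ζ : ℝ → ℝ} {C : NNReal} (hζ : LipschitzWith C ζ)
    (hc : HasCompactSupport ζ) : ∫ t, deriv ζ t = 0 := by
  have h := LipschitzWith.integral_lineDeriv_mul_eq (μ := (volume : Measure ℝ))
    (LipschitzWith.const (1 : ℝ) : LipschitzWith 0 fun _ : ℝ => (1 : ℝ)) hζ hc (-1)
  simpa [lineDeriv, deriv_comp_const_add] using h.symm

/-- Green's formula on the epigraph of a Lipschitz function, vertical component. -/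
theorem setIntegral_epigraph_snd {g : ℝ → ℝ} (hg : LipschitzWith 1 g) {Φ : ℝ × ℝ → ℝ}
    (hΦ : ContDiff ℝ 1 Φ) (hΦc : HasCompactSupport Φ) :
    ∫ z in {z : ℝ × ℝ | g z.1 < z.2}, fderiv ℝ Φ z (0, 1) = - ∫ t, Φ (t, g t) := by
  have hc : Continuous fun z => fderiv ℝ Φ z (0, 1) :=
    (hΦ.continuous_fderiv (by norm_num)).clm_apply continuous_const
  rw [setIntegral_epigraph hg.continuous, integral_prod _
    (integrable_shear hg.continuous hc (hΦc.fderiv_apply ℝ _)), ← integral_neg]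
  congr 1 with t
  exact integral_Ioi_vertical hΦ hΦc t (g t)

/-- Green's formula on the epigraph of a Lipschitz function, horizontal component. -/
theorem setIntegral_epigraph_fst {g : ℝ → ℝ} (hg : LipschitzWith 1 g) {Φ : ℝ × ℝ → ℝ}
    (hΦ : ContDiff ℝ 1 Φ) (hΦc : HasCompactSupport Φ) :
    ∫ z in {z : ℝ × ℝ | g z.1 < z.2}, fderiv ℝ Φ z (1, 0) = ∫ t, Φ (t, g t) * deriv g t := by
  have hc1 : Continuous fun z => fderiv ℝ Φ z (1, 0) :=
    (hΦ.continuous_fderiv (by norm_num)).clm_apply continuous_const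
  have hc2 : Continuous fun z => fderiv ℝ Φ z (0, 1) :=
    (hΦ.continuous_fderiv (by norm_num)).clm_apply continuous_const
  have hi1 := integrable_shear hg.continuous hc1 (hΦc.fderiv_apply ℝ _)
  have hi2 := integrable_shear hg.continuous hc2 (hΦc.fderiv_apply ℝ _)
  have hi3 : Integrable (fun p : ℝ × ℝ => fderiv ℝ Φ (p.1, p.2 + g p.1) (0, 1) * deriv g p.1)
      ((volume : Measure ℝ).prod ((volume : Measure ℝ).restrict (Set.Ioi 0))) := by
    refine hi2.mul_bdd (c := 1) ?_ (Eventually.of_forall fun p => ?_)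
    · exact ((measurable_deriv g).comp measurable_fst).aestronglyMeasurable
    · simpa using norm_deriv_le_of_lipschitz hg (x₀ := p.1)
  obtain ⟨D, hD⟩ := ContDiff.lipschitzWith_of_hasCompactSupport hΦc hΦ (by norm_num)
  -- On each translated graph the total derivative of `Φ` along the curve integrates to zero.
  have hline : ∀ s, ∫ t, fderiv ℝ Φ (t, s + g t) (1, 0) =
      - ∫ t, fderiv ℝ Φ (t, s + g t) (0, 1) * deriv g t := by
    intro s
    have hiso := isometry_graph_shift hg s
    have hsupp : ∀ {f : ℝ × ℝ → ℝ}, HasCompactSupport f →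
        HasCompactSupport fun t => f (t, s + g t) := fun hf =>
      hf.comp_isClosedEmbedding hiso.isClosedEmbedding
    have h0 := integral_deriv_of_lipschitz (hD.comp hiso.lipschitz) (hsupp hΦc)
    have hd : ∀ᵐ t, deriv (Φ ∘ fun t => (t, s + g t)) t =
        fderiv ℝ Φ (t, s + g t) (1, 0) + fderiv ℝ Φ (t, s + g t) (0, 1) * deriv g t := by
      filter_upwards [hg.ae_differentiableAt_real] with t ht
      have h1 : HasFDerivAt Φ (fderiv ℝ Φ (t, s + g t)) (t, s + g t) :=
        ((hΦ.differentiable (by norm_num)) _).hasFDerivAt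
      have h2 : HasDerivAt (fun t : ℝ => (t, s + g t)) ((1 : ℝ), deriv g t) t :=
        (hasDerivAt_id t).prodMk (ht.hasDerivAt.const_add s)
      rw [(h1.comp_hasDerivAt t h2).deriv]
      have h3 : ((1 : ℝ), deriv g t) = (1, 0) + deriv g t • ((0 : ℝ), (1 : ℝ)) := by simp
      rw [h3, map_add, map_smul, smul_eq_mul, mul_comm]
    rw [integral_congr_ae hd, integral_add] at h0
    · linarith
    · exact (hc1.comp hiso.continuous).integrable_of_hasCompactSupport
        (hsupp (hΦc.fderiv_apply ℝ _))
    · refine Integrable.mul_bdd (c := 1) ((hc2.comp hiso.continuous).integrable_of_hasCompactSupport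
        (hsupp (hΦc.fderiv_apply ℝ _))) (measurable_deriv g).aestronglyMeasurable
        (Eventually.of_forall fun t => ?_)
      simpa using norm_deriv_le_of_lipschitz hg (x₀ := t)
  rw [setIntegral_epigraph hg.continuous, integral_prod_symm _ hi1]
  simp only [hline]
  rw [integral_neg, ← integral_prod_symm (fun p : ℝ × ℝ =>
    fderiv ℝ Φ (p.1, p.2 + g p.1) (0, 1) * deriv g p.1) hi3, integral_prod _ hi3, ← integral_neg]
  congr 1 with t
  simp only
  rw [integral_mul_const, integral_Ioi_vertical hΦ hΦc]
  ring

/-! ### Affine coordinates and conditional averages -/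

/-- The linear coordinates `(t, s)` of the plane, with `(t, s) ↦ pt v k t s`. -/
def graphChart (v : Plane) (hv : ‖v‖ = 1) (k : ℝ) (hk : 0 < k) : (ℝ × ℝ) ≃L[ℝ] Plane :=
  ContinuousLinearEquiv.equivOfInverse
    ((ContinuousLinearMap.fst ℝ ℝ ℝ).smulRight (perp v) +
      (ContinuousLinearMap.snd ℝ ℝ ℝ).smulRight (k • v))
    ((innerSL ℝ (perp v)).prod (k⁻¹ • innerSL ℝ v))
    (by
      have e := sq_add_sq_of_unit hv
      rintro ⟨a, b⟩
      ext
      · simp [inner_plane, perp]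
        linear_combination a * e
      · simp [inner_plane, perp]
        field_simp
        linear_combination (b * k) * e)
    (by
      have e := sq_add_sq_of_unit hv
      intro y
      ext i
      fin_cases i
      · simp [inner_plane, perp]
        field_simp
        linear_combination (y 0) * e
      · simp [inner_plane, perp]
        field_simp
        linear_combination (y 1) * e)

theorem graphChart_apply (v : Plane) (hv : ‖v‖ = 1) (k : ℝ) (hk : 0 < k) (z : ℝ × ℝ) :
    graphChart v hv k hk z = pt v k z.1 z.2 := by
  have : graphChart v hv k hk z = z.1 • perp v + z.2 • (k • v) := rfl
  rw [this, pt, smul_smul]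

/-- The coordinates `(t, s)` change Lebesgue measure by a constant factor. -/
theorem exists_chart_constant (v : Plane) (hv : ‖v‖ = 1) (k : ℝ) (hk : 0 < k) :
    ∃ c : ℝ, 0 < c ∧ ∀ (S : Set Plane) (f : Plane → ℝ), MeasurableSet S → ∫ y in S, f y =
      c * ∫ z in (fun z : ℝ × ℝ => pt v k z.1 z.2) ⁻¹' S, f (pt v k z.1 z.2) := by
  let T := graphChart v hv k hk
  have hTm : (Measure.map T (volume : Measure (ℝ × ℝ))).IsAddHaarMeasure :=
    T.isAddHaarMeasure_map volume
  let μ' : Measure Plane := Measure.map T (volume : Measure (ℝ × ℝ))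
  have hμ' : μ'.IsAddHaarMeasure := hTm
  have h1 := Measure.isAddLeftInvariant_eq_smul (volume : Measure Plane) μ'
  refine ⟨(volume : Measure Plane).addHaarScalarFactor μ', ?_, ?_⟩
  · exact_mod_cast Measure.addHaarScalarFactor_pos_of_isAddHaarMeasure (volume : Measure Plane) μ'
  · intro S f hS
    conv_lhs => rw [h1]
    rw [Measure.restrict_smul, integral_smul_nnreal_measure]
    have h2 := (T.toHomeomorph.measurableEmbedding).setIntegral_map (μ := volume) f S
    have h3 : ∫ y in S, f y ∂μ' = ∫ z in T ⁻¹' S, f (T z) := h2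
    rw [h3]
    simp only [T, graphChart_apply]
    have h4 : (graphChart v hv k hk : ℝ × ℝ → Plane) = fun z => pt v k z.1 z.2 :=
      funext fun z => graphChart_apply v hv k hk z
    rw [h4]
    rfl

/-- The conditional average `ω` of `γ` on the fibres of `Γ`, which has the same bound as `γ`. -/
theorem exists_fibre_average {Y Z : Type*} {mY : MeasurableSpace Y} {mZ : MeasurableSpace Z} (M : Measure Y)
    [IsFiniteMeasure M] {Γ : Y → Z} (hΓ : Measurable Γ) {γ : Y → ℝ} (hγ : Measurable γ)
    (hγ1 : ∀ y, |γ y| ≤ 1) :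
    ∃ ω : Z → ℝ, Measurable ω ∧ (∀ z, |ω z| ≤ 1) ∧ ∀ φ : Z → ℝ, Measurable φ →
      (∃ B, ∀ z, |φ z| ≤ B) → ∫ y, φ (Γ y) * γ y ∂M = ∫ z, φ z * ω z ∂(M.map Γ) := by
  set m : MeasurableSpace Y := mZ.comap Γ with hmdef
  have hm : m ≤ mY := hΓ.comap_le
  have hγi : Integrable γ M := Integrable.of_bound (C := 1) hγ.aestronglyMeasurable
    (Eventually.of_forall hγ1)
  have hE : Measurable[m] (M[γ|m]) := stronglyMeasurable_condExp.measurable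
  obtain ⟨ω0, hω0, hω0E⟩ := hE.exists_eq_measurable_comp
  have hb : ∀ᵐ y ∂M, |M[γ|m] y| ≤ 1 := ae_bdd_abs_condExp_of_ae_bdd_abs (Eventually.of_forall hγ1)
  refine ⟨fun z => max (-1) (min 1 (ω0 z)), by fun_prop, ?_, ?_⟩
  · intro z
    rw [abs_le]
    exact ⟨le_max_left _ _, max_le (by norm_num) (min_le_left _ _)⟩
  · rintro φ hφ ⟨B, hB⟩
    have hφΓ : StronglyMeasurable[m] (φ ∘ Γ) :=
      (hφ.comp (comap_measurable Γ)).stronglyMeasurable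
    have hprod : Integrable ((φ ∘ Γ) * γ) M :=
      hγi.bdd_mul (c := B) (hφ.comp hΓ).aestronglyMeasurable (Eventually.of_forall fun y => hB _)
    have h1 := condExp_mul_of_stronglyMeasurable_left hφΓ hprod hγi
    have h2 := integral_condExp hm (μ := M) (f := (φ ∘ Γ) * γ)
    have h3 : ∫ y, φ (Γ y) * γ y ∂M = ∫ y, ((φ ∘ Γ) * γ) y ∂M := rfl
    rw [h3, ← h2, integral_map hΓ.aemeasurable (by fun_prop)]
    refine integral_congr_ae ?_
    filter_upwards [h1, hb] with y hy hby
    rw [hy]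
    have h4 : M[γ|m] y = ω0 (Γ y) := congrFun hω0E y
    rw [h4, abs_le] at hby
    rw [Pi.mul_apply, h4, min_eq_right hby.2, max_eq_right hby.1]
    rfl

/-! ### The superposition of epigraphs -/

/-- The side of the curve `g` towards which `v` points. -/
def epigraph (v : Plane) (k : ℝ) (g : ℝ → ℝ) : Set Plane :=
  {y | g ⟪y, perp v⟫ < ⟪y, v⟫ / k}

/-- The superposition of the indicator functions of the epigraphs of all curves, weighted by `Q`. -/
def superposition (v : Plane) (k : ℝ) {R : ℝ} (Q : Measure (Curve R)) (y : Plane) : ℝ :=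
  Q.real {g : Curve R | y ∈ epigraph v k g.1}

theorem measurableSet_epigraph (v : Plane) (k : ℝ) {g : ℝ → ℝ} (hg : Continuous g) :
    MeasurableSet (epigraph v k g) :=
  (isOpen_lt (by fun_prop) (by fun_prop)).measurableSet

theorem measurableSet_epigraph_prod (v : Plane) (k R : ℝ) :
    MeasurableSet {p : Plane × Curve R | p.1 ∈ epigraph v k p.2.1} := by
  refine (isOpen_lt (f := fun p : Plane × Curve R => p.2.1 ⟪p.1, perp v⟫)
    (g := fun p => ⟪p.1, v⟫ / k) ?_ (by fun_prop)).measurableSet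
  exact (continuous_curve_eval R).comp
    (g := fun p : Curve R × ℝ => p.1.1 p.2)
    (f := fun p : Plane × Curve R => (p.2, ⟪p.1, perp v⟫)) (by fun_prop)

theorem measurable_superposition (v : Plane) (k : ℝ) {R : ℝ} (Q : Measure (Curve R))
    [IsFiniteMeasure Q] : Measurable (superposition v k Q) :=
  (measurable_measure_prodMk_left (measurableSet_epigraph_prod v k R)).ennreal_toReal

theorem abs_superposition_le (v : Plane) (k : ℝ) {R : ℝ} (Q : Measure (Curve R))
    [IsFiniteMeasure Q] (y : Plane) : |superposition v k Q y| ≤ Q.real Set.univ := by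
  rw [superposition, abs_of_nonneg measureReal_nonneg]
  exact measureReal_mono (Set.subset_univ _)

/-- Fubini's theorem for `superposition`. -/
theorem integral_superposition_mul (v : Plane) (k : ℝ) {R : ℝ} (Q : Measure (Curve R))
    [IsFiniteMeasure Q] {F : Plane → ℝ} (hF : Integrable F) :
    ∫ y, superposition v k Q y * F y = ∫ g : Curve R, ∫ y in epigraph v k g.1, F y ∂volume ∂Q := by
  have hE := measurableSet_epigraph_prod v k R
  have hi : Integrable ({p : Plane × Curve R | p.1 ∈ epigraph v k p.2.1}.indicator
      fun p => F p.1) (volume.prod Q) := (hF.comp_fst Q).indicator hE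
  have hsw := integral_integral_swap (f := fun (y : Plane) (g : Curve R) =>
    {p : Plane × Curve R | p.1 ∈ epigraph v k p.2.1}.indicator (fun p => F p.1) (y, g)) hi
  calc _ = ∫ y, ∫ g, {p : Plane × Curve R | p.1 ∈ epigraph v k p.2.1}.indicator
        (fun p => F p.1) (y, g) ∂Q := by
        refine integral_congr_ae (Eventually.of_forall fun y => ?_)
        have hm : MeasurableSet {g : Curve R | y ∈ epigraph v k g.1} :=
          measurable_prodMk_left hE
        have := integral_indicator_const (μ := Q) (F y) hm
        rw [smul_eq_mul] at this
        exact this.symm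
    _ = _ := hsw
    _ = _ := by
        refine integral_congr_ae (Eventually.of_forall fun g => ?_)
        exact integral_indicator (measurableSet_epigraph v k g.1.continuous)

/-- Green's formula on an epigraph: the indicator function has distributional derivative carried by the
graph, with components `c / k` along `v` and `-c g'` along `perp v`. -/
theorem setIntegral_epigraph_plane {v : Plane} (hv : ‖v‖ = 1) {k c : ℝ} (hk : 0 < k)
    (hc : ∀ (S : Set Plane) (f : Plane → ℝ), MeasurableSet S → ∫ y in S, f y =
      c * ∫ z in (fun z : ℝ × ℝ => pt v k z.1 z.2) ⁻¹' S, f (pt v k z.1 z.2))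
    {g : ℝ → ℝ} (hg : LipschitzWith 1 g) {φ : Plane → ℝ} (hφ : ContDiff ℝ 1 φ)
    (hφc : HasCompactSupport φ) :
    ∫ y in epigraph v k g, fderiv ℝ φ y v = -(c / k) * ∫ t, φ (pt v k t (g t)) ∧
    ∫ y in epigraph v k g, fderiv ℝ φ y (perp v) = c * ∫ t, φ (pt v k t (g t)) * deriv g t := by
  have hpre : (fun z : ℝ × ℝ => pt v k z.1 z.2) ⁻¹' epigraph v k g = {z | g z.1 < z.2} := by
    ext z
    simp only [epigraph, Set.mem_preimage, Set.mem_ofPred_eq, inner_perp_pt hv, inner_pt hv]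
    rw [mul_div_cancel_right₀ _ hk.ne']
  set T := graphChart v hv k hk with hT
  have hTz : ∀ z, T z = pt v k z.1 z.2 := graphChart_apply v hv k hk
  have hΦ : ContDiff ℝ 1 (φ ∘ T) := hφ.comp T.contDiff
  have hΦc : HasCompactSupport (φ ∘ T) := hφc.comp_homeomorph T.toHomeomorph
  have hd : ∀ z e, fderiv ℝ (φ ∘ T) z e = fderiv ℝ φ (pt v k z.1 z.2) (T e) := by
    intro z e
    rw [fderiv_comp z (hφ.differentiable one_ne_zero _) T.differentiableAt, ← hTz]
    rw [T.fderiv]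
    rfl
  have h1 := setIntegral_epigraph_snd hg hΦ hΦc
  have h2 := setIntegral_epigraph_fst hg hΦ hΦc
  have hT1 : T (0, 1) = k • v := by rw [hTz]; simp [pt]
  have hT2 : T (1, 0) = perp v := by rw [hTz]; simp [pt]
  simp only [hd, hT1, hT2, map_smul, smul_eq_mul, Function.comp, hTz] at h1 h2
  rw [integral_const_mul] at h1
  rw [hc _ _ (measurableSet_epigraph v k hg.continuous),
    hc _ _ (measurableSet_epigraph v k hg.continuous), hpre, h2]
  refine ⟨?_, rfl⟩
  field_simp
  linear_combination c * h1

/-- A function vanishing outside the strip `|⟪y, perp v⟫| ≤ R` only sees the parameters in `[-R, R]`. -/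
theorem integral_curve_prod {v : Plane} (hv : ‖v‖ = 1) (k : ℝ) {R : ℝ} (Q : Measure (Curve R))
    [IsFiniteMeasure Q] {φ : Plane → ℝ} (hφ : Continuous φ) (hφc : HasCompactSupport φ)
    (hR : ∀ y, φ y ≠ 0 → |⟪y, perp v⟫| ≤ R) {γ : Curve R × ℝ → ℝ} (hγ : Measurable γ)
    (hγ1 : ∀ p, |γ p| ≤ 1) :
    ∫ g : Curve R, ∫ t, φ (pt v k t (g.1 t)) * γ (g, t) ∂volume ∂Q =
      ∫ p, φ (curvePt v k R p) * γ p ∂(Q.prod (volume.restrict (Set.Icc (-R) R))) := by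
  obtain ⟨B, hB⟩ := hφc.exists_bound_of_continuous hφ
  rw [integral_prod]
  · refine integral_congr_ae (Eventually.of_forall fun g => ?_)
    refine (setIntegral_eq_integral_of_forall_compl_eq_zero fun t ht => ?_).symm
    by_contra hne
    have := hR _ (left_ne_zero_of_mul hne)
    rw [inner_perp_pt hv] at this
    exact ht (abs_le.1 this)
  · refine Integrable.of_bound (C := B * 1) ?_ (Eventually.of_forall fun p => ?_)
    · exact ((hφ.comp (continuous_curvePt v k R)).measurable.mul hγ).aestronglyMeasurable
    · rw [norm_mul]
      exact mul_le_mul (hB _) (hγ1 p) (norm_nonneg _) ((norm_nonneg _).trans (hB 0))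

/-- The distributional derivative of `superposition v k Q` in the strip `|⟪y, perp v⟫| ≤ R` has density
`c (-ω perp v + v / k)` with respect to `curveMeasure v k Q`. Here `ω`, with `|ω| ≤ 1`, averages the
slopes `g'` of the curves through a given point. -/
theorem superposition_parts {v : Plane} (hv : ‖v‖ = 1) {k : ℝ} (hk : 0 < k) {R : ℝ}
    (Q : Measure (Curve R)) [IsFiniteMeasure Q] :
    ∃ c : ℝ, 0 < c ∧ ∃ ω : Plane → ℝ, Measurable ω ∧ (∀ y, |ω y| ≤ 1) ∧
      ∀ φ : Plane → ℝ, ContDiff ℝ 1 φ → HasCompactSupport φ →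
        (∀ y, φ y ≠ 0 → |⟪y, perp v⟫| ≤ R) → ∀ e : Plane,
        ∫ y, superposition v k Q y * fderiv ℝ φ y e =
          - ∫ y, φ y * (c * ⟪-ω y • perp v + k⁻¹ • v, e⟫) ∂(curveMeasure v k Q) := by
  obtain ⟨c, hc0, hc⟩ := exists_chart_constant v hv k hk
  let γ : Curve R × ℝ → ℝ := fun p => deriv p.1.1 p.2
  have hγ : Measurable γ := 
    measurable_deriv_with_param (f := fun (g : Curve R) t => g.1 t) (continuous_curve_eval R)
  have hγ1 : ∀ p, |γ p| ≤ 1 := fun p => by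
    simpa using norm_deriv_le_of_lipschitz (x₀ := p.2) p.1.2.1
  obtain ⟨ω, hω, hω1, hωφ⟩ := exists_fibre_average
    (Q.prod (volume.restrict (Set.Icc (-R) R))) (continuous_curvePt v k R).measurable hγ hγ1
  refine ⟨c, hc0, ω, hω, hω1, ?_⟩
  intro φ hφ hφc hR e
  obtain ⟨B, hB⟩ := hφc.exists_bound_of_continuous hφ.continuous
  have hintg : ∀ e, Integrable fun y => fderiv ℝ φ y e := fun e =>
    ((hφ.continuous_fderiv one_ne_zero).clm_apply continuous_const).integrable_of_hasCompactSupport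
      (hφc.fderiv_apply ℝ e)
  have hV : ∫ y, superposition v k Q y * fderiv ℝ φ y v =
      -(c / k) * ∫ y, φ y ∂(curveMeasure v k Q) := by
    rw [integral_superposition_mul v k Q (hintg v)]
    have h1 := integral_curve_prod hv k Q hφ.continuous hφc hR (γ := fun _ => 1)
      measurable_const (fun _ => by simp)
    simp only [mul_one] at h1
    rw [curveMeasure, integral_map (continuous_curvePt v k R).measurable.aemeasurable
      hφ.continuous.aestronglyMeasurable, ← h1, ← integral_const_mul]
    exact integral_congr_ae (Eventually.of_forall fun g =>
      (setIntegral_epigraph_plane hv hk hc g.2.1 hφ hφc).1)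
  have hN : ∫ y, superposition v k Q y * fderiv ℝ φ y (perp v) =
      c * ∫ y, φ y * ω y ∂(curveMeasure v k Q) := by
    rw [integral_superposition_mul v k Q (hintg _)]
    have h1 := integral_curve_prod hv k Q hφ.continuous hφc hR hγ hγ1
    rw [curveMeasure, ← hωφ φ hφ.continuous.measurable ⟨B, hB⟩, ← h1, ← integral_const_mul]
    exact integral_congr_ae (Eventually.of_forall fun g =>
      (setIntegral_epigraph_plane hv hk hc g.2.1 hφ hφc).2)
  have he : e = ⟪perp v, e⟫ • perp v + ⟪v, e⟫ • v := by
    have e' := sq_add_sq_of_unit hv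
    ext i
    fin_cases i
    · simp [inner_plane, perp]
      linear_combination (-(e 0)) * e'
    · simp [inner_plane, perp]
      linear_combination (-(e 1)) * e'
  have hwi : ∀ e, Integrable fun y => superposition v k Q y * fderiv ℝ φ y e := fun e =>
    (hintg e).bdd_mul (c := Q.real Set.univ) (measurable_superposition v k Q).aestronglyMeasurable
      (Eventually.of_forall (abs_superposition_le v k Q))
  have hφi : Integrable φ (curveMeasure v k Q) :=
    Integrable.of_bound (C := B) hφ.continuous.aestronglyMeasurable (Eventually.of_forall hB)
  have hφωi : Integrable (fun y => φ y * ω y) (curveMeasure v k Q) :=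
    hφi.mul_bdd (c := 1) hω.aestronglyMeasurable (Eventually.of_forall hω1)
  have hL : ∀ y, superposition v k Q y * fderiv ℝ φ y e =
      ⟪perp v, e⟫ * (superposition v k Q y * fderiv ℝ φ y (perp v)) +
        ⟪v, e⟫ * (superposition v k Q y * fderiv ℝ φ y v) := by
    intro y
    conv_lhs => rw [he]
    rw [map_add, map_smul, map_smul, smul_eq_mul, smul_eq_mul]
    ring
  have hRt : ∀ y, φ y * (c * ⟪-ω y • perp v + k⁻¹ • v, e⟫) =
      (-(c * ⟪perp v, e⟫)) * (φ y * ω y) + (c / k * ⟪v, e⟫) * φ y := by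
    intro y
    rw [inner_add_left, real_inner_smul_left, real_inner_smul_left]
    ring
  simp only [hL, hRt]
  rw [integral_add ((hwi _).const_mul _) ((hwi _).const_mul _),
    integral_add (hφωi.const_mul _) (hφi.const_mul _), integral_const_mul, integral_const_mul,
    integral_const_mul, integral_const_mul, hV, hN]
  ring

/-- `superposition v k Q` is of bounded variation on `Ω`, its derivative charges every set charged by
the curves, and its direction lies in `C(v,a')`, because `|ω| ≤ 1` bounds the tangential part of the
density `c (-ω perp v + v / k)`. -/
theorem superposition_isBV {v : Plane} (hv : ‖v‖ = 1) {a' k : ℝ} (ha' : 0 < a') (hk : 0 < k)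
    (hka : (k * a') ^ 2 = 1 - a' ^ 2) {R : ℝ} (Q : Measure (Curve R)) [IsFiniteMeasure Q]
    {Ω : Set Plane} (hΩ : IsOpen Ω) (hΩf : volume Ω < ⊤) (hR : ∀ y ∈ Ω, |⟪y, perp v⟫| ≤ R) :
    ∃ (νw : Measure Plane) (σw : Plane → Plane),
      IsBVScalarOn Ω (superposition v k Q) νw σw ∧
      (curveMeasure v k Q).restrict Ω ≪ νw ∧ ∀ y, σw y ∈ cone v a' := by
  obtain ⟨c, hc0, ω, hω, hω1, hparts⟩ := superposition_parts hv hk Q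
  let H : Plane → Plane := fun y => -ω y • perp v + k⁻¹ • v
  have hH : Measurable H := by
    have : Measurable fun y => -ω y := hω.neg
    exact (this.smul_const _).add_const _
  have hHv : ∀ y, ⟪H y, v⟫ = k⁻¹ := by
    intro y
    have h1 : ⟪perp v, v⟫ = 0 := by simp [inner_plane, perp]; ring
    simp only [H]
    rw [inner_add_left, real_inner_smul_left, real_inner_smul_left, h1,
      real_inner_self_eq_norm_sq, hv]
    ring
  have hHp : ∀ y, ⟪H y, perp v⟫ = -ω y := by
    intro y
    have h1 : ⟪v, perp v⟫ = 0 := by simp [inner_plane, perp]; ring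
    simp only [H]
    rw [inner_add_left, real_inner_smul_left, real_inner_smul_left, h1,
      real_inner_self_eq_norm_sq, norm_perp hv]
    ring
  have hHsq : ∀ y, ‖H y‖ ^ 2 = ω y ^ 2 + k⁻¹ ^ 2 := by
    intro y
    rw [← inner_perp_sq_add hv, hHv, hHp]
    ring
  have hki : 0 < k⁻¹ := inv_pos.2 hk
  have hHpos : ∀ y, 0 < ‖H y‖ := by
    intro y
    by_contra h
    have h0 : ‖H y‖ = 0 := le_antisymm (not_lt.1 h) (norm_nonneg _)
    have := hHsq y
    rw [h0] at this
    nlinarith [sq_nonneg (ω y), pow_pos hki 2]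
  have hωsq : ∀ y, ω y ^ 2 ≤ 1 := fun y => (sq_le_one_iff_abs_le_one _).2 (hω1 y)
  have hcone : ∀ y, a' * ‖H y‖ ≤ k⁻¹ := by
    intro y
    refine abs_le_of_sq_le_sq' ?_ hki.le |>.2
    have h2 : a' ^ 2 * (1 + k⁻¹ ^ 2) = k⁻¹ ^ 2 := by
      field_simp
      linear_combination hka
    rw [mul_pow, hHsq]
    calc a' ^ 2 * (ω y ^ 2 + k⁻¹ ^ 2) ≤ a' ^ 2 * (1 + k⁻¹ ^ 2) := by
          gcongr
          exact hωsq y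
      _ = _ := h2
  have hHle : ∀ y, ‖H y‖ ≤ k⁻¹ / a' := fun y => by
    rw [le_div_iff₀ ha', mul_comm]
    exact hcone y
  have hdm : Measurable fun y => (c * ‖H y‖).toNNReal := (hH.norm.const_mul c).real_toNNReal
  let ν1 := (curveMeasure v k Q).restrict Ω
  let νw : Measure Plane := ν1.withDensity fun y => ((c * ‖H y‖).toNNReal : ℝ≥0∞)
  refine ⟨νw, fun y => ‖H y‖⁻¹ • H y, ⟨?_, ?_, ?_, ?_, ?_, ?_⟩, ?_, ?_⟩
  · have : IsFiniteMeasure (volume.restrict Ω) := ⟨by simpa using hΩf⟩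
    exact Integrable.of_bound (C := Q.real Set.univ)
      (measurable_superposition v k Q).aestronglyMeasurable
      (Eventually.of_forall (abs_superposition_le v k Q))
  · rw [withDensity_apply _ MeasurableSet.univ]
    refine lt_of_le_of_lt (setLIntegral_mono' (g := fun _ => ((c * (k⁻¹ / a')).toNNReal : ℝ≥0∞))
      MeasurableSet.univ fun y _ => ?_) ?_
    · gcongr
      exact hHle y
    · rw [lintegral_const]
      exact ENNReal.mul_lt_top ENNReal.coe_lt_top (measure_lt_top _ _)
  · refine (withDensity_absolutelyContinuous ν1 _) ?_
    rw [Measure.restrict_apply hΩ.measurableSet.compl]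
    simp
  · exact hH.norm.inv.smul hH
  · refine Eventually.of_forall fun y => ?_
    rw [norm_smul, norm_inv, norm_norm, inv_mul_cancel₀ (hHpos y).ne']
  · intro φ hφ hφc hφs l
    have hφR : ∀ y, φ y ≠ 0 → |⟪y, perp v⟫| ≤ R := fun y hy =>
      hR y (hφs (subset_tsupport φ hy))
    have h1 := hparts φ hφ hφc hφR (EuclideanSpace.single l (1:ℝ))
    rw [setIntegral_eq_integral_of_forall_compl_eq_zero, h1,
      integral_withDensity_eq_integral_smul hdm]
    · congr 1
      have : ∀ y, (c * ‖H y‖).toNNReal • (φ y * (‖H y‖⁻¹ • H y) l) =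
          φ y * (c * ⟪-ω y • perp v + k⁻¹ • v, EuclideanSpace.single l (1:ℝ)⟫) := by
        intro y
        have h3 : ⟪-ω y • perp v + k⁻¹ • v, EuclideanSpace.single l (1:ℝ)⟫ = H y l := by
          rw [EuclideanSpace.inner_single_right]
          simp [H]
        rw [h3, NNReal.smul_def, Real.coe_toNNReal _ (mul_pos hc0 (hHpos y)).le, smul_eq_mul,
          PiLp.smul_apply, smul_eq_mul]
        have := (hHpos y).ne'
        field_simp
      simp only [this]
      refine (setIntegral_eq_integral_of_forall_compl_eq_zero fun y hy => ?_).symm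
      rw [image_eq_zero_of_notMem_tsupport fun h => hy (hφs h), zero_mul]
    · intro y hy
      have : fderiv ℝ φ y = 0 :=
        image_eq_zero_of_notMem_tsupport fun h => hy (hφs (tsupport_fderiv_subset ℝ h))
      rw [this]
      simp
  · refine withDensity_absolutelyContinuous' hdm.coe_nnreal_ennreal.aemeasurable
      (Eventually.of_forall fun y => ?_)
    simpa using mul_pos hc0 (hHpos y)
  · intro y
    change a' * ‖‖H y‖⁻¹ • H y‖ ≤ ⟪‖H y‖⁻¹ • H y, v⟫
    rw [norm_smul, norm_inv, norm_norm, real_inner_smul_left, hHv, mul_left_comm]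
    exact mul_le_mul_of_nonneg_left (hcone y) (inv_nonneg.2 (norm_nonneg _))

/-! ### Conclusion -/

/-- Proposition 3.2: if `u ∈ BV(B(x,r)) ∩ L^∞(B(x,r))` and
`A = {y ∈ B(x,r) : dDu/d|Du|(y) ∈ C(v,a)}`, then for any `0 < a′ < a` there is
`w ∈ BV(B(x,r)) ∩ L^∞(B(x,r))` with `|Du|⌊A ≪ |Dw|` on `B(x,r)` and
`dDw/d|Dw| ∈ C(v,a′)` `|Dw|`-a.e. -/
theorem cone_drop_proposition
    (v : EuclideanSpace ℝ (Fin 2)) (hv : ‖v‖ = 1)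
    (a a' : ℝ) (ha' : 0 < a') (ha'a : a' < a) (ha : a ≤ 1)
    (x : EuclideanSpace ℝ (Fin 2)) (r : ℝ) (hr : 0 < r)
    (u : EuclideanSpace ℝ (Fin 2) → ℝ)
    (νu : Measure (EuclideanSpace ℝ (Fin 2)))
    (σu : EuclideanSpace ℝ (Fin 2) → EuclideanSpace ℝ (Fin 2))
    (hBVu : IsBVScalarOn (Metric.ball x r) u νu σu)
    (hu_bdd : ∃ M : ℝ, ∀ᵐ y ∂(volume.restrict (Metric.ball x r)), |u y| ≤ M) :
    ∃ (w : EuclideanSpace ℝ (Fin 2) → ℝ) (νw : Measure (EuclideanSpace ℝ (Fin 2)))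
      (σw : EuclideanSpace ℝ (Fin 2) → EuclideanSpace ℝ (Fin 2)),
      IsBVScalarOn (Metric.ball x r) w νw σw ∧
      (∃ M : ℝ, ∀ᵐ y ∂(volume.restrict (Metric.ball x r)), |w y| ≤ M) ∧
      νu.restrict {y ∈ Metric.ball x r | σu y ∈ cone v a} ≪ νw ∧
      (∀ᵐ y ∂νw, σw y ∈ cone v a') := by

  have ha1 : a' < 1 := ha'a.trans_le ha
  have hpos : 0 < 1 - a' ^ 2 := by nlinarith
  let k : ℝ := √(1 - a' ^ 2) / a'
  have hk : 0 < k := div_pos (Real.sqrt_pos.2 hpos) ha'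
  have hka : (k * a') ^ 2 = 1 - a' ^ 2 := by
    simp only [k]
    rw [div_mul_cancel₀ _ ha'.ne', Real.sq_sqrt hpos.le]
  let R : ℝ := (‖x‖ + r) * (1 + 1 / k)
  have hR : ∀ y ∈ Metric.ball x r, |⟪y, perp v⟫| ≤ R ∧ |⟪y, v⟫| ≤ R * k := by
    intro y hy
    have hy1 : ‖y‖ ≤ ‖x‖ + r := by
      have h1 : ‖y - x‖ < r := mem_ball_iff_norm.1 hy
      have h2 := norm_add_le x (y - x)
      rw [add_sub_cancel] at h2
      linarith
    have h0 : 0 ≤ ‖x‖ + r := by positivity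
    have hik : 0 < 1 / k := by positivity
    have h3 := abs_real_inner_le_norm y (perp v)
    have h4 := abs_real_inner_le_norm y v
    rw [norm_perp hv, mul_one] at h3
    rw [hv, mul_one] at h4
    refine ⟨by simp only [R]; nlinarith, ?_⟩
    have h5 : R * k = (‖x‖ + r) * (k + 1) := by
      simp only [R]
      field_simp
    rw [h5]
    nlinarith
  obtain ⟨Q, hQ, hac⟩ := hBVu.absolutelyContinuous_curveMeasure Metric.isOpen_ball hv ha' ha'a hk
    hka hR
  obtain ⟨νw, σw, hBV, hac2, hcone⟩ := superposition_isBV hv ha' hk hka Q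
    (Metric.isOpen_ball (x := x) (ε := r)) measure_ball_lt_top fun y hy => (hR y hy).1
  refine ⟨superposition v k Q, νw, σw, hBV,
    ⟨Q.real Set.univ, Eventually.of_forall (abs_superposition_le v k Q)⟩, ?_,
    Eventually.of_forall hcone⟩
  have hsub : {y ∈ Metric.ball x r | σu y ∈ cone v a} ⊆ Metric.ball x r := fun y hy => hy.1
  have h1 := hac.restrict (Metric.ball x r)
  rw [Measure.restrict_restrict Metric.isOpen_ball.measurableSet,
    Set.inter_eq_self_of_subset_right hsub] at h1
  exact h1.trans hac2
end
end

section
/- For every set A ⊂ ℝ², the 1-dimensional Hausdorff content satisfies H¹_∞(A) ≤ 10 capa₁(A). -/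
/-!
The theorem follows from a boxing inequality applied to a superlevel set of a competitor `u` for
the capacity; only the gradient term of the `W^{1,1}` norm is needed.

*Perimeter by translations.* Mollifying `u` turns the integration-by-parts formula into
`∫ |u (x + h eᵢ) - u x| ≤ h ∫ |Vᵢ|` (`lintegral_enorm_translate_sub_le`). The perimeter of a set
`E` in a direction `e` is measured, without any theory of `BV` functions, by the supremum over `k`
of `2 ^ k` times the measure of the set of points `x` for which exactly one of `x` and
`x + 2⁻ᵏ e` lies in `E` (`dirPerimeter`). These quantities increase with `k`, so Fubini and
monotone convergence turn the translation estimate into one inequality of the coarea formula: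
the directional perimeters of the sets `{t < u}`, integrated over `t`, are at most `∫ |Vᵢ|`
(`lintegral_dirPerimeter_level_le`). Hence some `t ∈ (0, 1)` has `E = {t < u}` with
`P₁ + P₂ ≤ ∫ |V₁| + |V₂| ≤ √2 ∫ |V|`, where `Pᵢ` is the perimeter of `E` in direction `eᵢ`
(`exists_good_level`).

*Boxing.* The set `E` has finite measure, so in a sufficiently coarse dyadic grid no square has
density at least `1 / 5` with respect to `E`. Take the maximal dyadic squares of density at least
`1 / 5`. The parent of such a square has density below `1 / 5`, so the square itself has density at
most `4 / 5`. In a square of side `l` in which `E` has density `d`, comparing two arbitrary points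
`p`, `q` through the corner `(q.1, p.2)` gives `2 d (1 - d) l ≤ P₁ + P₂` for the perimeters inside
the square; thus `8 / 25 * l ≤ P₁ + P₂` (`side_le_dirPerimeter`). The squares are disjoint, so
these inequalities add up (`exists_squares`). An open set on which `u ≥ 1` is covered by these
squares, because every small square inside it has density one.

A square of side `l` has diameter `√2 * l`, so the content is at most
`√2 * (25 / 8) * √2 * ∫ |V| = 25 / 4 * ∫ |V| ≤ 10 * ∫ |V|`.
-/

open MeasureTheory
open scoped ENNReal NNReal

noncomputable section

/-- `u ∈ W^{1,1}(ℝ²)` with weak (distributional) gradient `V`: both are integrable and the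
integration-by-parts formula holds against all `C_c¹` test functions. -/
def IsW11 (u : EuclideanSpace ℝ (Fin 2) → ℝ) (V : EuclideanSpace ℝ (Fin 2) → EuclideanSpace ℝ (Fin 2)) : Prop :=
  Integrable u volume ∧ Integrable V volume ∧
    ∀ φ : EuclideanSpace ℝ (Fin 2) → ℝ, ContDiff ℝ 1 φ → HasCompactSupport φ →
      ∀ l : Fin 2,
        ∫ x, u x * fderiv ℝ φ x (EuclideanSpace.single l (1:ℝ)) ∂volume
          = - ∫ x, φ x * V x l ∂volume

/-- The (Sobolev) 1-capacity: `capa₁(A) = inf ‖u‖_{W^{1,1}(ℝ²)}`, the infimum of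
`∫|u| + ∫|∇u|` over all `u ∈ W^{1,1}(ℝ²)` with `u ≥ 1` in a neighborhood of `A`. -/
def capa1 (A : Set (EuclideanSpace ℝ (Fin 2))) : ℝ≥0∞ :=
  ⨅ (u : EuclideanSpace ℝ (Fin 2) → ℝ) (V : EuclideanSpace ℝ (Fin 2) → EuclideanSpace ℝ (Fin 2))
    (_ : IsW11 u V)
    (_ : ∃ U : Set (EuclideanSpace ℝ (Fin 2)), IsOpen U ∧ A ⊆ U ∧ ∀ x ∈ U, 1 ≤ u x),
    (∫⁻ x, (‖u x‖₊ : ℝ≥0∞) ∂volume) + ∫⁻ x, (‖V x‖₊ : ℝ≥0∞) ∂volume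

/-- The 1-dimensional Hausdorff content: the infimum of `∑ diam Aⱼ` over countable covers. -/
def hausdorffContent1 (A : Set (EuclideanSpace ℝ (Fin 2))) : ℝ≥0∞ :=
  ⨅ (t : ℕ → Set (EuclideanSpace ℝ (Fin 2))) (_ : A ⊆ ⋃ j, t j), ∑' j, EMetric.diam (t j)

open Filter Topology Set Convolution

/-! ### Translation estimate from the weak derivative -/

/-- The Euclidean plane. -/
abbrev E2 := EuclideanSpace ℝ (Fin 2)

/-- Convolution with a probability density does not increase the `L¹` norm. -/
lemma lintegral_enorm_convolution_le (η : E2 → ℝ) (hη : Continuous η) (hη0 : ∀ x, 0 ≤ η x)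
    (hi : Integrable η volume)
    (hη1 : ∫ x, η x = 1) (w : E2 → ℝ) (hw : Integrable w volume) :
    ∫⁻ x, ‖(η ⋆[ContinuousLinearMap.lsmul ℝ ℝ, volume] w) x‖ₑ ≤ ∫⁻ x, ‖w x‖ₑ := by
  have h1 : ∫⁻ x, ‖η x‖ₑ = 1 := by
    rw [← ofReal_integral_norm_eq_lintegral_enorm hi]
    simp [Real.norm_of_nonneg (hη0 _), hη1]
  calc ∫⁻ x, ‖(η ⋆[ContinuousLinearMap.lsmul ℝ ℝ, volume] w) x‖ₑ
      ≤ ∫⁻ x, ∫⁻ t, ‖η t‖ₑ * ‖w (x - t)‖ₑ := by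
        refine lintegral_mono fun x => ?_
        refine (enorm_integral_le_lintegral_enorm _).trans (le_of_eq ?_)
        simp [enorm_mul]
    _ = ∫⁻ t, ∫⁻ x, ‖η t‖ₑ * ‖w (x - t)‖ₑ := by
        refine lintegral_lintegral_swap ?_
        have := (hi.aestronglyMeasurable.convolution_integrand
          (ContinuousLinearMap.lsmul ℝ ℝ) hw.aestronglyMeasurable (μ := volume)).enorm
        simpa [enorm_mul, Function.uncurry_def] using this
    _ = ∫⁻ t, ‖η t‖ₑ * ∫⁻ x, ‖w x‖ₑ := by
        refine lintegral_congr fun t => ?_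
        rw [lintegral_const_mul' _ _ enorm_ne_top]
        rw [lintegral_sub_right_eq_self (fun x => ‖w x‖ₑ) t]
    _ = ∫⁻ x, ‖w x‖ₑ := by
        rw [lintegral_mul_const'' _ hη.aestronglyMeasurable.enorm, h1, one_mul]

/-- If `w` is the weak derivative of `u` in direction `e`, then the mollification of `w` is the
classical derivative of the mollification of `u` in that direction: the integration-by-parts formula
is applied to the reflected and translated mollifier. -/
lemma hasDerivAt_convolution (u w : E2 → ℝ) (e : E2) (hu : Integrable u volume)
    (hibp : ∀ φ : E2 → ℝ, ContDiff ℝ 1 φ → HasCompactSupport φ →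
      ∫ x, u x * fderiv ℝ φ x e = - ∫ x, φ x * w x)
    (η : E2 → ℝ) (hη : ContDiff ℝ 1 η) (hc : HasCompactSupport η) (x : E2) (s : ℝ) :
    HasDerivAt (fun s : ℝ => (η ⋆[ContinuousLinearMap.lsmul ℝ ℝ, volume] u) (x + s • e))
      ((η ⋆[ContinuousLinearMap.lsmul ℝ ℝ, volume] w) (x + s • e)) s := by
  have h1 := hc.hasFDerivAt_convolution_left (ContinuousLinearMap.lsmul ℝ ℝ) hη
    hu.locallyIntegrable (x + s • e)
  have h2 : HasDerivAt (fun s : ℝ => x + s • e) e s := by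
    simpa using ((hasDerivAt_id s).smul_const e).const_add x
  have h3 := h1.comp_hasDerivAt s h2
  convert! h3 using 1
  set y := x + s • e
  have hex : Integrable (fun t => ((ContinuousLinearMap.lsmul ℝ ℝ).precompL E2)
      (fderiv ℝ η t) (u (y - t))) volume :=
    (hc.fderiv ℝ).convolutionExists_left _ (hη.continuous_fderiv one_ne_zero)
      hu.locallyIntegrable y
  refine Eq.trans ?_ (ContinuousLinearMap.integral_apply hex e).symm
  have h4 : ∀ t, fderiv ℝ (fun t => η (y - t)) t e = - fderiv ℝ η (y - t) e := by
    intro t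
    have := (hη.differentiable one_ne_zero (y - t)).hasFDerivAt.comp t
      ((hasFDerivAt_id t).const_sub y)
    have := this.fderiv
    simp only [Function.comp_def] at this
    rw [this]; simp
  have h5 := hibp (fun t => η (y - t)) (by fun_prop)
    (hc.comp_homeomorph (Homeomorph.subLeft y))
  rw [convolution_eq_swap]
  simp only [ContinuousLinearMap.precompL_apply, ContinuousLinearMap.lsmul_apply, smul_eq_mul]
  simp only [h4, mul_neg, integral_neg, neg_inj] at h5
  rw [← h5, ← integral_sub_left_eq_self _ volume y]
  simp [mul_comm]

/-- The `L¹` translation estimate for a function with an integrable weak directional derivative: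
it holds for the mollifications by the fundamental theorem of calculus, and passes to the limit by
Fatou's lemma. -/
lemma lintegral_enorm_translate_sub_le (u w : E2 → ℝ) (e : E2) (hu : Integrable u volume)
    (hw : Integrable w volume)
    (hibp : ∀ φ : E2 → ℝ, ContDiff ℝ 1 φ → HasCompactSupport φ →
      ∫ x, u x * fderiv ℝ φ x e = - ∫ x, φ x * w x) (h : ℝ) (hh : 0 ≤ h) :
    ∫⁻ x, ‖u (x + h • e) - u x‖ₑ ≤ ENNReal.ofReal h * ∫⁻ x, ‖w x‖ₑ := by
  let φ : ℕ → ContDiffBump (0 : E2) := fun n =>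
    ⟨1 / ((n : ℝ) + 1), 2 * (1 / ((n : ℝ) + 1)), by positivity,
      by have : 0 < 1 / ((n : ℝ) + 1) := by positivity
         linarith⟩
  have hφ0 : Tendsto (fun n => (φ n).rOut) atTop (𝓝 0) := by
    have := (tendsto_one_div_add_atTop_nhds_zero_nat (𝕜 := ℝ)).const_mul (2 : ℝ)
    rwa [mul_zero] at this
  have hae := ContDiffBump.ae_convolution_tendsto_right_of_locallyIntegrable (φ := φ) (μ := volume)
    (K := 2) hφ0 (Eventually.of_forall fun n => le_rfl) hu.locallyIntegrable
  set U : ℕ → E2 → ℝ := fun n =>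
    ((φ n).normed volume ⋆[ContinuousLinearMap.lsmul ℝ ℝ, volume] u) with hU
  have hae' : ∀ᵐ x, Tendsto (fun n => U n (x + h • e)) atTop (𝓝 (u (x + h • e))) :=
    (measurePreserving_add_right volume (h • e)).quasiMeasurePreserving.ae hae
  have hcont : ∀ (n : ℕ) (v : E2 → ℝ), Integrable v volume → Continuous
      ((φ n).normed volume ⋆[ContinuousLinearMap.lsmul ℝ ℝ, volume] v) := fun n v hv =>
    (φ n).hasCompactSupport_normed.continuous_convolution_left _ (φ n).continuous_normed
      hv.locallyIntegrable
  have key : ∀ n, ∫⁻ x, ‖U n (x + h • e) - U n x‖ₑ ≤ ENNReal.ofReal h * ∫⁻ x, ‖w x‖ₑ := by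
    intro n
    set W := (φ n).normed volume ⋆[ContinuousLinearMap.lsmul ℝ ℝ, volume] w with hW
    have hWc : Continuous W := hcont n w hw
    calc ∫⁻ x, ‖U n (x + h • e) - U n x‖ₑ
        ≤ ∫⁻ x, ∫⁻ s in Ioc 0 h, ‖W (x + s • e)‖ₑ := by
          refine lintegral_mono fun x => ?_
          have hc : Continuous fun s : ℝ => W (x + s • e) := by fun_prop
          have := intervalIntegral.integral_eq_sub_of_hasDerivAt (a := 0) (b := h)
            (fun s _ => hasDerivAt_convolution u w e hu hibp _ (φ n).contDiff_normed
              (φ n).hasCompactSupport_normed x s) (hc.intervalIntegrable 0 h)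
          simp only [zero_smul, add_zero] at this
          simp only [hU]
          rw [← this, intervalIntegral.integral_of_le hh]
          exact enorm_integral_le_lintegral_enorm _
      _ = ∫⁻ s in Ioc 0 h, ∫⁻ x, ‖W (x + s • e)‖ₑ := by
          refine lintegral_lintegral_swap ?_
          refine Continuous.aemeasurable ?_
          simp only [Function.uncurry_def]
          fun_prop
      _ = ∫⁻ s in Ioc 0 h, ∫⁻ x, ‖W x‖ₑ := by
          refine lintegral_congr fun s => ?_
          rw [lintegral_add_right_eq_self (fun x => ‖W x‖ₑ)]
      _ = ENNReal.ofReal h * ∫⁻ x, ‖W x‖ₑ := by simp [mul_comm]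
      _ ≤ _ := by
          refine mul_le_mul_right ?_ _
          exact lintegral_enorm_convolution_le _ (φ n).continuous_normed
            (fun x => (φ n).nonneg_normed x) (φ n).integrable_normed (φ n).integral_normed w hw
  calc ∫⁻ x, ‖u (x + h • e) - u x‖ₑ
      = ∫⁻ x, liminf (fun n => ‖U n (x + h • e) - U n x‖ₑ) atTop := by
        refine lintegral_congr_ae ?_
        filter_upwards [hae, hae'] with x h1 h2
        exact ((h2.sub h1).enorm.liminf_eq).symm
    _ ≤ liminf (fun n => ∫⁻ x, ‖U n (x + h • e) - U n x‖ₑ) atTop := by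
        refine lintegral_liminf_le' fun n => ?_
        have := hcont n u hu
        refine Continuous.aemeasurable ?_
        simp only [hU]
        fun_prop
    _ ≤ _ := liminf_le_of_le (by isBoundedDefault) (fun b hb => by
        obtain ⟨n, hn⟩ := hb.exists
        exact hn.trans (key n))

/-! ### Directional perimeter of a planar set -/

/-- The points of `Q` whose translate by `v` stays in `Q` and for which exactly one of the point
and its translate belongs to `E`. -/
def crossing (E Q : Set (ℝ × ℝ)) (v : ℝ × ℝ) : Set (ℝ × ℝ) :=
  {x | x ∈ Q ∧ x + v ∈ Q ∧ ¬(x ∈ E ↔ x + v ∈ E)}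

/-- The perimeter of `E` inside `Q` in direction `e`, as the supremum of the difference quotients
`h⁻¹ * volume (crossing E Q (h • e))` over the lengths `h = 2⁻ᵏ`. For order-connected `Q` and
`0 ≤ e` the quotients increase with `k`, so this is also their limit. -/
def dirPerimeter (E Q : Set (ℝ × ℝ)) (e : ℝ × ℝ) : ℝ≥0∞ :=
  ⨆ k : ℕ, 2 ^ k * volume (crossing E Q ((2⁻¹ : ℝ) ^ k • e))

lemma measurableSet_crossing {E Q : Set (ℝ × ℝ)} (hE : MeasurableSet E) (hQ : MeasurableSet Q)
    (v : ℝ × ℝ) : MeasurableSet (crossing E Q v) := by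
  have h : Measurable fun x : ℝ × ℝ => x + v := measurable_add_const v
  exact hQ.inter ((h hQ).inter ((hE.iff (h hE)).compl))

/-- Subadditivity in the translation length: if `x` and `x + (a + b) • e` are separated by `E`,
then `x + a • e` is separated from one of them, and it lies in `Q` by order-connectedness. -/
lemma volume_crossing_add_le {E Q : Set (ℝ × ℝ)} (hQ : Q.OrdConnected) {e : ℝ × ℝ} (he : 0 ≤ e)
    {a b : ℝ} (ha : 0 ≤ a) (hb : 0 ≤ b) :
    volume (crossing E Q ((a + b) • e))
      ≤ volume (crossing E Q (a • e)) + volume (crossing E Q (b • e)) := by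
  have hsub : crossing E Q ((a + b) • e)
      ⊆ crossing E Q (a • e) ∪ (fun x => x + a • e) ⁻¹' crossing E Q (b • e) := by
    rintro x ⟨h1, h2, h3⟩
    have hab : x + a • e + b • e = x + (a + b) • e := by rw [add_smul, add_assoc]
    have hm : x + a • e ∈ Q := hQ.out h1 h2
      ⟨le_add_of_nonneg_right (smul_nonneg ha he), by
        rw [← hab]; exact le_add_of_nonneg_right (smul_nonneg hb he)⟩
    simp only [crossing, mem_union, mem_ofPred_eq, mem_preimage, hab]
    tauto
  refine (measure_mono hsub).trans ((measure_union_le _ _).trans ?_)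
  rw [measure_preimage_add_right]

lemma volume_crossing_neg (E Q : Set (ℝ × ℝ)) (v : ℝ × ℝ) :
    volume (crossing E Q (-v)) = volume (crossing E Q v) := by
  have : crossing E Q v = (fun x => x + v) ⁻¹' crossing E Q (-v) := by
    ext x
    simp only [crossing, mem_ofPred_eq, mem_preimage, add_neg_cancel_right]
    tauto
  rw [this, measure_preimage_add_right]

/-- Halving the translation length at most halves the measure of the crossing set. -/
lemma monotone_crossing {E Q : Set (ℝ × ℝ)} (hQ : Q.OrdConnected) {e : ℝ × ℝ} (he : 0 ≤ e) :
    Monotone fun k : ℕ => (2 : ℝ≥0∞) ^ k * volume (crossing E Q ((2⁻¹ : ℝ) ^ k • e)) := by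
  refine monotone_nat_of_le_succ fun k => ?_
  have h : (2⁻¹ : ℝ) ^ k = (2⁻¹ : ℝ) ^ (k + 1) + (2⁻¹ : ℝ) ^ (k + 1) := by ring
  rw [h, pow_succ (2 : ℝ≥0∞), mul_assoc, two_mul]
  gcongr
  exact volume_crossing_add_le hQ he (by positivity) (by positivity)

lemma volume_crossing_nat_le {E Q : Set (ℝ × ℝ)} (hQ : Q.OrdConnected) {e : ℝ × ℝ} (he : 0 ≤ e)
    {a : ℝ} (ha : 0 ≤ a) (j : ℕ) :
    volume (crossing E Q ((j * a) • e)) ≤ j * volume (crossing E Q (a • e)) := by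
  induction j with
  | zero => simp [crossing]
  | succ j ih =>
    push_cast
    rw [add_mul, one_mul, add_mul, one_mul]
    exact (volume_crossing_add_le hQ he (by positivity) ha).trans (by gcongr)

/-- Translating by `s • e` moves a set `E` by at most `s` times its directional perimeter;
multiples of `2⁻ᵏ` are handled by subadditivity, the rest by continuity of translations. -/
lemma volume_crossing_le {E Q : Set (ℝ × ℝ)} (hQ : Q.OrdConnected) (hE : MeasurableSet E)
    (hfin : volume E ≠ ∞) {e : ℝ × ℝ} (he : 0 ≤ e) {s : ℝ} (hs : 0 ≤ s) :
    volume (crossing E Q (s • e)) ≤ ENNReal.ofReal s * dirPerimeter E Q e := by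
  set r : ℕ → ℝ := fun k => s - ⌊s * 2 ^ k⌋₊ * (2⁻¹ : ℝ) ^ k with hr
  have hp : ∀ k : ℕ, (2 : ℝ) ^ k * (2⁻¹ : ℝ) ^ k = 1 := fun k => by
    rw [← mul_pow]; norm_num
  have hr0 : ∀ k, 0 ≤ r k := by
    intro k
    have h1 := Nat.floor_le (a := s * 2 ^ k) (by positivity)
    have h2 : (⌊s * 2 ^ k⌋₊ : ℝ) * (2⁻¹ : ℝ) ^ k ≤ s * 2 ^ k * (2⁻¹ : ℝ) ^ k := by gcongr
    rw [mul_assoc, hp, mul_one] at h2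
    simp only [hr]; linarith
  have hr1 : ∀ k, r k ≤ (2⁻¹ : ℝ) ^ k := by
    intro k
    have h1 := (Nat.lt_floor_add_one (s * 2 ^ k)).le
    have h2 : s * 2 ^ k * (2⁻¹ : ℝ) ^ k ≤ (⌊s * 2 ^ k⌋₊ + 1 : ℝ) * (2⁻¹ : ℝ) ^ k := by gcongr
    rw [mul_assoc, hp, mul_one] at h2
    simp only [hr]; linarith
  have hrt : Tendsto r atTop (𝓝 0) := squeeze_zero hr0 hr1
    (tendsto_pow_atTop_nhds_zero_of_lt_one (by norm_num) (by norm_num))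
  have hlim : Tendsto (fun k => volume (crossing E Q (r k • e))) atTop (𝓝 0) := by
    let f : ℝ × ℝ → C(ℝ × ℝ, ℝ × ℝ) := fun v => ⟨fun x => x + v, by fun_prop⟩
    have hf : Continuous f := by
      refine ContinuousMap.continuous_of_continuous_uncurry _ ?_
      simp only [f, Function.uncurry_def, ContinuousMap.coe_mk]
      fun_prop
    have h1 := tendsto_measure_symmDiff_preimage_nhds_zero (μ := volume) (ν := volume) (s := E)
      (f := fun k => f (r k • e)) (g := f 0) (l := atTop)
      ((hf.tendsto 0).comp (by simpa using hrt.smul_const e))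
      (Eventually.of_forall fun k => measurePreserving_add_right volume _)
      (measurePreserving_add_right volume _) hE.nullMeasurableSet hfin
    refine tendsto_of_tendsto_of_tendsto_of_le_of_le tendsto_const_nhds h1 (fun _ => zero_le)
      fun k => measure_mono ?_
    rintro x ⟨-, -, h⟩
    simp only [f, symmDiff_def, sup_eq_union, mem_union, Set.mem_sdiff, mem_preimage,
      ContinuousMap.coe_mk, add_zero]
    tauto
  have hb : ∀ k, volume (crossing E Q (s • e))
      ≤ ENNReal.ofReal s * dirPerimeter E Q e + volume (crossing E Q (r k • e)) := by
    intro k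
    have h0 : s = ⌊s * 2 ^ k⌋₊ * (2⁻¹ : ℝ) ^ k + r k := by simp [hr]
    have h1 : volume (crossing E Q ((2⁻¹ : ℝ) ^ k • e))
        ≤ ENNReal.ofReal ((2⁻¹ : ℝ) ^ k) * dirPerimeter E Q e := by
      have h2 : (2 : ℝ≥0∞) ^ k * volume (crossing E Q ((2⁻¹ : ℝ) ^ k • e)) ≤ dirPerimeter E Q e :=
        le_iSup (fun k : ℕ => (2 : ℝ≥0∞) ^ k * volume (crossing E Q ((2⁻¹ : ℝ) ^ k • e))) k
      have h3 : ENNReal.ofReal ((2⁻¹ : ℝ) ^ k) * 2 ^ k = 1 := by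
        have : (2 : ℝ≥0∞) ^ k = ENNReal.ofReal (2 ^ k) := by
          rw [ENNReal.ofReal_pow (by norm_num)]; simp
        rw [this, ← ENNReal.ofReal_mul (by positivity), mul_comm, hp, ENNReal.ofReal_one]
      calc _ = ENNReal.ofReal ((2⁻¹ : ℝ) ^ k) *
            (2 ^ k * volume (crossing E Q ((2⁻¹ : ℝ) ^ k • e))) := by
              rw [← mul_assoc, h3, one_mul]
        _ ≤ _ := by gcongr
    conv_lhs => rw [h0]
    refine (volume_crossing_add_le hQ he (by positivity) (hr0 k)).trans ?_
    gcongr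
    refine (volume_crossing_nat_le hQ he (by positivity) _).trans ?_
    calc (⌊s * 2 ^ k⌋₊ : ℝ≥0∞) * volume (crossing E Q ((2⁻¹ : ℝ) ^ k • e))
        ≤ ⌊s * 2 ^ k⌋₊ * (ENNReal.ofReal ((2⁻¹ : ℝ) ^ k) * dirPerimeter E Q e) := by gcongr
      _ = ENNReal.ofReal (⌊s * 2 ^ k⌋₊ * (2⁻¹ : ℝ) ^ k) * dirPerimeter E Q e := by
        rw [ENNReal.ofReal_mul (by positivity), ENNReal.ofReal_natCast, mul_assoc]
      _ ≤ _ := by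
        gcongr
        have := hr0 k
        linarith
  have := ge_of_tendsto' (hlim.const_add (ENNReal.ofReal s * dirPerimeter E Q e)) hb
  simpa using this

lemma volume_crossing_abs_le {E Q : Set (ℝ × ℝ)} (hQ : Q.OrdConnected) (hE : MeasurableSet E)
    (hfin : volume E ≠ ∞) {e : ℝ × ℝ} (he : 0 ≤ e) (s : ℝ) :
    volume (crossing E Q (s • e)) ≤ ENNReal.ofReal |s| * dirPerimeter E Q e := by
  rcases le_total 0 s with hs | hs
  · rw [abs_of_nonneg hs]; exact volume_crossing_le hQ hE hfin he hs
  · rw [abs_of_nonpos hs, ← volume_crossing_neg, ← neg_smul]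
    exact volume_crossing_le hQ hE hfin he (by linarith)

/-- The perimeters of `E` inside countably many disjoint sets add up to at most the perimeter of `E`
in the plane. -/
lemma tsum_dirPerimeter_le {ι : Type*} [Countable ι] {E : Set (ℝ × ℝ)} (hE : MeasurableSet E)
    (Q : ι → Set (ℝ × ℝ)) (hQm : ∀ i, MeasurableSet (Q i)) (hQ : ∀ i, (Q i).OrdConnected)
    (hd : Pairwise (Function.onFun Disjoint Q)) {e : ℝ × ℝ} (he : 0 ≤ e) :
    ∑' i, dirPerimeter E (Q i) e ≤ dirPerimeter E univ e := by
  rw [ENNReal.tsum_eq_iSup_sum]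
  refine iSup_le fun s => ?_
  simp only [dirPerimeter]
  rw [ENNReal.finsetSum_iSup_of_monotone fun i => monotone_crossing (hQ i) he]
  refine iSup_mono fun k => ?_
  rw [← Finset.mul_sum, ← measure_biUnion_finset]
  · gcongr
    refine iUnion₂_subset fun i _ => ?_
    rintro x ⟨-, -, h⟩
    exact ⟨mem_univ _, mem_univ _, h⟩
  · intro i _ j _ hij
    exact (hd hij).mono (fun x hx => hx.1) (fun x hx => hx.1)
  · exact fun i _ => measurableSet_crossing hE (hQm i) _

/-- Integrated form of `volume_crossing_abs_le` over the translation length. -/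
lemma lintegral_crossing_le {E Q : Set (ℝ × ℝ)} (hQ : Q.OrdConnected) (hE : MeasurableSet E)
    (hfin : volume E ≠ ∞) {e : ℝ × ℝ} (he : 0 ≤ e) {l : ℝ} (hl : 0 ≤ l)
    (hdiam : ∀ p s, p ∈ Q → p + s • e ∈ Q → |s| ≤ l) :
    ∫⁻ s : ℝ, volume (crossing E Q (s • e)) ≤ ENNReal.ofReal (l ^ 2) * dirPerimeter E Q e := by
  have h1 : ∀ s : ℝ, volume (crossing E Q (s • e)) ≤
      (Icc (-l) l).indicator (fun s => ENNReal.ofReal |s| * dirPerimeter E Q e) s := by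
    intro s
    by_cases hs : s ∈ Icc (-l) l
    · rw [indicator_of_mem hs]; exact volume_crossing_abs_le hQ hE hfin he s
    · have : crossing E Q (s • e) = ∅ := by
        refine eq_empty_of_forall_notMem fun p hp => hs (abs_le.1 (hdiam p s hp.1 hp.2.1))
      simp [this]
  refine (lintegral_mono h1).trans ?_
  rw [lintegral_indicator measurableSet_Icc, lintegral_mul_const _ (by fun_prop)]
  gcongr
  rw [← ofReal_integral_eq_lintegral_ofReal (Continuous.integrableOn_Icc (by fun_prop))
    (Eventually.of_forall fun s => abs_nonneg s), integral_Icc_eq_integral_Ioc,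
    ← intervalIntegral.integral_of_le (by linarith)]
  refine ENNReal.ofReal_le_ofReal (le_of_eq ?_)
  have ha : ∀ a b : ℝ, IntervalIntegrable (fun s : ℝ => |s|) volume a b := fun a b =>
    Continuous.intervalIntegrable (by fun_prop) a b
  rw [← intervalIntegral.integral_add_adjacent_intervals (ha (-l) 0) (ha 0 l)]
  have e1 : ∫ s in (-l)..0, |s| = ∫ s in (-l)..0, -s := by
    refine intervalIntegral.integral_congr fun s hs => ?_
    rw [uIcc_of_le (by linarith)] at hs
    exact abs_of_nonpos hs.2
  have e2 : ∫ s in (0:ℝ)..l, |s| = ∫ s in (0:ℝ)..l, s := by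
    refine intervalIntegral.integral_congr fun s hs => ?_
    rw [uIcc_of_le hl] at hs
    exact abs_of_nonneg hs.1
  rw [e1, e2, intervalIntegral.integral_neg, integral_id, integral_id]
  ring

/-! ### Relative isoperimetric inequality in a square -/

open Classical in
/-- The left side is the measure of the pairs `(p, q)` separated by `E`. If `E` separates `p` from
`q`, then it separates the corner `(q.1, p.2)` from `p` (horizontally) or from `q` (vertically). -/
lemma two_mul_measure_mul_measure_compl_le {E : Set (ℝ × ℝ)} (hE : MeasurableSet E)
    (μ ν : Measure ℝ) [IsFiniteMeasure μ] [IsFiniteMeasure ν] :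
    2 * (μ.prod ν E * μ.prod ν Eᶜ)
      ≤ ν univ * ∫⁻ p, ∫⁻ a, (if p ∈ E ↔ (a, p.2) ∈ E then 0 else 1) ∂μ ∂(μ.prod ν)
        + μ univ * ∫⁻ p, ∫⁻ b, (if p ∈ E ↔ (p.1, b) ∈ E then 0 else 1) ∂ν ∂(μ.prod ν) := by
  set π := μ.prod ν with hπ
  set X : ℝ × ℝ → ℝ × ℝ → ℝ≥0∞ := fun p q => if p ∈ E ↔ q ∈ E then 0 else 1 with hX
  have hXm : ∀ {α : Type} [MeasurableSpace α] (f g : α → ℝ × ℝ), Measurable f → Measurable g →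
      Measurable fun a => X (f a) (g a) := fun f g hf hg =>
    Measurable.ite ((hf hE).iff (hg hE)) measurable_const measurable_const
  have htri : ∀ p q z, X p q ≤ X p z + X q z := by
    intro p q z
    by_cases h1 : p ∈ E <;> by_cases h2 : q ∈ E <;> by_cases h3 : z ∈ E <;> simp [hX, h1, h2, h3]
  have hinner : ∀ p, ∫⁻ q, X p q ∂π
      = E.indicator (fun _ => π Eᶜ) p + Eᶜ.indicator (fun _ => π E) p := by
    intro p
    by_cases hp : p ∈ E
    · have : ∀ q, X p q = Eᶜ.indicator 1 q := fun q => by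
        by_cases hq : q ∈ E <;> simp [hX, hp, hq]
      simp [this, hp, lintegral_indicator_one hE.compl]
    · have : ∀ q, X p q = E.indicator 1 q := fun q => by
        by_cases hq : q ∈ E <;> simp [hX, hp, hq]
      simp [this, hp, lintegral_indicator_one hE]
  have hleft : 2 * (π E * π Eᶜ) = ∫⁻ p, ∫⁻ q, X p q ∂π ∂π := by
    simp_rw [hinner]
    rw [lintegral_add_left (measurable_const.indicator hE), lintegral_indicator_const hE,
      lintegral_indicator_const hE.compl]
    ring
  have h1 : ∀ p : ℝ × ℝ, ∫⁻ q, X p (q.1, p.2) ∂π = ν univ * ∫⁻ a, X p (a, p.2) ∂μ := by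
    intro p
    rw [hπ, lintegral_prod _ (hXm _ _ (by fun_prop) (by fun_prop)).aemeasurable]
    simp only [lintegral_const]
    rw [lintegral_mul_const' _ _ (measure_ne_top _ _), mul_comm]
  have h2 : ∀ q : ℝ × ℝ, ∫⁻ p, X q (q.1, p.2) ∂π = μ univ * ∫⁻ b, X q (q.1, b) ∂ν := by
    intro q
    rw [hπ, lintegral_prod _ (hXm _ _ (by fun_prop) (by fun_prop)).aemeasurable]
    simp only [lintegral_const]
    rw [mul_comm]
  rw [hleft]
  calc ∫⁻ p, ∫⁻ q, X p q ∂π ∂π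
      ≤ ∫⁻ p, ∫⁻ q, (X p (q.1, p.2) + X q (q.1, p.2)) ∂π ∂π :=
        lintegral_mono fun p => lintegral_mono fun q => htri _ _ _
    _ = ∫⁻ p, (∫⁻ q, X p (q.1, p.2) ∂π + ∫⁻ q, X q (q.1, p.2) ∂π) ∂π := by
        refine lintegral_congr fun p => lintegral_add_left (hXm _ _ ?_ ?_) _ <;> fun_prop
    _ = ∫⁻ p, ∫⁻ q, X p (q.1, p.2) ∂π ∂π + ∫⁻ p, ∫⁻ q, X q (q.1, p.2) ∂π ∂π := by
        refine lintegral_add_left (Measurable.lintegral_prod_right' (ν := π)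
          (f := fun z : (ℝ × ℝ) × (ℝ × ℝ) => X z.1 (z.2.1, z.1.2)) (hXm _ _ ?_ ?_)) _ <;> fun_prop
    _ = ∫⁻ p, ∫⁻ q, X p (q.1, p.2) ∂π ∂π + ∫⁻ q, ∫⁻ p, X q (q.1, p.2) ∂π ∂π := by
        congr 1
        refine lintegral_lintegral_swap (hXm (α := (ℝ × ℝ) × (ℝ × ℝ)) _ _ ?_ ?_).aemeasurable <;>
          fun_prop
    _ = _ := by
        simp_rw [h1, h2]
        rw [lintegral_const_mul' _ _ (measure_ne_top _ _),
          lintegral_const_mul' _ _ (measure_ne_top _ _)]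

/-- The half-open square with lower left corner `a` and side `l`. -/
def halfOpenSquare (a : ℝ × ℝ) (l : ℝ) : Set (ℝ × ℝ) := Ico a.1 (a.1 + l) ×ˢ Ico a.2 (a.2 + l)

lemma measurableSet_halfOpenSquare (a : ℝ × ℝ) (l : ℝ) : MeasurableSet (halfOpenSquare a l) :=
  measurableSet_Ico.prod measurableSet_Ico

lemma ordConnected_halfOpenSquare (a : ℝ × ℝ) (l : ℝ) : (halfOpenSquare a l).OrdConnected := by
  refine ⟨fun x hx y hy z hz => ?_⟩
  obtain ⟨⟨h1, h2⟩, h3, h4⟩ := hz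
  obtain ⟨⟨a1, a2⟩, a3, a4⟩ := hx
  obtain ⟨⟨b1, b2⟩, b3, b4⟩ := hy
  exact ⟨⟨a1.trans h1, lt_of_le_of_lt h3 b2⟩, a3.trans h2, lt_of_le_of_lt h4 b4⟩

lemma volume_halfOpenSquare (a : ℝ × ℝ) {l : ℝ} (hl : 0 ≤ l) : volume (halfOpenSquare a l) = ENNReal.ofReal (l ^ 2) := by
  rw [halfOpenSquare, Measure.volume_eq_prod, Measure.prod_prod]
  simp [pow_two, ENNReal.ofReal_mul hl]

open Classical in
lemma lintegral_if_eq_lintegral_crossing {E Q : Set (ℝ × ℝ)} (hE : MeasurableSet E)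
    (hQ : MeasurableSet Q) (e : ℝ × ℝ) :
    ∫⁻ s : ℝ, volume (crossing E Q (s • e))
      = ∫⁻ p in Q, ∫⁻ s : ℝ, (if p + s • e ∈ Q ∧ ¬(p ∈ E ↔ p + s • e ∈ E) then 1 else 0) := by
  have hmeas : MeasurableSet {z : (ℝ × ℝ) × ℝ | z.1 + z.2 • e ∈ Q ∧
      ¬(z.1 ∈ E ↔ z.1 + z.2 • e ∈ E)} := by
    have h : Measurable fun z : (ℝ × ℝ) × ℝ => z.1 + z.2 • e := by fun_prop
    exact (h hQ).inter (((measurable_fst hE).iff (h hE)).compl)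
  rw [lintegral_lintegral_swap
    (Measurable.ite hmeas measurable_const measurable_const).aemeasurable]
  refine lintegral_congr fun s => ?_
  rw [← lintegral_indicator_one (measurableSet_crossing hE hQ _), ← lintegral_indicator hQ]
  refine lintegral_congr fun p => ?_
  by_cases h1 : p ∈ Q <;> by_cases h2 : p + s • e ∈ Q ∧ ¬(p ∈ E ↔ p + s • e ∈ E) <;>
    simp [indicator, crossing, h1, h2]

/-- Relative isoperimetric inequality in a square: if the density `d` of `E` in a square of side `l`
lies between `1 / 5` and `4 / 5`, then the perimeter inside the square is at least
`2 * d * (1 - d) * l ≥ 8 / 25 * l`. -/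
lemma side_le_dirPerimeter {E : Set (ℝ × ℝ)} (hE : MeasurableSet E) (hfin : volume E ≠ ∞)
    (a : ℝ × ℝ) {l : ℝ} (hl : 0 < l)
    (h1 : ENNReal.ofReal (l ^ 2 / 5) ≤ volume (E ∩ halfOpenSquare a l))
    (h2 : volume (E ∩ halfOpenSquare a l) ≤ ENNReal.ofReal (4 * l ^ 2 / 5)) :
    ENNReal.ofReal (8 / 25 * l)
      ≤ dirPerimeter E (halfOpenSquare a l) (1, 0) + dirPerimeter E (halfOpenSquare a l) (0, 1) := by
  classical
  set Q := halfOpenSquare a l with hQdef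
  have hQm : MeasurableSet Q := measurableSet_halfOpenSquare a l
  have hQo : Q.OrdConnected := ordConnected_halfOpenSquare a l
  set I := Ico a.1 (a.1 + l)
  set J := Ico a.2 (a.2 + l)
  have hIm : MeasurableSet I := measurableSet_Ico
  have hJm : MeasurableSet J := measurableSet_Ico
  have hvI : volume I = ENNReal.ofReal l := by simp [I]
  have hvJ : volume J = ENNReal.ofReal l := by simp [J]
  have hrestr : (volume.restrict I).prod (volume.restrict J)
      = (volume : Measure (ℝ × ℝ)).restrict Q := by
    rw [Measure.prod_restrict]; rfl
  have key := two_mul_measure_mul_measure_compl_le hE (volume.restrict I) (volume.restrict J)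
  rw [hrestr, Measure.restrict_apply hE, Measure.restrict_apply hE.compl,
    Measure.restrict_apply_univ, Measure.restrict_apply_univ, hvI, hvJ] at key
  have hX : ∫⁻ p in Q, ∫⁻ b in I, (if p ∈ E ↔ (b, p.2) ∈ E then 0 else 1)
      = ∫⁻ s : ℝ, volume (crossing E Q (s • ((1 : ℝ), (0 : ℝ)))) := by
    rw [lintegral_if_eq_lintegral_crossing hE hQm]
    refine setLIntegral_congr_fun hQm fun p hp => ?_
    rw [← lintegral_indicator hIm, ← lintegral_add_left_eq_self _ p.1]
    refine lintegral_congr fun s => ?_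
    have e1 : p + s • ((1 : ℝ), (0 : ℝ)) = (p.1 + s, p.2) := by ext <;> simp
    have e2 : (p.1 + s, p.2) ∈ Q ↔ p.1 + s ∈ I :=
      ⟨fun h => h.1, fun h => ⟨h, hp.2⟩⟩
    rw [e1, e2]
    by_cases c1 : p.1 + s ∈ I <;> by_cases c2 : (p ∈ E ↔ (p.1 + s, p.2) ∈ E) <;>
      simp [indicator, c1, c2]
  have hY : ∫⁻ p in Q, ∫⁻ b in J, (if p ∈ E ↔ (p.1, b) ∈ E then 0 else 1)
      = ∫⁻ s : ℝ, volume (crossing E Q (s • ((0 : ℝ), (1 : ℝ)))) := by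
    rw [lintegral_if_eq_lintegral_crossing hE hQm]
    refine setLIntegral_congr_fun hQm fun p hp => ?_
    rw [← lintegral_indicator hJm, ← lintegral_add_left_eq_self _ p.2]
    refine lintegral_congr fun s => ?_
    have e1 : p + s • ((0 : ℝ), (1 : ℝ)) = (p.1, p.2 + s) := by ext <;> simp
    have e2 : (p.1, p.2 + s) ∈ Q ↔ p.2 + s ∈ J :=
      ⟨fun h => h.2, fun h => ⟨hp.1, h⟩⟩
    rw [e1, e2]
    by_cases c1 : p.2 + s ∈ J <;> by_cases c2 : (p ∈ E ↔ (p.1, p.2 + s) ∈ E) <;>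
      simp [indicator, c1, c2]
  rw [hX, hY] at key
  have hP1 := lintegral_crossing_le (e := (1, 0)) hQo hE hfin (by simp [Prod.le_def]) hl.le
    (by
      rintro p s ⟨⟨x1, x2⟩, -⟩ ⟨⟨y1, y2⟩, -⟩
      simp at y1 y2
      rw [abs_le]; constructor <;> linarith)
  have hP2 := lintegral_crossing_le (e := (0, 1)) hQo hE hfin (by simp [Prod.le_def]) hl.le
    (by
      rintro p s ⟨-, ⟨x1, x2⟩⟩ ⟨-, ⟨y1, y2⟩⟩
      simp at y1 y2
      rw [abs_le]; constructor <;> linarith)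
  set P1 := dirPerimeter E Q (1, 0)
  set P2 := dirPerimeter E Q (0, 1)
  have key2 : 2 * (volume (E ∩ Q) * volume (Eᶜ ∩ Q)) ≤ ENNReal.ofReal (l ^ 3) * (P1 + P2) := by
    refine key.trans ?_
    rw [mul_add]
    have : ENNReal.ofReal (l ^ 3) = ENNReal.ofReal l * ENNReal.ofReal (l ^ 2) := by
      rw [← ENNReal.ofReal_mul hl.le]; ring_nf
    rw [this, mul_assoc, mul_assoc]
    gcongr
  rcases eq_or_ne (P1 + P2) ∞ with htop | htop
  · rw [htop]; exact le_top
  have hmE : volume (E ∩ Q) ≠ ∞ := measure_ne_top_of_subset inter_subset_left hfin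
  have hsum : volume (E ∩ Q) + volume (Eᶜ ∩ Q) = ENNReal.ofReal (l ^ 2) := by
    rw [← volume_halfOpenSquare a hl.le, ← hQdef, inter_comm E, inter_comm Eᶜ, ← Set.sdiff_eq]
    exact measure_inter_add_sdiff Q hE
  have hmE' : volume (Eᶜ ∩ Q) ≠ ∞ := fun h => by simp [h] at hsum
  lift volume (E ∩ Q) to ℝ≥0 using hmE with m hm
  lift volume (Eᶜ ∩ Q) to ℝ≥0 using hmE' with m' hm'
  lift P1 + P2 to ℝ≥0 using htop with P hP
  rw [ENNReal.ofReal_le_iff_le_toReal (by simp), ENNReal.coe_toReal] at h1 ⊢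
  rw [ENNReal.le_ofReal_iff_toReal_le (by simp) (by positivity), ENNReal.coe_toReal] at h2
  have hsum' : (m : ℝ) + m' = l ^ 2 := by
    have := congrArg ENNReal.toReal hsum
    rwa [ENNReal.toReal_add (by simp) (by simp), ENNReal.toReal_ofReal (by positivity)] at this
  have key3 : 2 * ((m : ℝ) * m') ≤ l ^ 3 * P := by
    have := ENNReal.toReal_mono (ENNReal.mul_ne_top (by simp) (by simp)) key2
    simpa [ENNReal.toReal_mul, ENNReal.toReal_ofReal (pow_nonneg hl.le 3)] using this
  have h4 : 8 / 25 * l ^ 4 ≤ l ^ 3 * P := by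
    refine le_trans ?_ key3
    have hm'' : (m' : ℝ) = l ^ 2 - m := by linarith
    rw [hm'']
    nlinarith [mul_nonneg (sub_nonneg.2 h1) (sub_nonneg.2 h2)]
  have : l ^ 3 * (8 / 25 * l) ≤ l ^ 3 * P := by linarith
  exact le_of_mul_le_mul_left this (by positivity)

/-! ### Boxing inequality and the choice of a level -/

/-- The index of the square of side `L / 2 ^ k` of the dyadic grid which contains `x`. -/
def gridIndex (L : ℝ) (k : ℕ) (x : ℝ × ℝ) : ℤ × ℤ :=
  (⌊x.1 / (L / 2 ^ k)⌋, ⌊x.2 / (L / 2 ^ k)⌋)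

/-- The square of side `L / 2 ^ k` with index `n` in the dyadic grid. -/
def gridSquare (L : ℝ) (k : ℕ) (n : ℤ × ℤ) : Set (ℝ × ℝ) :=
  halfOpenSquare (n.1 * (L / 2 ^ k), n.2 * (L / 2 ^ k)) (L / 2 ^ k)

lemma mem_gridSquare {L : ℝ} (hL : 0 < L) {k : ℕ} {n : ℤ × ℤ} {x : ℝ × ℝ} :
    x ∈ gridSquare L k n ↔ gridIndex L k x = n := by
  have hd : 0 < L / 2 ^ k := by positivity
  have h : ∀ (y : ℝ) (m : ℤ), y ∈ Ico (m * (L / 2 ^ k)) (m * (L / 2 ^ k) + L / 2 ^ k)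
      ↔ ⌊y / (L / 2 ^ k)⌋ = m := by
    intro y m
    rw [Int.floor_eq_iff, le_div_iff₀ hd, div_lt_iff₀ hd, mem_Ico, add_mul, one_mul]
  rw [gridSquare, halfOpenSquare, mem_prod, h, h, gridIndex, Prod.ext_iff]

lemma gridIndex_succ {L : ℝ} {k : ℕ} {x y : ℝ × ℝ}
    (h : gridIndex L (k + 1) x = gridIndex L (k + 1) y) : gridIndex L k x = gridIndex L k y := by
  have hf : ∀ z : ℝ, ⌊z / (L / 2 ^ k)⌋ = ⌊z / (L / 2 ^ (k + 1))⌋ / 2 := by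
    intro z
    have : z / (L / 2 ^ (k + 1)) = z / (L / 2 ^ k) * ((2 : ℤ) : ℝ) := by
      rw [pow_succ, div_div_eq_mul_div, div_div_eq_mul_div]; push_cast; ring
    rw [this, Int.mul_cast_floor_div_cancel_of_pos (by norm_num)]
  simp only [gridIndex, Prod.mk.injEq] at h ⊢
  rw [hf, hf x.2, hf y.1, hf y.2, h.1, h.2]
  exact ⟨rfl, rfl⟩

lemma gridIndex_of_le {L : ℝ} {j k : ℕ} (hjk : j ≤ k) {x y : ℝ × ℝ}
    (h : gridIndex L k x = gridIndex L k y) : gridIndex L j x = gridIndex L j y := by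
  induction k, hjk using Nat.le_induction with
  | base => exact h
  | succ k _ ih => exact ih (gridIndex_succ h)

/-- Boxing inequality: countably many squares, whose sides are controlled by the perimeter of `E`,
cover every open set that is contained in `E` up to a null set. Squares of side `0` are empty and
only fill up the enumeration. -/
lemma exists_squares {E : Set (ℝ × ℝ)} (hE : MeasurableSet E) (hfin : volume E ≠ ∞) :
    ∃ (a : ℕ → ℝ × ℝ) (l : ℕ → ℝ), (∀ n, 0 ≤ l n) ∧
      (∀ U : Set (ℝ × ℝ), IsOpen U → volume (U \ E) = 0 → U ⊆ ⋃ n, halfOpenSquare (a n) (l n)) ∧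
      ∑' n, ENNReal.ofReal (8 / 25 * l n)
        ≤ dirPerimeter E univ (1, 0) + dirPerimeter E univ (0, 1) := by
  classical
  -- at side `L` no square of the grid has density `1 / 5`
  obtain ⟨L, hL, hLE⟩ : ∃ L : ℝ, 0 < L ∧ volume E < ENNReal.ofReal (L ^ 2 / 5) := by
    refine ⟨5 * ((volume E).toReal + 1), by positivity, ?_⟩
    have h0 : 0 ≤ (volume E).toReal := ENNReal.toReal_nonneg
    rw [ENNReal.lt_ofReal_iff_toReal_lt hfin]
    nlinarith
  let dense : ℕ → ℤ × ℤ → Prop := fun k n =>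
    ENNReal.ofReal ((L / 2 ^ k) ^ 2 / 5) ≤ volume (E ∩ gridSquare L k n)
  -- the maximal dyadic squares in which `E` has density at least `1 / 5`; the squares `j < q.1`
  -- around any point `x` of the square `q` are its dyadic ancestors
  let S : Set (ℕ × (ℤ × ℤ)) := {q | dense q.1 q.2 ∧
    ∃ x, gridIndex L q.1 x = q.2 ∧ ∀ j < q.1, ¬ dense j (gridIndex L j x)}
  let Q : ℕ × (ℤ × ℤ) → Set (ℝ × ℝ) := fun q => gridSquare L q.1 q.2
  have hdisj : Pairwise (Function.onFun Disjoint fun q : S => Q q) := by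
    have aux : ∀ q ∈ S, ∀ q' ∈ S, q.1 ≤ q'.1 → ∀ z, z ∈ Q q → z ∈ Q q' → q = q' := by
      rintro ⟨k, n⟩ ⟨h1, x, hx, h2⟩ ⟨k', n'⟩ ⟨h1', x', hx', h2'⟩ hle z hz hz'
      simp only [Q, mem_gridSquare hL] at *
      have hk : gridIndex L k x' = n := by
        rw [← hz]; exact gridIndex_of_le hle (hx'.trans hz'.symm)
      rcases hle.lt_or_eq with hlt | rfl
      · exact absurd h1 (by rw [← hk]; exact h2' k hlt)
      · rw [← hz, ← hz']
    rintro ⟨q, hq⟩ ⟨q', hq'⟩ hne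
    refine Set.disjoint_left.2 fun z hz hz' => hne ?_
    rcases le_total q.1 q'.1 with h | h
    · exact Subtype.ext (aux q hq q' hq' h z hz hz')
    · exact Subtype.ext (aux q' hq' q hq h z hz' hz).symm
  have hside : ∀ q ∈ S, ENNReal.ofReal (8 / 25 * (L / 2 ^ q.1))
      ≤ dirPerimeter E (Q q) (1, 0) + dirPerimeter E (Q q) (0, 1) := by
    rintro ⟨k, n⟩ ⟨h1, x, hx, h2⟩
    simp only at hx h2
    refine side_le_dirPerimeter hE hfin _ (by positivity) h1 ?_
    cases k with
    | zero =>
      refine absurd h1 (not_le.2 ?_)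
      refine (measure_mono inter_subset_left).trans_lt ?_
      simpa using hLE
    | succ j =>
      -- the parent square has four times the area and density below `1 / 5`
      have h3 := (not_le.1 (h2 j (Nat.lt_succ_self j))).le
      have h4 : (L / 2 ^ j) ^ 2 / 5 = 4 * (L / 2 ^ (j + 1)) ^ 2 / 5 := by
        rw [pow_succ]; field_simp; ring
      rw [h4] at h3
      refine (measure_mono (inter_subset_inter_right E ?_)).trans h3
      intro z hz
      have hz' := (mem_gridSquare hL).1 hz
      rw [mem_gridSquare hL]
      exact gridIndex_of_le (Nat.le_succ j) (hz'.trans hx.symm)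
  let f : ℕ ≃ ℕ × (ℤ × ℤ) := (Denumerable.eqv (ℕ × (ℤ × ℤ))).symm
  refine ⟨fun m => ((f m).2.1 * (L / 2 ^ (f m).1), (f m).2.2 * (L / 2 ^ (f m).1)),
    fun m => if f m ∈ S then L / 2 ^ (f m).1 else 0, fun m => ?_, ?_, ?_⟩
  · dsimp only; split_ifs <;> positivity
  · intro U hU hUE x hx
    have hex : ∃ k, dense k (gridIndex L k x) := by
      obtain ⟨ε, hε, hball⟩ := Metric.isOpen_iff.1 hU x hx
      have ht : Tendsto (fun k : ℕ => L * (2⁻¹ : ℝ) ^ k) atTop (𝓝 0) := by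
        simpa using (tendsto_pow_atTop_nhds_zero_of_lt_one (r := (2⁻¹ : ℝ))
          (by norm_num) (by norm_num)).const_mul L
      obtain ⟨k, hk⟩ := (ht.eventually (gt_mem_nhds hε)).exists
      have hk' : L / 2 ^ k < ε := by rwa [inv_pow] at hk
      have hd : 0 < L / 2 ^ k := by positivity
      refine ⟨k, ?_⟩
      have hsub : gridSquare L k (gridIndex L k x) ⊆ U := by
        refine Subset.trans ?_ hball
        have hx' : x ∈ gridSquare L k (gridIndex L k x) := (mem_gridSquare hL).2 rfl
        rintro y ⟨⟨y1, y2⟩, y3, y4⟩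
        obtain ⟨⟨x1, x2⟩, x3, x4⟩ := hx'
        rw [Metric.mem_ball, Prod.dist_eq, Real.dist_eq, Real.dist_eq]
        refine max_lt ?_ ?_ <;> rw [abs_lt] <;> constructor <;> linarith
      have hfull : volume (E ∩ gridSquare L k (gridIndex L k x))
          = volume (gridSquare L k (gridIndex L k x)) := by
        have h0 : volume (gridSquare L k (gridIndex L k x) \ E) = 0 :=
          measure_mono_null (sdiff_subset_sdiff_left hsub) hUE
        rw [← measure_inter_add_sdiff (gridSquare L k (gridIndex L k x)) hE, h0, add_zero,
          inter_comm]
      change ENNReal.ofReal _ ≤ _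
      rw [hfull, gridSquare, volume_halfOpenSquare _ hd.le]
      exact ENNReal.ofReal_le_ofReal (by nlinarith [sq_nonneg (L / 2 ^ k)])
    set k := Nat.find hex with hk
    have hS : (k, gridIndex L k x) ∈ S :=
      ⟨Nat.find_spec hex, x, rfl, fun j hj => Nat.find_min hex hj⟩
    refine mem_iUnion.2 ⟨f.symm (k, gridIndex L k x), ?_⟩
    simp only [Equiv.apply_symm_apply, hS, if_true]
    exact (mem_gridSquare hL).2 rfl
  · calc ∑' m, ENNReal.ofReal (8 / 25 * if f m ∈ S then L / 2 ^ (f m).1 else 0)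
        = ∑' q, ENNReal.ofReal (8 / 25 * if q ∈ S then L / 2 ^ q.1 else 0) :=
          f.tsum_eq fun q => ENNReal.ofReal (8 / 25 * if q ∈ S then L / 2 ^ q.1 else 0)
      _ = ∑' q, S.indicator (fun q => ENNReal.ofReal (8 / 25 * (L / 2 ^ q.1))) q := by
          refine tsum_congr fun q => ?_
          by_cases hq : q ∈ S <;> simp [hq]
      _ = ∑' q : S, ENNReal.ofReal (8 / 25 * (L / 2 ^ q.1.1)) := (tsum_subtype S _).symm
      _ ≤ ∑' q : S, (dirPerimeter E (Q q) (1, 0) + dirPerimeter E (Q q) (0, 1)) :=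
          ENNReal.tsum_le_tsum fun q => hside q q.2
      _ = ∑' q : S, dirPerimeter E (Q q) (1, 0) + ∑' q : S, dirPerimeter E (Q q) (0, 1) :=
          ENNReal.tsum_add
      _ ≤ _ := by
          gcongr <;>
          exact tsum_dirPerimeter_le hE _ (fun q => measurableSet_halfOpenSquare _ _)
            (fun q => ordConnected_halfOpenSquare _ _) hdisj (by simp [Prod.le_def])

lemma measurableSet_levelCrossing {w : ℝ × ℝ → ℝ} (hw : Measurable w) (v : ℝ × ℝ) :
    MeasurableSet {z : ℝ × (ℝ × ℝ) | ¬(z.1 < w z.2 ↔ z.1 < w (z.2 + v))} := by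
  refine (MeasurableSet.iff ?_ ?_).compl
  · exact measurableSet_lt measurable_fst (by fun_prop)
  · exact measurableSet_lt measurable_fst (by fun_prop)

lemma crossing_level (w : ℝ × ℝ → ℝ) (v : ℝ × ℝ) (t : ℝ) :
    crossing {p | t < w p} univ v
      = Prod.mk t ⁻¹' {z : ℝ × (ℝ × ℝ) | ¬(z.1 < w z.2 ↔ z.1 < w (z.2 + v))} := by
  ext p; simp [crossing]

/-- Layer-cake formula: the levels `t` separating `w p` from `w (p + v)` form an interval of length
`|w (p + v) - w p|`. -/
lemma lintegral_volume_crossing_level {w : ℝ × ℝ → ℝ} (hw : Measurable w) (v : ℝ × ℝ) :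
    ∫⁻ t : ℝ, volume (crossing {p | t < w p} univ v) = ∫⁻ p, ‖w (p + v) - w p‖ₑ := by
  simp_rw [crossing_level]
  rw [← Measure.prod_apply (measurableSet_levelCrossing hw v),
    Measure.prod_apply_symm (measurableSet_levelCrossing hw v)]
  refine lintegral_congr fun p => ?_
  have : (fun t => (t, p)) ⁻¹' {z : ℝ × (ℝ × ℝ) | ¬(z.1 < w z.2 ↔ z.1 < w (z.2 + v))}
      = Ico (min (w p) (w (p + v))) (max (w p) (w (p + v))) := by
    ext t
    simp only [mem_preimage, mem_ofPred_eq, mem_Ico, min_le_iff, lt_max_iff]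
    rw [← not_lt, ← not_lt]
    tauto
  rw [this, Real.volume_Ico, max_sub_min_eq_abs, Real.enorm_eq_ofReal_abs]

lemma measurable_dirPerimeter_level {w : ℝ × ℝ → ℝ} (hw : Measurable w) (e : ℝ × ℝ) :
    Measurable fun t : ℝ => dirPerimeter {p | t < w p} univ e := by
  refine Measurable.iSup fun k => Measurable.const_mul ?_ _
  simp_rw [crossing_level]
  exact measurable_measure_prodMk_left (measurableSet_levelCrossing hw _)

/-- One inequality of the coarea formula, with the `L¹` norm of the directional derivative replaced
by a bound `C` on the `L¹` difference quotients. -/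
lemma lintegral_dirPerimeter_level_le {w : ℝ × ℝ → ℝ} (hw : Measurable w) {e : ℝ × ℝ} (he : 0 ≤ e)
    {C : ℝ≥0∞}
    (hC : ∀ h : ℝ, 0 ≤ h → ∫⁻ p, ‖w (p + h • e) - w p‖ₑ ≤ ENNReal.ofReal h * C) :
    ∫⁻ t : ℝ, dirPerimeter {p | t < w p} univ e ≤ C := by
  simp only [dirPerimeter]
  have hm : ∀ k : ℕ, Measurable fun t : ℝ =>
      volume (crossing {p | t < w p} univ ((2⁻¹ : ℝ) ^ k • e)) := fun k => by
    simp_rw [crossing_level]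
    exact measurable_measure_prodMk_left (measurableSet_levelCrossing hw _)
  rw [lintegral_iSup (fun k => (hm k).const_mul _)
    (fun i j hij t => monotone_crossing ordConnected_univ he hij)]
  refine iSup_le fun k => ?_
  rw [lintegral_const_mul _ (hm k), lintegral_volume_crossing_level hw]
  refine (mul_le_mul_right (hC _ (by positivity)) _).trans (le_of_eq ?_)
  have : (2 : ℝ≥0∞) ^ k = ENNReal.ofReal (2 ^ k) := by
    rw [ENNReal.ofReal_pow (by norm_num)]; simp
  rw [this, ← mul_assoc, ← ENNReal.ofReal_mul (by positivity), ← mul_pow]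
  norm_num

/-- The levels in `(0, 1)` are averaged over, an interval of length one. -/
lemma exists_good_level {w : ℝ × ℝ → ℝ} (hw : Measurable w) {C₁ C₂ : ℝ≥0∞}
    (h₁ : ∀ h : ℝ, 0 ≤ h →
      ∫⁻ p, ‖w (p + h • ((1 : ℝ), (0 : ℝ))) - w p‖ₑ ≤ ENNReal.ofReal h * C₁)
    (h₂ : ∀ h : ℝ, 0 ≤ h →
      ∫⁻ p, ‖w (p + h • ((0 : ℝ), (1 : ℝ))) - w p‖ₑ ≤ ENNReal.ofReal h * C₂) :
    ∃ t ∈ Ioo (0 : ℝ) 1,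
      dirPerimeter {p | t < w p} univ (1, 0) + dirPerimeter {p | t < w p} univ (0, 1)
        ≤ C₁ + C₂ := by
  obtain ⟨t, ht, hle⟩ := exists_le_setLAverage (μ := volume) (s := Ioo (0 : ℝ) 1)
    (f := fun t => dirPerimeter {p | t < w p} univ (1, 0) + dirPerimeter {p | t < w p} univ (0, 1))
    (by simp) (by simp)
    ((measurable_dirPerimeter_level hw _).add (measurable_dirPerimeter_level hw _)).aemeasurable
  refine ⟨t, ht, hle.trans ?_⟩
  rw [setLAverage_eq]
  simp only [Real.volume_Ioo, sub_zero, ENNReal.ofReal_one, div_one]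
  refine (setLIntegral_le_lintegral _ _).trans ?_
  rw [lintegral_add_left (measurable_dirPerimeter_level hw _)]
  exact add_le_add (lintegral_dirPerimeter_level_le hw (by simp [Prod.le_def]) h₁)
    (lintegral_dirPerimeter_level_le hw (by simp [Prod.le_def]) h₂)

/-! ### Back to the Euclidean plane -/

/-- The measurable identification of the Euclidean plane with `ℝ × ℝ`. -/
def planeEquiv : E2 ≃ᵐ ℝ × ℝ :=
  (MeasurableEquiv.toLp 2 (Fin 2 → ℝ)).symm.trans MeasurableEquiv.finTwoArrow

lemma planeEquiv_apply (x : E2) : planeEquiv x = (x 0, x 1) := rfl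

lemma measurePreserving_planeEquiv : MeasurePreserving planeEquiv volume volume :=
  (volume_preserving_finTwoArrow ℝ).comp (PiLp.volume_preserving_ofLp (Fin 2))

lemma continuous_planeEquiv_symm : Continuous planeEquiv.symm := by
  have : ∀ p : ℝ × ℝ, planeEquiv.symm p = WithLp.toLp 2 ![p.1, p.2] := fun p => by
    rw [MeasurableEquiv.symm_apply_eq, planeEquiv_apply]; simp
  rw [show (planeEquiv.symm : ℝ × ℝ → E2) = _ from funext this]
  fun_prop

lemma ediam_preimage_halfOpenSquare_le (a : ℝ × ℝ) {l : ℝ} (hl : 0 ≤ l) :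
    Metric.ediam (planeEquiv ⁻¹' halfOpenSquare a l) ≤ ENNReal.ofReal (√2) * ENNReal.ofReal l := by
  rw [← ENNReal.ofReal_mul (by positivity)]
  refine Metric.ediam_le fun x hx y hy => ?_
  rw [edist_dist]
  refine ENNReal.ofReal_le_ofReal ?_
  rw [mem_preimage, planeEquiv_apply] at hx hy
  obtain ⟨⟨x1, x2⟩, x3, x4⟩ := hx
  obtain ⟨⟨y1, y2⟩, y3, y4⟩ := hy
  rw [EuclideanSpace.dist_eq, Fin.sum_univ_two, Real.sqrt_le_iff]
  refine ⟨by positivity, ?_⟩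
  rw [mul_pow, Real.sq_sqrt (by norm_num), Real.dist_eq, Real.dist_eq, sq_abs, sq_abs]
  simp only at x1 x2 x3 x4 y1 y2 y3 y4
  have h1 : (x 0 - y 0) ^ 2 ≤ l ^ 2 := sq_le_sq' (by linarith) (by linarith)
  have h2 : (x 1 - y 1) ^ 2 ≤ l ^ 2 := sq_le_sq' (by linarith) (by linarith)
  linarith

lemma enorm_add_enorm_le (v : E2) :
    ‖v 0‖ₑ + ‖v 1‖ₑ ≤ ENNReal.ofReal (√2) * ‖v‖ₑ := by
  rw [← ofReal_norm, ← ofReal_norm, ← ofReal_norm, ← ENNReal.ofReal_mul (by positivity),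
    ← ENNReal.ofReal_add (by positivity) (by positivity)]
  refine ENNReal.ofReal_le_ofReal ?_
  rw [EuclideanSpace.norm_eq, ← Real.sqrt_mul (by norm_num), Fin.sum_univ_two]
  refine Real.le_sqrt_of_sq_le ?_
  nlinarith [sq_nonneg (‖v 0‖ - ‖v 1‖)]

/-- The translation estimate is transferred to `ℝ × ℝ` and to an almost everywhere equal
representative. -/
lemma lintegral_planeEquiv_translate_le {u u' : E2 → ℝ} (huu' : u =ᵐ[volume] u')
    {e : E2} {C : ℝ≥0∞} {h : ℝ} (hu : ∫⁻ x, ‖u (x + h • e) - u x‖ₑ ≤ ENNReal.ofReal h * C)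
    {e' : ℝ × ℝ} (he : planeEquiv e = e') :
    ∫⁻ p, ‖u' (planeEquiv.symm (p + h • e')) - u' (planeEquiv.symm p)‖ₑ
      ≤ ENNReal.ofReal h * C := by
  rw [← measurePreserving_planeEquiv.lintegral_comp_emb planeEquiv.measurableEmbedding]
  refine le_of_eq_of_le (lintegral_congr_ae ?_) hu
  have h2 := (measurePreserving_add_right volume (h • e)).quasiMeasurePreserving.ae huu'
  filter_upwards [huu', h2] with x hx hx2
  have : planeEquiv.symm (planeEquiv x + h • e') = x + h • e := by
    rw [MeasurableEquiv.symm_apply_eq, ← he]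
    simp [planeEquiv_apply]
  rw [this, MeasurableEquiv.symm_apply_apply, hx, hx2]

/-- The estimate for a single competitor, by the gradient term of its norm alone. -/
lemma hausdorffContent1_le_of_isW11 {A U : Set E2} {u : E2 → ℝ} {V : E2 → E2} (hW : IsW11 u V)
    (hU : IsOpen U) (hAU : A ⊆ U) (hu1 : ∀ x ∈ U, 1 ≤ u x) :
    hausdorffContent1 A ≤ 10 * ∫⁻ x, ‖V x‖ₑ := by
  obtain ⟨hu, hV, hibp⟩ := hW
  have hVi : ∀ i, Integrable (fun x => V x i) volume := fun i =>
    (EuclideanSpace.proj (𝕜 := ℝ) i).integrable_comp hV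
  have htrans : ∀ (i : Fin 2) (h : ℝ), 0 ≤ h →
      ∫⁻ x, ‖u (x + h • EuclideanSpace.single i (1 : ℝ)) - u x‖ₑ
        ≤ ENNReal.ofReal h * ∫⁻ x, ‖V x i‖ₑ := fun i h hh =>
    lintegral_enorm_translate_sub_le u (fun x => V x i) _ hu (hVi i)
      (fun φ h1 h2 => hibp φ h1 h2 i) h hh
  -- a measurable representative; only its superlevel sets are used
  set u' : E2 → ℝ := hu.aestronglyMeasurable.mk u
  have huu' : u =ᵐ[volume] u' := hu.aestronglyMeasurable.ae_eq_mk
  have hu'm : Measurable u' := hu.aestronglyMeasurable.stronglyMeasurable_mk.measurable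
  set w : ℝ × ℝ → ℝ := fun p => u' (planeEquiv.symm p) with hw
  have hwm : Measurable w := hu'm.comp planeEquiv.symm.measurable
  obtain ⟨t, ⟨ht0, ht1⟩, ht⟩ := exists_good_level hwm
    (fun h hh => lintegral_planeEquiv_translate_le huu' (htrans 0 h hh)
      (by simp [planeEquiv_apply]))
    (fun h hh => lintegral_planeEquiv_translate_le huu' (htrans 1 h hh)
      (by simp [planeEquiv_apply]))
  set E : Set (ℝ × ℝ) := {p | t < w p} with hEdef
  have hEm : MeasurableSet E := measurableSet_lt measurable_const hwm
  have hEfin : volume E ≠ ∞ := by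
    have hwi : Integrable w volume :=
      (measurePreserving_planeEquiv.symm.integrable_comp_emb
        planeEquiv.symm.measurableEmbedding).2 (hu.congr huu')
    exact (hwi.measure_gt_lt_top ht0).ne
  obtain ⟨a, l, hl, hcov, hsum⟩ := exists_squares hEm hEfin
  have hU0 : volume (planeEquiv.symm ⁻¹' U \ E) = 0 := by
    rw [← measurePreserving_planeEquiv.measure_preimage_equiv]
    refine measure_mono_null ?_ (ae_iff.1 huu')
    rintro x ⟨hx1, hx2⟩ hx
    simp only [mem_preimage, MeasurableEquiv.symm_apply_apply] at hx1
    refine hx2 ?_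
    change t < u' (planeEquiv.symm (planeEquiv x))
    rw [MeasurableEquiv.symm_apply_apply, ← hx]
    exact ht1.trans_le (hu1 x hx1)
  have hcov' := hcov _ (hU.preimage continuous_planeEquiv_symm) hU0
  have hA : A ⊆ ⋃ n, planeEquiv ⁻¹' halfOpenSquare (a n) (l n) := by
    intro x hx
    have hmem : planeEquiv x ∈ planeEquiv.symm ⁻¹' U := by
      simpa using hAU hx
    simpa using hcov' hmem
  have hsqrt : ENNReal.ofReal (√2) * ENNReal.ofReal (√2) = 2 := by
    rw [← ENNReal.ofReal_mul (by positivity), Real.mul_self_sqrt (by norm_num)]; simp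
  calc hausdorffContent1 A ≤ ∑' n, Metric.ediam (planeEquiv ⁻¹' halfOpenSquare (a n) (l n)) :=
        iInf₂_le (fun n => planeEquiv ⁻¹' halfOpenSquare (a n) (l n)) hA
    _ ≤ ∑' n, ENNReal.ofReal (√2) * ENNReal.ofReal (25 / 8) * ENNReal.ofReal (8 / 25 * l n) := by
        refine ENNReal.tsum_le_tsum fun n =>
          (ediam_preimage_halfOpenSquare_le _ (hl n)).trans (le_of_eq ?_)
        rw [mul_assoc, ← ENNReal.ofReal_mul (p := 25 / 8) (by norm_num)]
        ring_nf
    _ = ENNReal.ofReal (√2) * ENNReal.ofReal (25 / 8) * ∑' n, ENNReal.ofReal (8 / 25 * l n) :=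
        ENNReal.tsum_mul_left
    _ ≤ ENNReal.ofReal (√2) * ENNReal.ofReal (25 / 8) *
          (ENNReal.ofReal (√2) * ∫⁻ x, ‖V x‖ₑ) := by
        refine mul_le_mul_right (hsum.trans (ht.trans ?_)) _
        rw [← lintegral_add_left' (hVi 0).aestronglyMeasurable.enorm,
          ← lintegral_const_mul' _ _ ENNReal.ofReal_ne_top]
        exact lintegral_mono fun x => enorm_add_enorm_le (V x)
    _ = (ENNReal.ofReal (√2) * ENNReal.ofReal (√2)) * ENNReal.ofReal (25 / 8) *
          ∫⁻ x, ‖V x‖ₑ := by ring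
    _ ≤ 10 * ∫⁻ x, ‖V x‖ₑ := by
        gcongr
        rw [hsqrt, ← ENNReal.ofReal_ofNat 2, ← ENNReal.ofReal_ofNat 10,
          ← ENNReal.ofReal_mul (by norm_num)]
        exact ENNReal.ofReal_le_ofReal (by norm_num)

/-- Lemma 3.3: `H¹_∞(A) ≤ 10 capa₁(A)` for every `A ⊂ ℝ²`. -/
theorem hausdorffContent_le_capa (A : Set (EuclideanSpace ℝ (Fin 2))) :
    hausdorffContent1 A ≤ 10 * capa1 A := by
  rw [capa1]
  simp only [ENNReal.mul_iInf_of_ne (by norm_num : (10 : ℝ≥0∞) ≠ 0) (by norm_num)]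
  refine le_iInf fun u => le_iInf fun V => le_iInf fun hW => le_iInf fun ⟨U, hU, hAU, hu1⟩ => ?_
  exact (hausdorffContent1_le_of_isW11 hW hU hAU hu1).trans (mul_le_mul_right le_add_self _)
end
end
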